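/- arXiv:1902.10000 — 2 statements merged into one kernel-verified Lean document; each statement's English description precedes it below -/
import Mathlib

section
/- Fix β ∈ (1+α, 2). There exist ε_* > 0 and a constant C > 0, independent of ε and of the profiles, such that for every ε ∈ (0, ε_*], every pair of normalised self-similar profiles φ¹_ε, φ²_ε for K_ε and every x > 0 one has |Φ[φ¹_ε](x) − Φ[φ²_ε](x)| ≤ C ε ω_{−α,α−1}(x) e^{−x} ‖φ¹_ε − φ²_ε‖_{X_{−α,β}}. -/
open MeasureTheory Real Set Filter

noncomputable def weight (a b x : ℝ) : ℝ := if x ≤ 1 then x ^ a else x ^ b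

noncomputable def Xnorm (a b : ℝ) (g : ℝ → ℝ) : ℝ :=
  ∫ x in Ioi (0:ℝ), |g x| * weight a b x

def MemX (a b : ℝ) (g : ℝ → ℝ) : Prop :=
  IntegrableOn (fun x => g x * weight a b x) (Ioi 0)

noncomputable def Kern (ε : ℝ) (W : ℝ → ℝ → ℝ) (x y : ℝ) : ℝ := 2 + ε * W x y

def GoodW (α : ℝ) (W : ℝ → ℝ → ℝ) : Prop :=
  ContinuousOn (fun p : ℝ × ℝ => W p.1 p.2) (Ioi 0 ×ˢ Ioi 0) ∧
  (∀ x y : ℝ, 0 < x → 0 < y → W x y = W y x) ∧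
  (∀ l x y : ℝ, 0 < l → 0 < x → 0 < y → W (l * x) (l * y) = W x y) ∧
  (∀ x y : ℝ, 0 < x → 0 < y → 0 ≤ W x y ∧ W x y ≤ (x / y) ^ α + (y / x) ^ α)

def IsProfile (K : ℝ → ℝ → ℝ) (φ : ℝ → ℝ) : Prop :=
  LocallyIntegrableOn φ (Ioi 0) ∧
  (∀ᵐ x ∂(volume.restrict (Ioi (0:ℝ))), 0 ≤ φ x) ∧
  IntegrableOn (fun x => x * φ x) (Ioi 0) ∧
  (∀ᵐ x ∂(volume.restrict (Ioi (0:ℝ))),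
    x ^ 2 * φ x = ∫ y in Ioo 0 x, ∫ z in Ioi (x - y), y * K y z * φ y * φ z)

def IsNormalised (φ : ℝ → ℝ) : Prop := ∫ x in Ioi (0:ℝ), x * φ x = 1

noncomputable def betaW (W : ℝ → ℝ → ℝ) (φ : ℝ → ℝ) (x : ℝ) : ℝ :=
  ∫ z in Ioi (0:ℝ), W x z * φ z

noncomputable def Phi (ε : ℝ) (W : ℝ → ℝ → ℝ) (φ : ℝ → ℝ) (x : ℝ) : ℝ :=
  ε * ∫ y in Ioi x, betaW W φ y / y * exp (-y)

/-!
Integrated against test functions, the profile equation becomes a weak identity for the measure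
`φ(x) dx`. Testing with `x⁻² 1_{x > s}` gives `M ≥ M²` for the mass `M` of `(s, ∞)`, hence total
mass at most `1`. Conversely, the truncated mean `N(x) = ∫ min(x, y) φ(y) dy` satisfies
`N' ≤ (N / x)² + O(ε x^{α-2})` and tends to `1`; comparison with the solution `x / (1 + x)` of
`V' = (V / x)²` shows that the mass exceeds `(1 + α) / 2` for small `ε`. This is exactly what is
needed to absorb the self-interaction term in the identity for a truncated moment of order `-α`,
which is therefore finite. The positive moments are finite by a bootstrap which gains `1 - α` at
each step.

Hence every profile lies in `X_{-α,β}`, and there the estimate is linear in `φ`: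
`W(y, z) ≤ (y^α + y^{-α}) ω_{-α,β}(z)`, so it remains to integrate
`(y^{α-1} + y^{-α-1}) e^{-y}` over `(x, ∞)`.
-/

open scoped ENNReal Topology

/-! ### Powers and lower integrals -/

theorem rpow_le_one_add_rpow {x p q : ℝ} (hx : 0 < x) (hp : 0 ≤ p) (hpq : p ≤ q) :
    x ^ p ≤ 1 + x ^ q := by
  rcases le_total x 1 with h | h
  · linarith [rpow_le_one hx.le h hp, rpow_nonneg hx.le q]
  · linarith [rpow_le_rpow_of_exponent_le h hpq]

theorem lintegral_rpow_Ioo {p a b : ℝ} (hp : p ≠ -1) (ha : 0 < a) (hab : a ≤ b) :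
    ∫⁻ x in Ioo a b, ENNReal.ofReal (x ^ p) =
      ENNReal.ofReal ((b ^ (p + 1) - a ^ (p + 1)) / (p + 1)) := by
  have h0 : (0 : ℝ) ∉ uIcc a b := notMem_uIcc_of_lt ha (ha.trans_le hab)
  rw [← integral_rpow (Or.inr ⟨hp, h0⟩), intervalIntegral.integral_of_le hab,
    restrict_Ioo_eq_restrict_Ioc, ofReal_integral_eq_lintegral_ofReal]
  · exact (intervalIntegrable_iff_integrableOn_Ioc_of_le hab).1
      (intervalIntegral.intervalIntegrable_rpow (Or.inr h0))
  · filter_upwards [ae_restrict_mem measurableSet_Ioc] with x hx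
    exact rpow_nonneg (ha.trans hx.1).le _

theorem ofReal_sq_mul_ofReal_rpow_sub_two {x : ℝ} (hx : 0 < x) (p : ℝ) :
    ENNReal.ofReal (x ^ 2) * ENNReal.ofReal (x ^ (p - 2)) = ENNReal.ofReal (x ^ p) := by
  rw [← ENNReal.ofReal_mul (by positivity), ← rpow_natCast, ← rpow_add hx]
  norm_num

section PositiveMeasure

variable {ν : Measure ℝ}

theorem lintegral_le_of_forall_setLIntegral_Ioi_le (hν : ∀ᵐ x ∂ν, 0 < x) {f : ℝ → ℝ≥0∞}
    (hf : AEMeasurable f ν) {c : ℝ≥0∞} (h : ∀ δ > 0, ∫⁻ x in Ioi δ, f x ∂ν ≤ c) :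
    ∫⁻ x, f x ∂ν ≤ c := by
  have hcover : AECover (ν.restrict (Ioi 0)) (𝓝[>] (0 : ℝ)) Ioi :=
    aecover_Ioi_of_Ioi (tendsto_nhdsWithin_of_tendsto_nhds tendsto_id)
  rw [Measure.restrict_eq_self_of_ae_mem (s := Ioi 0) hν] at hcover
  refine le_of_tendsto (hcover.lintegral_tendsto_of_countably_generated hf) ?_
  filter_upwards [self_mem_nhdsWithin] with δ hδ using h δ hδ

theorem exists_lt_measure_Ioi (hν : ∀ᵐ x ∂ν, 0 < x) {c : ℝ≥0∞} (hc : c < ν univ) :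
    ∃ s, 0 < s ∧ c < ν (Ioi s) := by
  by_contra! h
  refine hc.not_ge ?_
  simpa using lintegral_le_of_forall_setLIntegral_Ioi_le hν (f := fun _ => 1)
    aemeasurable_const fun δ hδ => by simpa using h δ hδ

theorem ae_prod_pos (hν : ∀ᵐ x ∂ν, 0 < x) :
    ∀ᵐ p ∂ν.prod ν, 0 < p.1 ∧ 0 < p.2 :=
  (Measure.quasiMeasurePreserving_fst.ae hν).and (Measure.quasiMeasurePreserving_snd.ae hν)

end PositiveMeasure

/-! ### Weak profiles and their tails -/

/-- The properties of an extended-valued coagulation kernel used in the moment estimates; `k` is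
only constrained on the open positive quadrant. -/
structure KernelBounds (α ε : ℝ) (k : ℝ × ℝ → ℝ≥0∞) : Prop where
  measurable : Measurable k
  symm : ∀ y z, 0 < y → 0 < z → k (y, z) = k (z, y)
  two_le : ∀ y z, 0 < y → 0 < z → 2 ≤ k (y, z)
  le : ∀ y z, 0 < y → 0 < z → k (y, z) ≤ ENNReal.ofReal (2 + ε * ((y / z) ^ α + (z / y) ^ α))

/-- The weak form of the profile equation, for a measure `ν` of unit first moment: integrating
`x² φ(x) = ∫_{y < x < y + z} y k(y, z) φ(y) φ(z) dz dy` against a test function `g` and exchanging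
the order of integration. -/
structure IsWeakProfile (k : ℝ × ℝ → ℝ≥0∞) (ν : Measure ℝ) : Prop where
  ae_pos : ∀ᵐ x ∂ν, 0 < x
  lintegral_id : ∫⁻ x, ENNReal.ofReal x ∂ν = 1
  lintegral_sq_mul : ∀ g : ℝ → ℝ≥0∞, Measurable g →
    ∫⁻ x, ENNReal.ofReal (x ^ 2) * g x ∂ν =
      ∫⁻ p, ENNReal.ofReal p.1 * k p * (∫⁻ x in Ioo p.1 (p.1 + p.2), g x) ∂ν.prod ν

/-- The factor that multiplies `k(y, z)` when the profile equation is tested against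
`x ↦ x⁻² 1_{x > s}`, namely `y ∫_{(y, y + z) ∩ (s, ∞)} x⁻² dx`. -/
noncomputable def tailGain (s : ℝ) (p : ℝ × ℝ) : ℝ :=
  p.1 / max p.1 s - p.1 / max (p.1 + p.2) s

theorem measurable_tailGain (s : ℝ) : Measurable (tailGain s) := by
  unfold tailGain; fun_prop

theorem tailGain_nonneg {s y z : ℝ} (hy : 0 < y) (hz : 0 < z) : 0 ≤ tailGain s (y, z) := by
  have : max y s ≤ max (y + z) s := max_le_max_right _ (by linarith)
  have : 0 < max y s := lt_max_of_lt_left hy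
  exact sub_nonneg.2 (by gcongr)

theorem tailGain_add_tailGain_swap {s y z : ℝ} (hy : s < y) (hz : s < z) (hs : 0 < s) :
    tailGain s (y, z) + tailGain s (z, y) = 1 := by
  simp only [tailGain, max_eq_left hy.le, max_eq_left hz.le,
    max_eq_left (show s ≤ y + z by linarith), max_eq_left (show s ≤ z + y by linarith)]
  have : 0 < y := hs.trans hy
  have : 0 < z := hs.trans hz
  field_simp
  ring

theorem ofReal_mul_lintegral_Ioi_inter_Ioo {s y z : ℝ} (hy : 0 < y) (hz : 0 < z) :
    ENNReal.ofReal y * ∫⁻ x in Ioi s ∩ Ioo y (y + z), ENNReal.ofReal (x ^ (-2 : ℝ)) =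
      ENNReal.ofReal (tailGain s (y, z)) := by
  have hset : Ioi s ∩ Ioo y (y + z) = Ioo (max y s) (max (y + z) s) := by
    ext x
    simp only [mem_inter_iff, mem_Ioi, mem_Ioo, max_lt_iff, lt_max_iff]
    grind
  have hpos : 0 < max y s := lt_max_of_lt_left hy
  have hle : max y s ≤ max (y + z) s := max_le_max_right _ (by linarith)
  rw [hset, lintegral_rpow_Ioo (by norm_num) hpos hle, ← ENNReal.ofReal_mul hy.le]
  norm_num [tailGain, rpow_neg_one]
  congr 1
  ring

namespace IsWeakProfile

variable {α ε : ℝ} {k : ℝ × ℝ → ℝ≥0∞} {ν : Measure ℝ}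

theorem measure_Ioi_ne_top (h : IsWeakProfile k ν) {s : ℝ} (hs : 0 < s) : ν (Ioi s) ≠ ∞ := by
  have hmarkov := meas_ge_le_lintegral_div (μ := ν) (ε := ENNReal.ofReal s)
    ENNReal.measurable_ofReal.aemeasurable (by simpa using hs) ENNReal.ofReal_ne_top
  rw [h.lintegral_id] at hmarkov
  refine ne_top_of_le_ne_top (ENNReal.div_ne_top ENNReal.one_ne_top (by simpa using hs))
    ((measure_mono fun x hx => ?_).trans hmarkov)
  exact ENNReal.ofReal_le_ofReal hx.le

theorem setLIntegral_rpow (h : IsWeakProfile k ν) {A : Set ℝ} (hA : MeasurableSet A) (p : ℝ) :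
    ∫⁻ x in A, ENNReal.ofReal (x ^ p) ∂ν =
      ∫⁻ q, ENNReal.ofReal q.1 * k q *
        (∫⁻ x in A ∩ Ioo q.1 (q.1 + q.2), ENNReal.ofReal (x ^ (p - 2))) ∂ν.prod ν := by
  have htest := h.lintegral_sq_mul (A.indicator fun x => ENNReal.ofReal (x ^ (p - 2)))
    (Measurable.indicator (by fun_prop) hA)
  simp only [lintegral_indicator hA, Measure.restrict_restrict hA] at htest
  rw [← htest, ← lintegral_indicator hA]
  refine lintegral_congr_ae ?_
  filter_upwards [h.ae_pos] with x hx
  by_cases hxA : x ∈ A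
  · simp only [indicator_of_mem hxA, ofReal_sq_mul_ofReal_rpow_sub_two hx]
  · simp only [indicator_of_notMem hxA, mul_zero]

theorem measure_Ioi (h : IsWeakProfile k ν) (s : ℝ) :
    ν (Ioi s) = ∫⁻ p, k p * ENNReal.ofReal (tailGain s p) ∂ν.prod ν := by
  have htest := h.setLIntegral_rpow (measurableSet_Ioi (a := s)) 0
  simp only [rpow_zero, ENNReal.ofReal_one, setLIntegral_one, zero_sub] at htest
  rw [htest]
  refine lintegral_congr_ae ?_
  filter_upwards [ae_prod_pos h.ae_pos] with p hp
  rw [mul_right_comm, ofReal_mul_lintegral_Ioi_inter_Ioo hp.1 hp.2, mul_comm]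

variable [SFinite ν]

theorem two_mul_measure_Ioi (h : IsWeakProfile k ν) (hk : KernelBounds α ε k) (s : ℝ) :
    2 * ν (Ioi s) =
      ∫⁻ p, k p * ENNReal.ofReal (tailGain s p + tailGain s p.swap) ∂ν.prod ν := by
  have hm : Measurable fun p => k p * ENNReal.ofReal (tailGain s p) :=
    hk.measurable.mul (measurable_tailGain s).ennreal_ofReal
  have hswap : ν (Ioi s) = ∫⁻ p, k p.swap * ENNReal.ofReal (tailGain s p.swap) ∂ν.prod ν := by
    rw [h.measure_Ioi s, ← lintegral_prod_swap]
  rw [two_mul, hswap, ← hswap, h.measure_Ioi s]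
  nth_rw 2 [← lintegral_prod_swap]
  rw [← lintegral_add_left hm]
  refine lintegral_congr_ae ?_
  filter_upwards [ae_prod_pos h.ae_pos] with ⟨y, z⟩ ⟨hy, hz⟩
  rw [Prod.swap_prod_mk, hk.symm z y hz hy, ← mul_add,
    ENNReal.ofReal_add (tailGain_nonneg hy hz) (tailGain_nonneg hz hy)]

theorem measure_Ioi_le_one (h : IsWeakProfile k ν) (hk : KernelBounds α ε k) {s : ℝ}
    (hs : 0 < s) : ν (Ioi s) ≤ 1 := by
  have hsq : 2 * (ν (Ioi s) * ν (Ioi s)) ≤ 2 * (ν (Ioi s) * 1) := by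
    rw [mul_one, h.two_mul_measure_Ioi hk s, ← Measure.prod_prod,
      ← setLIntegral_const (μ := ν.prod ν)]
    refine (setLIntegral_mono_ae' (measurableSet_Ioi.prod measurableSet_Ioi)
      (.of_forall ?_)).trans (setLIntegral_le_lintegral _ _)
    rintro ⟨y, z⟩ ⟨hy : s < y, hz : s < z⟩
    rw [Prod.swap_prod_mk, tailGain_add_tailGain_swap hy hz hs, ENNReal.ofReal_one, mul_one]
    exact hk.two_le y z (hs.trans hy) (hs.trans hz)
  rcases eq_or_ne (ν (Ioi s)) 0 with h0 | h0
  · simp [h0]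
  · exact (ENNReal.mul_le_mul_iff_right h0 (h.measure_Ioi_ne_top hs)).1
      ((ENNReal.mul_le_mul_iff_right two_ne_zero ENNReal.ofNat_ne_top).1 hsq)

theorem measure_univ_le_one (h : IsWeakProfile k ν) (hk : KernelBounds α ε k) : ν univ ≤ 1 := by
  by_contra! hlt
  obtain ⟨s, hs, hlt⟩ := exists_lt_measure_Ioi h.ae_pos hlt
  exact hlt.not_ge (h.measure_Ioi_le_one hk hs)

end IsWeakProfile

/-! ### The negative moment -/

theorem ofReal_two_div_mul_ofReal_rpow_neg {p y s : ℝ} (hp : 0 < 1 + p) (hy : 0 < y)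
    (hys : y ≤ s) :
    ENNReal.ofReal (2 / (1 + p)) * ENNReal.ofReal (y ^ (-p)) =
      ENNReal.ofReal y * 2 * (∫⁻ x in Ioo y s, ENNReal.ofReal (x ^ (-p - 2))) +
        ENNReal.ofReal (2 / (1 + p) * s ^ (-p - 1)) * ENNReal.ofReal y := by
  have hs : 0 < s := hy.trans_le hys
  have hmono : s ^ (-p - 1) ≤ y ^ (-p - 1) := rpow_le_rpow_of_nonpos hy hys (by linarith)
  have hsplit : y ^ (-p) = y ^ (-p - 1) * y := by rw [rpow_sub_one hy.ne']; field_simp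
  have hinner : (s ^ (-p - 2 + 1) - y ^ (-p - 2 + 1)) / (-p - 2 + 1) =
      (y ^ (-p - 1) - s ^ (-p - 1)) / (1 + p) := by
    rw [show -p - 2 + 1 = -(1 + p) by ring, div_neg, ← neg_div, neg_sub,
      show -(1 + p) = -p - 1 by ring]
  have : 0 ≤ (y ^ (-p - 1) - s ^ (-p - 1)) / (1 + p) :=
    div_nonneg (sub_nonneg.2 hmono) hp.le
  rw [lintegral_rpow_Ioo (by linarith) hy hys, hinner, ← ENNReal.ofReal_ofNat 2,
    ← ENNReal.ofReal_mul (by positivity), ← ENNReal.ofReal_mul hy.le,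
    ← ENNReal.ofReal_mul (by positivity), ← ENNReal.ofReal_mul (by positivity),
    ← ENNReal.ofReal_add (by positivity) (by positivity), hsplit]
  congr 1
  field_simp
  ring

namespace IsWeakProfile

variable {α ε p : ℝ} {k : ℝ × ℝ → ℝ≥0∞} {ν : Measure ℝ}

theorem setLIntegral_Ioi_rpow_neg_ne_top (h : IsWeakProfile k ν) (hp : 0 ≤ p) {s : ℝ}
    (hs : 0 < s) : ∫⁻ x in Ioi s, ENNReal.ofReal (x ^ (-p)) ∂ν ≠ ∞ := by
  refine ne_top_of_le_ne_top ?_ (setLIntegral_mono_ae' (g := fun _ => ENNReal.ofReal (s ^ (-p)))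
    measurableSet_Ioi (.of_forall fun x hx => ENNReal.ofReal_le_ofReal
      (rpow_le_rpow_of_nonpos hs (le_of_lt hx) (neg_nonpos.2 hp))))
  rw [setLIntegral_const]
  exact ENNReal.mul_ne_top ENNReal.ofReal_ne_top (h.measure_Ioi_ne_top hs)

variable [SFinite ν]

theorem mul_setLIntegral_rpow_neg_le (h : IsWeakProfile k ν) (hk : KernelBounds α ε k)
    (hp : 0 < 1 + p) {δ s : ℝ} (hδ : 0 < δ) (hs : 0 < s) :
    ENNReal.ofReal (2 / (1 + p)) * (∫⁻ x in Ioo δ s, ENNReal.ofReal (x ^ (-p)) ∂ν) * ν (Ioi s) ≤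
      (∫⁻ x in Ioo δ s, ENNReal.ofReal (x ^ (-p)) ∂ν) +
        ENNReal.ofReal (2 / (1 + p) * s ^ (-p - 1)) := by
  set c := ENNReal.ofReal (2 / (1 + p) * s ^ (-p - 1))
  have hm : Measurable fun y : ℝ => ENNReal.ofReal (y ^ (-p)) := by fun_prop
  have hprod (f : ℝ → ℝ≥0∞) (hf : Measurable f) : (∫⁻ y in Ioo δ s, f y ∂ν) * ν (Ioi s) =
      ∫⁻ q in Ioo δ s ×ˢ Ioi s, f q.1 ∂ν.prod ν := by
    rw [← Measure.prod_restrict]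
    simpa using (lintegral_prod_mul (μ := ν.restrict (Ioo δ s)) (ν := ν.restrict (Ioi s))
      hf.aemeasurable (g := fun _ => 1) aemeasurable_const).symm
  have hmain : ∫⁻ q in Ioo δ s ×ˢ Ioi s, ENNReal.ofReal q.1 * k q *
      (∫⁻ x in Ioo δ s ∩ Ioo q.1 (q.1 + q.2), ENNReal.ofReal (x ^ (-p - 2))) ∂ν.prod ν ≤
      ∫⁻ x in Ioo δ s, ENNReal.ofReal (x ^ (-p)) ∂ν := by
    rw [h.setLIntegral_rpow measurableSet_Ioo]
    exact setLIntegral_le_lintegral _ _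
  have hmass : (∫⁻ y in Ioo δ s, c * ENNReal.ofReal y ∂ν) * ν (Ioi s) ≤ c := by
    calc _ ≤ (c * 1) * 1 := by
          rw [lintegral_const_mul _ (by fun_prop)]
          gcongr
          · exact (setLIntegral_le_lintegral _ _).trans h.lintegral_id.le
          · exact h.measure_Ioi_le_one hk hs
      _ = c := by rw [mul_one, mul_one]
  refine le_trans ?_ (add_le_add hmain hmass)
  rw [← lintegral_const_mul _ hm, hprod _ (by fun_prop), hprod _ (by fun_prop),
    ← lintegral_add_right _ (by fun_prop)]
  refine setLIntegral_mono_ae' (measurableSet_Ioo.prod measurableSet_Ioi) (.of_forall ?_)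
  rintro ⟨y, z⟩ ⟨⟨hy, hys⟩, hz : s < z⟩
  have hy0 : 0 < y := hδ.trans hy
  rw [ofReal_two_div_mul_ofReal_rpow_neg hp hy0 hys.le]
  gcongr
  · exact hk.two_le y z hy0 (hs.trans hz)
  · exact fun x hx => ⟨⟨hy.trans hx.1, hx.2⟩, hx.1, by linarith [hx.2]⟩

theorem setLIntegral_Ioo_rpow_neg_le (h : IsWeakProfile k ν) (hk : KernelBounds α ε k)
    (hp : 0 ≤ p) {δ s : ℝ} (hδ : 0 < δ) (hs : 0 < s) (hmass : (1 + p) / 2 < ν.real (Ioi s)) :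
    ∫⁻ x in Ioo δ s, ENNReal.ofReal (x ^ (-p)) ∂ν ≤
      ENNReal.ofReal (2 / (1 + p) * s ^ (-p - 1) / (2 / (1 + p) * ν.real (Ioi s) - 1)) := by
  have hfin : ∫⁻ x in Ioo δ s, ENNReal.ofReal (x ^ (-p)) ∂ν ≠ ∞ :=
    ne_top_of_le_ne_top (h.setLIntegral_Ioi_rpow_neg_ne_top hp hδ)
      (lintegral_mono_set Ioo_subset_Ioi_self)
  have hle := ENNReal.toReal_mono (by finiteness)
    (h.mul_setLIntegral_rpow_neg_le hk (by linarith : 0 < 1 + p) hδ hs)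
  rw [ENNReal.toReal_add hfin ENNReal.ofReal_ne_top, ENNReal.toReal_mul, ENNReal.toReal_mul,
    ENNReal.toReal_ofReal (by positivity), ENNReal.toReal_ofReal (by positivity),
    ← measureReal_def] at hle
  have hgain : 1 < 2 / (1 + p) * ν.real (Ioi s) := by
    rw [div_mul_eq_mul_div, one_lt_div (by linarith)]
    linarith
  rw [← ENNReal.ofReal_toReal hfin]
  refine ENNReal.ofReal_le_ofReal ((le_div_iff₀ (by linarith)).2 ?_)
  linarith

theorem lintegral_rpow_neg_ne_top (h : IsWeakProfile k ν) (hk : KernelBounds α ε k)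
    (hp : 0 ≤ p) (hmass : (1 + p) / 2 < ν.real univ) :
    ∫⁻ x, ENNReal.ofReal (x ^ (-p)) ∂ν ≠ ∞ := by
  have huniv : ν univ ≠ ∞ := ne_top_of_le_ne_top ENNReal.one_ne_top (h.measure_univ_le_one hk)
  obtain ⟨s, hs, hlt⟩ := exists_lt_measure_Ioi h.ae_pos
    ((ENNReal.ofReal_lt_iff_lt_toReal (by positivity) huniv).2 hmass)
  have hlt' : (1 + p) / 2 < ν.real (Ioi s) :=
    (ENNReal.ofReal_lt_iff_lt_toReal (by positivity) (h.measure_Ioi_ne_top hs)).1 hlt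
  have hcover (δ : ℝ) : Ioi δ ⊆ Ioo δ s ∪ Ioi (s / 2) := fun x (hx : δ < x) =>
    (lt_or_ge x s).imp (⟨hx, ·⟩) (half_lt_self hs).trans_le
  have hbound := lintegral_le_of_forall_setLIntegral_Ioi_le h.ae_pos (by fun_prop) fun δ hδ =>
    (lintegral_mono_set (hcover δ)).trans <| (lintegral_union_le _ _ _).trans <|
      add_le_add_left (h.setLIntegral_Ioo_rpow_neg_le hk hp hδ hs hlt') _
  exact ne_top_of_le_ne_top (ENNReal.add_ne_top.2 ⟨ENNReal.ofReal_ne_top,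
    h.setLIntegral_Ioi_rpow_neg_ne_top hp (half_pos hs)⟩) hbound

end IsWeakProfile

/-! ### Positive moments -/

theorem max_rpow_mul_min_mul_le {α ε b γ y z : ℝ} (hα : α ∈ Icc (0 : ℝ) 1) (hε : 0 ≤ ε)
    (hb : 1 ≤ b) (hbγ : b - 1 + α ≤ γ) (hy : 0 < y) (hz : 0 < z) :
    max y z ^ (b - 1) * min y z * (2 + ε * ((y / z) ^ α + (z / y) ^ α)) ≤
      (2 + 2 * ε) * ((1 + y ^ γ) * (1 + z) + (1 + y) * (1 + z ^ γ)) := by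
  wlog hyz : y ≤ z generalizing y z
  · have := this hz hy (le_of_not_ge hyz)
    rw [max_comm, min_comm, add_comm ((y / z) ^ α)]
    linarith
  have hratio : 1 ≤ (z / y) ^ α := one_le_rpow ((one_le_div hy).2 hyz) hα.1
  have hratio' : (y / z) ^ α ≤ 1 := rpow_le_one (by positivity) ((div_le_one hz).2 hyz) hα.1
  have hsplit : z ^ (b - 1) * y * (z / y) ^ α = z ^ (b - 1 + α) * y ^ (1 - α) := by
    rw [div_rpow hz.le hy.le, rpow_add hz, rpow_sub hy, rpow_one]
    field_simp
  have hzγ : z ^ (b - 1 + α) ≤ 1 + z ^ γ := rpow_le_one_add_rpow hz (by linarith [hα.1]) hbγ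
  have hy1 : y ^ (1 - α) ≤ 1 + y := by
    simpa using rpow_le_one_add_rpow (q := 1) hy (by linarith [hα.2] : 0 ≤ 1 - α)
      (by linarith [hα.1])
  rw [max_eq_right hyz, min_eq_left hyz]
  calc z ^ (b - 1) * y * (2 + ε * ((y / z) ^ α + (z / y) ^ α))
      ≤ z ^ (b - 1) * y * ((2 + 2 * ε) * (z / y) ^ α) := by gcongr; nlinarith
    _ = (2 + 2 * ε) * (y ^ (1 - α) * z ^ (b - 1 + α)) := by rw [mul_comm (y ^ _), ← hsplit]; ring
    _ ≤ (2 + 2 * ε) * ((1 + y) * (1 + z ^ γ)) := by gcongr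
    _ ≤ (2 + 2 * ε) * ((1 + y ^ γ) * (1 + z) + (1 + y) * (1 + z ^ γ)) := by
      gcongr; exact le_add_of_nonneg_left (by positivity)

theorem ofReal_mul_lintegral_Ioo_rpow_le_mul_right {b y z : ℝ} (hb : 1 < b) (hy : 0 < y)
    (hz : 0 < z) :
    ENNReal.ofReal y * (∫⁻ x in Ioo y (y + z), ENNReal.ofReal (x ^ (b - 2))) ≤
      ENNReal.ofReal ((y + z) ^ (b - 1) * z) :=
  calc ENNReal.ofReal y * (∫⁻ x in Ioo y (y + z), ENNReal.ofReal (x ^ (b - 2)))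
      = ∫⁻ x in Ioo y (y + z), ENNReal.ofReal (y * x ^ (b - 2)) := by
        simp only [ENNReal.ofReal_mul hy.le]
        rw [lintegral_const_mul _ (by fun_prop)]
    _ ≤ ∫⁻ _ in Ioo y (y + z), ENNReal.ofReal ((y + z) ^ (b - 1)) := by
        refine setLIntegral_mono measurable_const fun x hx => ENNReal.ofReal_le_ofReal ?_
        have hx0 : 0 < x := hy.trans hx.1
        calc y * x ^ (b - 2) ≤ x * x ^ (b - 2) := by gcongr; exact hx.1.le
          _ = x ^ (b - 1) := by rw [← rpow_one_add' hx0.le (by linarith)]; ring_nf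
          _ ≤ (y + z) ^ (b - 1) := by gcongr; exact hx.2.le
    _ = ENNReal.ofReal ((y + z) ^ (b - 1) * z) := by
        rw [setLIntegral_const, Real.volume_Ioo, add_sub_cancel_left,
          ENNReal.ofReal_mul (by positivity)]

theorem ofReal_mul_lintegral_Ioo_rpow_le_mul_left {b y z : ℝ} (hb : 1 < b) (hy : 0 < y)
    (hz : 0 < z) :
    ENNReal.ofReal y * (∫⁻ x in Ioo y (y + z), ENNReal.ofReal (x ^ (b - 2))) ≤
      ENNReal.ofReal (1 / (b - 1) * (y + z) ^ (b - 1) * y) := by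
  have : 0 < b - 1 := sub_pos.2 hb
  rw [lintegral_rpow_Ioo (by linarith) hy (by linarith), ← ENNReal.ofReal_mul hy.le,
    show b - 2 + 1 = b - 1 by ring]
  refine ENNReal.ofReal_le_ofReal ?_
  calc y * (((y + z) ^ (b - 1) - y ^ (b - 1)) / (b - 1))
      ≤ y * ((y + z) ^ (b - 1) / (b - 1)) := by
        gcongr; exact sub_le_self _ (rpow_nonneg hy.le _)
    _ = 1 / (b - 1) * (y + z) ^ (b - 1) * y := by ring

theorem ofReal_mul_lintegral_Ioo_rpow_le {b y z : ℝ} (hb : 1 < b) (hy : 0 < y) (hz : 0 < z) :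
    ENNReal.ofReal y * (∫⁻ x in Ioo y (y + z), ENNReal.ofReal (x ^ (b - 2))) ≤
      ENNReal.ofReal (2 ^ (b - 1) * (1 + 1 / (b - 1)) * (max y z ^ (b - 1) * min y z)) := by
  have hb1 : 0 < b - 1 := sub_pos.2 hb
  have hmax : 0 < max y z := lt_max_of_lt_left hy
  have : 0 < min y z := lt_min hy hz
  have hsum : (y + z) ^ (b - 1) ≤ 2 ^ (b - 1) * max y z ^ (b - 1) := by
    rw [← mul_rpow zero_le_two hmax.le]
    exact rpow_le_rpow (by positivity) (by linarith [le_max_left y z, le_max_right y z]) hb1.le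
  suffices ENNReal.ofReal y * (∫⁻ x in Ioo y (y + z), ENNReal.ofReal (x ^ (b - 2))) ≤
      ENNReal.ofReal ((1 + 1 / (b - 1)) * (y + z) ^ (b - 1) * min y z) from
    this.trans (ENNReal.ofReal_le_ofReal (by
      calc _ ≤ (1 + 1 / (b - 1)) * (2 ^ (b - 1) * max y z ^ (b - 1)) * min y z := by gcongr
        _ = _ := by ring))
  rcases le_total z y with hzy | hyz
  · refine (ofReal_mul_lintegral_Ioo_rpow_le_mul_right hb hy hz).trans
      (ENNReal.ofReal_le_ofReal ?_)
    rw [min_eq_right hzy, mul_assoc]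
    exact le_mul_of_one_le_left (by positivity) (le_add_of_nonneg_right (by positivity))
  · refine (ofReal_mul_lintegral_Ioo_rpow_le_mul_left hb hy hz).trans
      (ENNReal.ofReal_le_ofReal ?_)
    rw [min_eq_left hyz]
    gcongr
    linarith

namespace IsWeakProfile

variable {α ε b γ : ℝ} {k : ℝ × ℝ → ℝ≥0∞} {ν : Measure ℝ} [SFinite ν]

theorem lintegral_one_add_rpow_ne_top (h : IsWeakProfile k ν) (hk : KernelBounds α ε k)
    (hγ : ∫⁻ x, ENNReal.ofReal (x ^ γ) ∂ν ≠ ∞) : ∫⁻ x, ENNReal.ofReal (1 + x ^ γ) ∂ν ≠ ∞ := by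
  refine ne_top_of_le_ne_top ?_ (lintegral_mono fun _ => ENNReal.ofReal_add_le)
  rw [lintegral_add_left measurable_const, ENNReal.ofReal_one, lintegral_one]
  exact ENNReal.add_ne_top.2
    ⟨ne_top_of_le_ne_top ENNReal.one_ne_top (h.measure_univ_le_one hk), hγ⟩

theorem lintegral_rpow_ne_top_of_sub_one_add_le (h : IsWeakProfile k ν) (hk : KernelBounds α ε k)
    (hα : α ∈ Icc (0 : ℝ) 1) (hε : 0 ≤ ε) (hb : 1 < b) (hbγ : b - 1 + α ≤ γ)
    (hγ : ∫⁻ x, ENNReal.ofReal (x ^ γ) ∂ν ≠ ∞) : ∫⁻ x, ENNReal.ofReal (x ^ b) ∂ν ≠ ∞ := by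
  set C := 2 ^ (b - 1) * (1 + 1 / (b - 1)) with hC
  have hC0 : 0 ≤ C := by have := sub_pos.2 hb; positivity
  have hmoment_γ := h.lintegral_one_add_rpow_ne_top hk hγ
  have hmoment_one : ∫⁻ x, ENNReal.ofReal (1 + x) ∂ν ≠ ∞ := by
    simpa using h.lintegral_one_add_rpow_ne_top hk (γ := 1) (by simp [h.lintegral_id])
  have hpoint (y z : ℝ) (hy : 0 < y) (hz : 0 < z) : ENNReal.ofReal y * k (y, z) *
      (∫⁻ x in Ioo y (y + z), ENNReal.ofReal (x ^ (b - 2))) ≤ ENNReal.ofReal (C * (2 + 2 * ε)) *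
        (ENNReal.ofReal (1 + y ^ γ) * ENNReal.ofReal (1 + z) +
          ENNReal.ofReal (1 + y) * ENNReal.ofReal (1 + z ^ γ)) := by
    rw [mul_right_comm]
    refine (mul_le_mul' (ofReal_mul_lintegral_Ioo_rpow_le hb hy hz) (hk.le y z hy hz)).trans ?_
    rw [← ENNReal.ofReal_mul (by positivity), ← ENNReal.ofReal_mul (by positivity),
      ← ENNReal.ofReal_mul (by positivity), ← ENNReal.ofReal_add (by positivity) (by positivity),
      ← ENNReal.ofReal_mul (by positivity), ← hC]
    refine ENNReal.ofReal_le_ofReal ?_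
    linarith [mul_le_mul_of_nonneg_left (max_rpow_mul_min_mul_le hα hε hb.le hbγ hy hz) hC0]
  have htest := h.setLIntegral_rpow MeasurableSet.univ b
  simp only [Measure.restrict_univ, univ_inter] at htest
  rw [htest]
  refine ne_top_of_le_ne_top ?_ (lintegral_mono_ae
    ((ae_prod_pos h.ae_pos).mono fun q hq => hpoint q.1 q.2 hq.1 hq.2))
  rw [lintegral_const_mul _ (by fun_prop), lintegral_add_left (by fun_prop),
    lintegral_prod_mul (f := fun y => ENNReal.ofReal (1 + y ^ γ))
      (g := fun z => ENNReal.ofReal (1 + z)) (by fun_prop) (by fun_prop),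
    lintegral_prod_mul (f := fun y => ENNReal.ofReal (1 + y))
      (g := fun z => ENNReal.ofReal (1 + z ^ γ)) (by fun_prop) (by fun_prop)]
  exact ENNReal.mul_ne_top ENNReal.ofReal_ne_top (ENNReal.add_ne_top.2
    ⟨ENNReal.mul_ne_top hmoment_γ hmoment_one, ENNReal.mul_ne_top hmoment_one hmoment_γ⟩)

theorem lintegral_rpow_ne_top (h : IsWeakProfile k ν) (hk : KernelBounds α ε k)
    (hα : α ∈ Ico (0 : ℝ) 1) (hε : 0 ≤ ε) (hb : 1 ≤ b) :
    ∫⁻ x, ENNReal.ofReal (x ^ b) ∂ν ≠ ∞ := by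
  have hone : ∫⁻ x, ENNReal.ofReal (x ^ (1 : ℝ)) ∂ν ≠ ∞ := by simp [h.lintegral_id]
  have hgap : 0 < 1 - α := sub_pos.2 hα.2
  have hiter (n : ℕ) : ∀ b : ℝ, 1 ≤ b → b ≤ 1 + n * (1 - α) →
      ∫⁻ x, ENNReal.ofReal (x ^ b) ∂ν ≠ ∞ := by
    induction n with
    | zero => exact fun b hb hb' => by rwa [show b = 1 by push_cast at hb'; linarith]
    | succ n ih =>
      intro b hb hb'
      rcases hb.eq_or_lt with rfl | hb
      · exact hone
      push_cast at hb'
      refine h.lintegral_rpow_ne_top_of_sub_one_add_le hk ⟨hα.1, hα.2.le⟩ hε hb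
        (le_max_right 1 (b - 1 + α)) (ih _ (le_max_left _ _) (max_le ?_ (by linarith)))
      exact le_add_of_nonneg_right (by positivity)
  obtain ⟨n, hn⟩ := exists_nat_ge ((b - 1) / (1 - α))
  exact hiter n b hb (by linarith [(div_le_iff₀ hgap).1 hn])

end IsWeakProfile

/-! ### Lower bound for the mass -/

theorem div_one_add_le_of_deriv_le_sq {V V' : ℝ → ℝ} (hpos : ∀ x, 0 < x → 0 < V x)
    (hderiv : ∀ x, 0 < x → HasDerivAt V (V' x) x) (hle : ∀ x, 0 < x → V' x ≤ (V x / x) ^ 2)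
    (hlim : Tendsto V atTop (𝓝 1)) {x : ℝ} (hx : 0 < x) : x / (1 + x) ≤ V x := by
  have hderiv' (t : ℝ) (ht : 0 < t) :
      HasDerivAt (fun t => (V t)⁻¹ - t⁻¹) (-V' t / V t ^ 2 - -(t ^ 2)⁻¹) t :=
    ((hderiv t ht).fun_inv (hpos t ht).ne').fun_sub (hasDerivAt_inv ht.ne')
  have hmono : MonotoneOn (fun t => (V t)⁻¹ - t⁻¹) (Ioi 0) := by
    refine monotoneOn_of_hasDerivWithinAt_nonneg (convex_Ioi 0)
      (fun t ht => (hderiv' t ht).continuousAt.continuousWithinAt)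
      (fun t ht => (hderiv' t (interior_subset ht)).hasDerivWithinAt) fun t ht => ?_
    have ht : 0 < t := interior_subset ht
    have hVt := hpos t ht
    have : V' t / V t ^ 2 ≤ (t ^ 2)⁻¹ := by
      rw [div_le_iff₀ (by positivity), inv_mul_eq_div, ← div_pow]
      exact hle t ht
    rw [neg_div]
    linarith
  have hlim' : Tendsto (fun t => (V t)⁻¹ - t⁻¹) atTop (𝓝 1) := by
    simpa using (hlim.inv₀ one_ne_zero).sub tendsto_inv_atTop_zero
  have hle_one : (V x)⁻¹ - x⁻¹ ≤ 1 := by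
    refine ge_of_tendsto hlim' ?_
    filter_upwards [eventually_ge_atTop x] with t ht
    exact hmono hx (hx.trans_le ht) ht
  calc x / (1 + x) = (1 + x⁻¹)⁻¹ := by field_simp; ring
    _ ≤ V x := inv_le_of_inv_le₀ (hpos x hx) (by linarith)

theorem div_one_add_le_of_deriv_le {N N' : ℝ → ℝ} {c γ : ℝ} (hc : 0 ≤ c) (hγ : 0 < γ)
    (hpos : ∀ x, 0 < x → 0 < N x) (hderiv : ∀ x, 0 < x → HasDerivAt N (N' x) x)
    (hle : ∀ x, 0 < x → N' x ≤ (N x / x) ^ 2 + c * (γ * x ^ (-γ - 1)))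
    (hlim : Tendsto N atTop (𝓝 1)) {x : ℝ} (hx : 0 < x) :
    x / (1 + x) ≤ N x + c * x ^ (-γ) := by
  refine div_one_add_le_of_deriv_le_sq (V := fun x => N x + c * x ^ (-γ))
    (V' := fun x => N' x + c * (-γ * x ^ (-γ - 1))) (fun t ht => ?_) (fun t ht => ?_)
    (fun t ht => ?_) ?_ hx
  · exact add_pos_of_pos_of_nonneg (hpos t ht) (by positivity)
  · exact (hderiv t ht).fun_add ((Real.hasDerivAt_rpow_const (Or.inl ht.ne')).const_mul c)
  · have hsq : (N t / t) ^ 2 ≤ ((N t + c * t ^ (-γ)) / t) ^ 2 := by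
      have := hpos t ht
      gcongr
      exact le_add_of_nonneg_right (by positivity)
    linarith [hle t ht]
  · simpa using hlim.add ((tendsto_rpow_neg_atTop hγ).const_mul c)

/-- The truncated mean `x ↦ ∫ min(x, y) dν(y)`, the primitive of the tail `x ↦ ν(x, ∞)` that
vanishes at `0` when `ν` is carried by the positive half-line. -/
noncomputable def truncatedMean (ν : Measure ℝ) (x : ℝ) : ℝ := ∫ y, min x y ∂ν

section TruncatedMean

variable {ν : Measure ℝ} {x : ℝ}

theorem tendsto_truncatedMean_atTop (hν : Integrable (fun y : ℝ => y) ν) :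
    Tendsto (truncatedMean ν) atTop (𝓝 (∫ y, y ∂ν)) := by
  refine tendsto_integral_filter_of_dominated_convergence (fun y => |y|)
    (.of_forall fun t => by fun_prop) ?_ hν.abs (.of_forall fun y => ?_)
  · filter_upwards [eventually_ge_atTop 0] with t ht
    exact .of_forall fun y => abs_le.2
      ⟨le_min ((neg_nonpos.2 (abs_nonneg y)).trans ht) (neg_abs_le y),
        (min_le_right t y).trans (le_abs_self y)⟩
  · exact tendsto_const_nhds.congr'
      ((eventually_ge_atTop y).mono fun t ht => (min_eq_right ht).symm)

variable [IsFiniteMeasure ν]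

theorem hasDerivAt_truncatedMean (hν : Integrable (fun y : ℝ => y) ν) (hx : ν {x} = 0) :
    HasDerivAt (truncatedMean ν) (ν.real (Ioi x)) x := by
  have hlip (y : ℝ) : LipschitzOnWith (Real.nnabs 1) (fun t => min t y) univ :=
    LipschitzOnWith.of_dist_le_mul fun s _ t _ => by
      simpa [Real.dist_eq] using abs_min_sub_min_le_max s y t y
  have hpoint : ∀ᵐ y ∂ν, HasDerivAt (fun t => min t y) ((Ioi x).indicator 1 y) x := by
    filter_upwards [(measure_eq_zero_iff_ae_notMem.1 hx)] with y hy
    rcases lt_or_gt_of_ne hy with hlt | hlt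
    · rw [indicator_of_notMem (notMem_Ioi.2 hlt.le)]
      exact (hasDerivAt_const x y).congr_of_eventuallyEq
        ((lt_mem_nhds hlt).mono fun t ht => min_eq_right ht.le)
    · rw [indicator_of_mem (mem_Ioi.2 hlt)]
      exact (hasDerivAt_id x).congr_of_eventuallyEq
        ((gt_mem_nhds hlt).mono fun t ht => min_eq_left ht.le)
  have hderiv := (hasDerivAt_integral_of_dominated_loc_of_lip (μ := ν) (bound := fun _ => 1)
    (F := fun t y => min t y) (x₀ := x)
    univ_mem (.of_forall fun t => by fun_prop) ((integrable_const x).inf hν)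
    (measurable_one.indicator measurableSet_Ioi).aestronglyMeasurable (.of_forall hlip)
    (integrable_const 1) hpoint).2
  rwa [integral_indicator_one measurableSet_Ioi] at hderiv

theorem truncatedMean_le (hν : Integrable (fun y : ℝ => y) ν) :
    truncatedMean ν x ≤ x * ν.real univ := by
  simpa [truncatedMean, mul_comm] using integral_mono ((integrable_const x).inf hν)
    (integrable_const x) fun y => min_le_left x y

theorem ofReal_truncatedMean_div (hpos : ∀ᵐ y ∂ν, 0 < y) (hν : Integrable (fun y : ℝ => y) ν)
    (hx : 0 < x) :
    ENNReal.ofReal (truncatedMean ν x / x) = ∫⁻ y, ENNReal.ofReal (min 1 (y / x)) ∂ν := by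
  have hdiv : truncatedMean ν x / x = ∫ y, min 1 (y / x) ∂ν := by
    simp only [truncatedMean, ← integral_div, ← min_div_div_right hx.le, div_self hx.ne']
  rw [hdiv]
  refine ofReal_integral_eq_lintegral_ofReal ((integrable_const 1).inf (hν.div_const x)) ?_
  filter_upwards [hpos] with y hy
  exact le_min zero_le_one (by positivity)

theorem truncatedMean_pos (hpos : ∀ᵐ y ∂ν, 0 < y) (hν : Integrable (fun y : ℝ => y) ν)
    (hne : ν ≠ 0) (hx : 0 < x) : 0 < truncatedMean ν x := by
  have hmin : ∀ᵐ y ∂ν, 0 < min x y := hpos.mono fun y hy => lt_min hx hy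
  refine (integral_pos_iff_support_of_nonneg_ae (hmin.mono fun y hy => hy.le)
    ((integrable_const x).inf hν)).2 ?_
  have hsupp : Function.support (min x) =ᵐ[ν] univ :=
    eventuallyEq_univ.2 (hmin.mono fun y hy => hy.ne')
  rw [measure_congr hsupp]
  exact Measure.measure_univ_pos.2 hne

end TruncatedMean

theorem div_max_eq_min_one_div {y s : ℝ} (hy : 0 < y) (hs : 0 < s) :
    y / max y s = min 1 (y / s) := by
  rcases le_total y s with h | h
  · rw [max_eq_right h, min_eq_right ((div_le_one hs).2 h)]
  · rw [max_eq_left h, min_eq_left ((one_le_div hs).2 h), div_self hy.ne']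

theorem min_one_add_min_one_sub_le {a b : ℝ} (ha : 0 ≤ a) (hb : 0 ≤ b) :
    min 1 a + min 1 b - min 1 (a + b) ≤ min 1 a * min 1 b := by
  rcases le_total 1 a with h1 | h1
  · simp [min_eq_left h1, min_eq_left (by linarith : (1 : ℝ) ≤ a + b)]
  rcases le_total 1 b with h2 | h2
  · simp [min_eq_left h2, min_eq_left (by linarith : (1 : ℝ) ≤ a + b)]
  rw [min_eq_right h1, min_eq_right h2]
  rcases min_choice 1 (a + b) with h3 | h3 <;> rw [h3] <;> nlinarith

theorem tailGain_add_tailGain_swap_le {y z s : ℝ} (hy : 0 < y) (hz : 0 < z) (hs : 0 < s) :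
    tailGain s (y, z) + tailGain s (z, y) ≤ min 1 (y / s) * min 1 (z / s) := by
  calc tailGain s (y, z) + tailGain s (z, y)
      = y / max y s + z / max z s - (y + z) / max (y + z) s := by
        simp only [tailGain, add_comm z y]; ring
    _ = min 1 (y / s) + min 1 (z / s) - min 1 (y / s + z / s) := by
        rw [div_max_eq_min_one_div hy hs, div_max_eq_min_one_div hz hs,
          div_max_eq_min_one_div (add_pos hy hz) hs, add_div]
    _ ≤ _ := min_one_add_min_one_sub_le (by positivity) (by positivity)

theorem rpow_mul_min_one_div_le {α y s : ℝ} (hα : α ∈ Icc (0 : ℝ) 1) (hy : 0 < y) (hs : 0 < s) :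
    y ^ α * min 1 (y / s) ≤ s ^ (α - 1) * y := by
  have hmin : min 1 (y / s) ≤ (y / s) ^ (1 - α) := by
    rcases le_total 1 (y / s) with h | h
    · exact (min_le_left _ _).trans (one_le_rpow h (by linarith [hα.2]))
    · simpa [min_eq_right h] using
        rpow_le_rpow_of_exponent_ge (by positivity) h (by linarith [hα.1] : 1 - α ≤ 1)
  calc y ^ α * min 1 (y / s) ≤ y ^ α * (y / s) ^ (1 - α) := by gcongr
    _ = y ^ α * y ^ (1 - α) * s ^ (α - 1) := by
      rw [div_rpow hy.le hs.le, ← neg_sub α 1, rpow_neg hs.le, div_inv_eq_mul, mul_assoc]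
    _ = s ^ (α - 1) * y := by rw [← rpow_add hy, add_sub_cancel, rpow_one, mul_comm]

theorem rpow_neg_mul_min_one_div_le {α z s : ℝ} (hα : α ∈ Icc (0 : ℝ) 1) (hz : 0 < z)
    (hs : 0 < s) : z ^ (-α) * min 1 (z / s) ≤ s⁻¹ * (1 + z) := by
  have hle : z ^ (1 - α) ≤ 1 + z := by
    simpa using rpow_le_one_add_rpow (q := 1) hz (by linarith [hα.2] : 0 ≤ 1 - α)
      (by linarith [hα.1])
  calc z ^ (-α) * min 1 (z / s) ≤ z ^ (-α) * (z / s) := by gcongr; exact min_le_right _ _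
    _ = s⁻¹ * z ^ (1 - α) := by rw [sub_eq_add_neg, rpow_add hz, rpow_one]; ring
    _ ≤ s⁻¹ * (1 + z) := by gcongr

theorem kernel_mul_tailGain_le {α ε y z s : ℝ} (hα : α ∈ Icc (0 : ℝ) 1) (hε : 0 ≤ ε)
    (hy : 0 < y) (hz : 0 < z) (hs : 0 < s) :
    (2 + ε * ((y / z) ^ α + (z / y) ^ α)) * (tailGain s (y, z) + tailGain s (z, y)) ≤
      2 * (min 1 (y / s) * min 1 (z / s)) + ε * s ^ (α - 2) * (y * (1 + z) + (1 + y) * z) := by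
  have hcross {u v : ℝ} (hu : 0 < u) (hv : 0 < v) :
      (u / v) ^ α * (min 1 (u / s) * min 1 (v / s)) ≤ s ^ (α - 2) * (u * (1 + v)) := by
    have : 0 ≤ min 1 (v / s) := le_min zero_le_one (by positivity)
    calc (u / v) ^ α * (min 1 (u / s) * min 1 (v / s))
        = (u ^ α * min 1 (u / s)) * (v ^ (-α) * min 1 (v / s)) := by
          rw [div_rpow hu.le hv.le, rpow_neg hv.le]; ring
      _ ≤ (s ^ (α - 1) * u) * (s⁻¹ * (1 + v)) :=
          mul_le_mul (rpow_mul_min_one_div_le hα hu hs) (rpow_neg_mul_min_one_div_le hα hv hs)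
            (by positivity) (by positivity)
      _ = s ^ (α - 2) * (u * (1 + v)) := by
          rw [show α - 2 = α - 1 + -1 by ring, rpow_add hs, rpow_neg_one]; ring
  calc (2 + ε * ((y / z) ^ α + (z / y) ^ α)) * (tailGain s (y, z) + tailGain s (z, y))
      ≤ (2 + ε * ((y / z) ^ α + (z / y) ^ α)) * (min 1 (y / s) * min 1 (z / s)) := by
        gcongr; exact tailGain_add_tailGain_swap_le hy hz hs
    _ = 2 * (min 1 (y / s) * min 1 (z / s)) +
          ε * ((y / z) ^ α * (min 1 (y / s) * min 1 (z / s)) +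
            (z / y) ^ α * (min 1 (z / s) * min 1 (y / s))) := by ring
    _ ≤ 2 * (min 1 (y / s) * min 1 (z / s)) +
          ε * (s ^ (α - 2) * (y * (1 + z)) + s ^ (α - 2) * (z * (1 + y))) :=
        add_le_add le_rfl
          (mul_le_mul_of_nonneg_left (add_le_add (hcross hy hz) (hcross hz hy)) hε)
    _ = _ := by ring

/-- A range of couplings `ε` on which the comparison of the truncated mean of a profile with
`x / (1 + x)`, evaluated at the point `(1 - α) / 4`, forces the total mass above `(1 + α) / 2`, the
value required for the moment of order `-α` to be finite. -/
noncomputable def couplingThreshold (α : ℝ) : ℝ := (1 - α) ^ 2 / 16 * ((1 - α) / 4) ^ (2 - α)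

theorem couplingThreshold_pos {α : ℝ} (hα : α < 1) : 0 < couplingThreshold α := by
  have : 0 < 1 - α := sub_pos.2 hα
  unfold couplingThreshold
  positivity

theorem mul_rpow_le_of_le_couplingThreshold {α ε : ℝ} (hα : α < 1)
    (hε : ε ≤ couplingThreshold α) :
    2 * ε / (1 - α) * ((1 - α) / 4) ^ (-(1 - α)) ≤ (1 - α) / 4 * ((1 - α) / 8) := by
  have hgap : 0 < 1 - α := sub_pos.2 hα
  set x := (1 - α) / 4
  have hx0 : 0 < x := by positivity
  have hpow : x ^ (2 - α) * x ^ (-(1 - α)) = x := by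
    rw [← rpow_add hx0, show 2 - α + -(1 - α) = 1 by ring, rpow_one]
  calc 2 * ε / (1 - α) * x ^ (-(1 - α))
      ≤ 2 * ((1 - α) ^ 2 / 16 * x ^ (2 - α)) / (1 - α) * x ^ (-(1 - α)) := by
        gcongr; exact hε
    _ = (1 - α) / 8 * (x ^ (2 - α) * x ^ (-(1 - α))) := by field_simp; ring
    _ = x * ((1 - α) / 8) := by rw [hpow, mul_comm]

namespace IsWeakProfile

variable {α ε : ℝ} {k : ℝ × ℝ → ℝ≥0∞} {ν : Measure ℝ}

theorem measure_singleton (h : IsWeakProfile k ν) (x : ℝ) : ν {x} = 0 := by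
  have hnull (a b : ℝ) : volume.restrict ({x} ∩ Ioo a b) = 0 :=
    Measure.restrict_eq_zero.2 (measure_mono_null inter_subset_left Real.volume_singleton)
  simpa [hnull] using h.setLIntegral_rpow (measurableSet_singleton x) 0

theorem integrable_id (h : IsWeakProfile k ν) : Integrable (fun x : ℝ => x) ν := by
  refine ⟨by fun_prop, (hasFiniteIntegral_iff_ofReal (h.ae_pos.mono fun x hx => hx.le)).2 ?_⟩
  simp [h.lintegral_id]

theorem integral_id (h : IsWeakProfile k ν) : ∫ x, x ∂ν = 1 := by
  rw [integral_eq_lintegral_of_nonneg_ae (h.ae_pos.mono fun x hx => hx.le) (by fun_prop),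
    h.lintegral_id, ENNReal.toReal_one]

theorem measure_ne_zero (h : IsWeakProfile k ν) : ν ≠ 0 := by
  rintro rfl
  simpa using h.lintegral_id

variable [SFinite ν]

theorem measure_Ioi_le_sq_add (h : IsWeakProfile k ν) (hk : KernelBounds α ε k)
    (hα : α ∈ Icc (0 : ℝ) 1) (hε : 0 ≤ ε) {s : ℝ} (hs : 0 < s) :
    ν (Ioi s) ≤ (∫⁻ y, ENNReal.ofReal (min 1 (y / s)) ∂ν) ^ 2 +
      ENNReal.ofReal (2 * ε * s ^ (α - 2)) := by
  set m : ℝ → ℝ≥0∞ := fun y => ENNReal.ofReal (min 1 (y / s))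
  set c := ENNReal.ofReal (ε * s ^ (α - 2))
  have hpoint : ∀ᵐ p ∂ν.prod ν, k p * ENNReal.ofReal (tailGain s p + tailGain s p.swap) ≤
      2 * (m p.1 * m p.2) + c * (ENNReal.ofReal p.1 * ENNReal.ofReal (1 + p.2) +
        ENNReal.ofReal (1 + p.1) * ENNReal.ofReal p.2) := by
    filter_upwards [ae_prod_pos h.ae_pos] with ⟨y, z⟩ ⟨hy, hz⟩
    have : 0 ≤ min 1 (y / s) := le_min zero_le_one (by positivity)
    have : 0 ≤ min 1 (z / s) := le_min zero_le_one (by positivity)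
    refine (mul_le_mul_left (hk.le y z hy hz) _).trans ?_
    rw [← ENNReal.ofReal_mul (by positivity), ← ENNReal.ofReal_ofNat 2,
      ← ENNReal.ofReal_mul (by positivity), ← ENNReal.ofReal_mul (by positivity),
      ← ENNReal.ofReal_mul (by positivity), ← ENNReal.ofReal_mul (by positivity),
      ← ENNReal.ofReal_add (by positivity) (by positivity), ← ENNReal.ofReal_mul (by positivity),
      ← ENNReal.ofReal_add (by positivity) (by positivity)]
    exact ENNReal.ofReal_le_ofReal (kernel_mul_tailGain_le hα hε hy hz hs)
  have hone_add : ∫⁻ x, ENNReal.ofReal (1 + x) ∂ν ≤ 2 := by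
    refine (lintegral_mono fun _ => ENNReal.ofReal_add_le).trans ?_
    rw [lintegral_add_left measurable_const, h.lintegral_id, ENNReal.ofReal_one, lintegral_one,
      ← one_add_one_eq_two]
    exact add_le_add_left (h.measure_univ_le_one hk) 1
  have htwice : 2 * ν (Ioi s) ≤ 2 * ((∫⁻ y, m y ∂ν) ^ 2 + 2 * c) := by
    rw [h.two_mul_measure_Ioi hk s]
    refine (lintegral_mono_ae hpoint).trans ?_
    rw [lintegral_add_left (by fun_prop), lintegral_const_mul _ (by fun_prop),
      lintegral_const_mul _ (by fun_prop), lintegral_add_left (by fun_prop),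
      lintegral_prod_mul (f := m) (g := m) (by fun_prop) (by fun_prop),
      lintegral_prod_mul (f := ENNReal.ofReal) (g := fun z => ENNReal.ofReal (1 + z))
        (by fun_prop) (by fun_prop),
      lintegral_prod_mul (f := fun y => ENNReal.ofReal (1 + y)) (g := ENNReal.ofReal)
        (by fun_prop) (by fun_prop), h.lintegral_id, one_mul, mul_one]
    calc _ ≤ 2 * ((∫⁻ y, m y ∂ν) * ∫⁻ y, m y ∂ν) + c * (2 + 2) := by gcongr
      _ = 2 * ((∫⁻ y, m y ∂ν) ^ 2 + 2 * c) := by ring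
  rw [mul_assoc, ENNReal.ofReal_mul zero_le_two, ENNReal.ofReal_ofNat]
  exact (ENNReal.mul_le_mul_iff_right two_ne_zero ENNReal.ofNat_ne_top).1 htwice

theorem div_one_add_le_truncatedMean_add (h : IsWeakProfile k ν) (hk : KernelBounds α ε k)
    (hα : α ∈ Ico (0 : ℝ) 1) (hε : 0 ≤ ε) {x : ℝ} (hx : 0 < x) :
    x / (1 + x) ≤ truncatedMean ν x + 2 * ε / (1 - α) * x ^ (-(1 - α)) := by
  have : IsFiniteMeasure ν := ⟨(h.measure_univ_le_one hk).trans_lt ENNReal.one_lt_top⟩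
  have hgap : 0 < 1 - α := sub_pos.2 hα.2
  have hpos (t : ℝ) (ht : 0 < t) : 0 < truncatedMean ν t :=
    truncatedMean_pos h.ae_pos h.integrable_id h.measure_ne_zero ht
  refine div_one_add_le_of_deriv_le (by positivity) hgap hpos
    (fun t _ => hasDerivAt_truncatedMean h.integrable_id (h.measure_singleton t))
    (fun t ht => ?_) (h.integral_id ▸ tendsto_truncatedMean_atTop h.integrable_id) hx
  have htail := h.measure_Ioi_le_sq_add hk ⟨hα.1, hα.2.le⟩ hε ht
  have := hpos t ht
  rw [← ofReal_truncatedMean_div h.ae_pos h.integrable_id ht,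
    ← ENNReal.ofReal_pow (by positivity), ← ENNReal.ofReal_add (by positivity) (by positivity)]
    at htail
  refine (ENNReal.toReal_le_of_le_ofReal (by positivity) htail).trans_eq ?_
  rw [show -(1 - α) - 1 = α - 2 by ring]
  field_simp

theorem lt_measureReal_univ (h : IsWeakProfile k ν) (hk : KernelBounds α ε k)
    (hα : α ∈ Ico (0 : ℝ) 1) (hε : 0 ≤ ε) (hε' : ε ≤ couplingThreshold α) :
    (1 + α) / 2 < ν.real univ := by
  have : IsFiniteMeasure ν := ⟨(h.measure_univ_le_one hk).trans_lt ENNReal.one_lt_top⟩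
  have hsmall := mul_rpow_le_of_le_couplingThreshold hα.2 hε'
  set x := (1 - α) / 4 with hx
  have hx0 : 0 < x := by linarith [hα.2]
  have hcompare : x * (1 - x) ≤ x * (ν.real univ + (1 - α) / 8) := by
    calc x * (1 - x) ≤ x / (1 + x) := by
          rw [le_div_iff₀ (by positivity)]
          linarith [pow_pos hx0 3]
      _ ≤ x * ν.real univ + x * ((1 - α) / 8) :=
          (h.div_one_add_le_truncatedMean_add hk hα hε hx0).trans
            (add_le_add (truncatedMean_le h.integrable_id) hsmall)
      _ = x * (ν.real univ + (1 - α) / 8) := by ring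
  linarith [le_of_mul_le_mul_left hcompare hx0, hα.2]

end IsWeakProfile

/-! ### From profiles to weak profiles -/

/-- The gain term `x ↦ ∫_{y < x < y + z} y k(y, z) dν(y) dν(z)` of the profile equation. -/
noncomputable def gain (k : ℝ × ℝ → ℝ≥0∞) (ν : Measure ℝ) (x : ℝ) : ℝ≥0∞ :=
  ∫⁻ p in {p | x ∈ Ioo p.1 (p.1 + p.2)}, ENNReal.ofReal p.1 * k p ∂ν.prod ν

/-- The part of the gain term that comes from pairs with first component below `d` and second
component above `a`. It bounds `gain` below near zero and, for `0 < a`, controls its local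
integrals. -/
noncomputable def crossGain (k : ℝ × ℝ → ℝ≥0∞) (ν : Measure ℝ) (a d : ℝ) : ℝ≥0∞ :=
  ∫⁻ p in Iio d ×ˢ Ioi a, ENNReal.ofReal p.1 * k p ∂ν.prod ν

section GainIntegrals

variable {k : ℝ × ℝ → ℝ≥0∞}

theorem measurableSet_setOf_mem_Ioo_add :
    MeasurableSet {q : ℝ × ℝ × ℝ | q.1 ∈ Ioo q.2.1 (q.2.1 + q.2.2)} :=
  (measurableSet_lt (by fun_prop) (by fun_prop) :
    MeasurableSet {q : ℝ × ℝ × ℝ | q.2.1 < q.1}).inter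
      (measurableSet_lt (by fun_prop) (by fun_prop) :
        MeasurableSet {q : ℝ × ℝ × ℝ | q.1 < q.2.1 + q.2.2})

theorem gain_mul (hk : Measurable k) (ν : Measure ℝ) (x : ℝ) (c : ℝ≥0∞) :
    gain k ν x * c =
      ∫⁻ p, (Ioo p.1 (p.1 + p.2)).indicator (fun _ => ENNReal.ofReal p.1 * k p * c) x
        ∂ν.prod ν := by
  have hset : MeasurableSet {p : ℝ × ℝ | x ∈ Ioo p.1 (p.1 + p.2)} :=
    measurable_prodMk_left measurableSet_setOf_mem_Ioo_add
  rw [gain, ← lintegral_mul_const _ (by fun_prop), ← lintegral_indicator hset]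
  rfl

theorem measurable_indicator_Ioo_add (hk : Measurable k) {g : ℝ → ℝ≥0∞} (hg : Measurable g) :
    Measurable fun q : ℝ × ℝ × ℝ => (Ioo q.2.1 (q.2.1 + q.2.2)).indicator
      (fun _ => ENNReal.ofReal q.2.1 * k q.2 * g q.1) q.1 :=
  (by fun_prop : Measurable fun q : ℝ × ℝ × ℝ => ENNReal.ofReal q.2.1 * k q.2 * g q.1).indicator
    measurableSet_setOf_mem_Ioo_add

theorem gain_eq_lintegral_lintegral (hk : Measurable k) (ν : Measure ℝ) [SFinite ν] (x : ℝ) :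
    gain k ν x =
      ∫⁻ y in Iio x, ENNReal.ofReal y * (∫⁻ z in Ioi (x - y), k (y, z) ∂ν) ∂ν := by
  have hmeas : Measurable fun p : ℝ × ℝ => (Ioo p.1 (p.1 + p.2)).indicator
      (fun _ => ENNReal.ofReal p.1 * k p * 1) x :=
    (measurable_indicator_Ioo_add hk measurable_one).comp (measurable_prodMk_left (x := x))
  rw [← mul_one (gain k ν x), gain_mul hk, lintegral_prod _ hmeas.aemeasurable,
    ← lintegral_indicator measurableSet_Iio]
  refine lintegral_congr fun y => ?_
  by_cases hy : y < x
  · rw [indicator_of_mem (show y ∈ Iio x from hy), ← lintegral_indicator measurableSet_Ioi,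
      ← lintegral_const_mul' _ _ ENNReal.ofReal_ne_top]
    refine lintegral_congr fun z => ?_
    by_cases hz : x - y < z
    · simp [hy, sub_lt_iff_lt_add'.1 hz, hz]
    · simp [sub_lt_iff_lt_add'.not.1 hz, hz]
  · simp [hy]

theorem measurable_setLIntegral_Ioi_sub (hk : Measurable k) (ν : Measure ℝ) [SFinite ν] (x : ℝ) :
    Measurable fun y => ∫⁻ z in Ioi (x - y), k (y, z) ∂ν := by
  have hset : MeasurableSet {p : ℝ × ℝ | x - p.1 < p.2} :=
    measurableSet_lt (by fun_prop) (by fun_prop)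
  simp only [← lintegral_indicator measurableSet_Ioi]
  exact (hk.indicator hset).lintegral_prod_right'

theorem measurable_gain (hk : Measurable k) (ν : Measure ℝ) [SFinite ν] :
    Measurable (gain k ν) := by
  have hmeas : Measurable fun x => gain k ν x * 1 := by
    simp only [gain_mul hk]
    exact (measurable_indicator_Ioo_add hk measurable_one).lintegral_prod_right'
  simpa only [mul_one] using hmeas

theorem lintegral_gain_mul (hk : Measurable k) (ν : Measure ℝ) [SFinite ν] {g : ℝ → ℝ≥0∞}
    (hg : Measurable g) :
    ∫⁻ x, gain k ν x * g x =
      ∫⁻ p, ENNReal.ofReal p.1 * k p * (∫⁻ x in Ioo p.1 (p.1 + p.2), g x) ∂ν.prod ν := by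
  simp only [gain_mul hk]
  rw [lintegral_lintegral_swap (measurable_indicator_Ioo_add hk hg).aemeasurable]
  refine lintegral_congr fun p => ?_
  rw [← lintegral_const_mul _ hg, ← lintegral_indicator measurableSet_Ioo]
  rfl

end GainIntegrals

theorem two_add_mul_le_mul {α ε a b δ y z : ℝ} (hα : α ∈ Icc (0 : ℝ) 1) (hε : 0 ≤ ε) (hδ : 0 < δ)
    (ha : 0 < a) (hy : y ∈ Icc δ b) (hz : a ≤ z) :
    2 + ε * ((y / z) ^ α + (z / y) ^ α) ≤ ((2 + ε * (2 + b / a)) / a + ε / δ) * z := by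
  have hy0 : 0 < y := hδ.trans_le hy.1
  have hz0 : 0 < z := ha.trans_le hz
  have hb0 : 0 < b := hy0.trans_le hy.2
  have hyz : (y / z) ^ α ≤ 1 + b / a :=
    calc (y / z) ^ α ≤ 1 + (y / z) ^ (1 : ℝ) :=
          rpow_le_one_add_rpow (by positivity) hα.1 hα.2
      _ ≤ 1 + b / a := by rw [rpow_one]; gcongr; exact hy.2
  have hzy : (z / y) ^ α ≤ 1 + z / δ :=
    calc (z / y) ^ α ≤ 1 + (z / y) ^ (1 : ℝ) :=
          rpow_le_one_add_rpow (by positivity) hα.1 hα.2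
      _ ≤ 1 + z / δ := by rw [rpow_one]; gcongr; exact hy.1
  have hone : 1 ≤ z / a := (one_le_div ha).2 hz
  calc 2 + ε * ((y / z) ^ α + (z / y) ^ α) ≤ 2 + ε * ((1 + b / a) + (1 + z / δ)) := by gcongr
    _ = (2 + ε * (2 + b / a)) * 1 + ε * (z / δ) := by ring
    _ ≤ (2 + ε * (2 + b / a)) * (z / a) + ε * (z / δ) := by gcongr
    _ = ((2 + ε * (2 + b / a)) / a + ε / δ) * z := by ring

theorem KernelBounds.exists_le_mul {α ε a b δ : ℝ} {k : ℝ × ℝ → ℝ≥0∞} (hk : KernelBounds α ε k)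
    (hα : α ∈ Icc (0 : ℝ) 1) (hε : 0 ≤ ε) (hδ : 0 < δ) (ha : 0 < a) :
    ∃ C : ℝ, ∀ y ∈ Icc δ b, ∀ z, a ≤ z → k (y, z) ≤ ENNReal.ofReal C * ENNReal.ofReal z := by
  refine ⟨(2 + ε * (2 + b / a)) / a + ε / δ, fun y hy z hz => ?_⟩
  have hz0 : 0 < z := ha.trans_le hz
  rw [← ENNReal.ofReal_mul' hz0.le]
  exact (hk.le y z (hδ.trans_le hy.1) hz0).trans
    (ENNReal.ofReal_le_ofReal (two_add_mul_le_mul hα hε hδ ha hy hz))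

section GainFiniteness

variable {α ε a d x : ℝ} {k : ℝ × ℝ → ℝ≥0∞} {ν : Measure ℝ}

theorem setLIntegral_Ioi_kernel_ne_top (hk : KernelBounds α ε k) (hα : α ∈ Icc (0 : ℝ) 1)
    (hε : 0 ≤ ε) (hmass : ∫⁻ x, ENNReal.ofReal x ∂ν ≠ ∞) {y : ℝ} (hy : 0 < y) (ha : 0 < a) :
    ∫⁻ z in Ioi a, k (y, z) ∂ν ≠ ∞ := by
  obtain ⟨C, hC⟩ := hk.exists_le_mul (b := y) hα hε hy ha
  refine ne_top_of_le_ne_top ?_ ((setLIntegral_mono (by fun_prop) fun z hz =>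
    hC y ⟨le_rfl, le_rfl⟩ z (le_of_lt hz)).trans (setLIntegral_le_lintegral _ _))
  rw [lintegral_const_mul _ (by fun_prop)]
  exact ENNReal.mul_ne_top ENNReal.ofReal_ne_top hmass

theorem crossGain_le_gain (hν : ∀ᵐ x ∂ν, 0 < x) (hxa : x ≤ a) :
    crossGain k ν a x ≤ gain k ν x := by
  refine lintegral_mono_set' ?_
  filter_upwards [ae_prod_pos hν] with p hp hmem
  exact ⟨hmem.1, by linarith [hp.1, show a < p.2 from hmem.2]⟩

variable [SFinite ν]

theorem crossGain_ne_top_of_ne_top (hk : KernelBounds α ε k) (hα : α ∈ Icc (0 : ℝ) 1)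
    (hε : 0 ≤ ε) (hmass : ∫⁻ x, ENNReal.ofReal x ∂ν ≠ ∞) (ha : 0 < a) (hx : 0 < x)
    (h : crossGain k ν a x ≠ ∞) : crossGain k ν a d ≠ ∞ := by
  obtain ⟨C, hC⟩ := hk.exists_le_mul (b := d) hα hε hx ha
  have hstrip : ∫⁻ p in Ico x d ×ˢ Ioi a, ENNReal.ofReal p.1 * k p ∂ν.prod ν ≤
      ∫⁻ p, ENNReal.ofReal C * (ENNReal.ofReal p.1 * ENNReal.ofReal p.2) ∂ν.prod ν := by
    refine (setLIntegral_mono (by fun_prop) fun p hp => ?_).trans (setLIntegral_le_lintegral _ _)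
    rw [mul_left_comm]
    gcongr
    exact hC p.1 ⟨hp.1.1, hp.1.2.le⟩ p.2 (le_of_lt hp.2)
  have hsplit : Iio d ×ˢ Ioi a ⊆ Iio x ×ˢ Ioi a ∪ Ico x d ×ˢ Ioi a := by
    rw [← union_prod]
    exact prod_mono_left fun y hy => (lt_or_ge y x).imp id fun hxy => ⟨hxy, hy⟩
  refine ne_top_of_le_ne_top (ENNReal.add_ne_top.2 ⟨h, ne_top_of_le_ne_top ?_ hstrip⟩)
    ((lintegral_mono_set hsplit).trans (lintegral_union_le _ _ _))
  rw [lintegral_const_mul _ (by fun_prop),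
    lintegral_prod_mul (f := ENNReal.ofReal) (g := ENNReal.ofReal) (by fun_prop) (by fun_prop)]
  exact ENNReal.mul_ne_top ENNReal.ofReal_ne_top (ENNReal.mul_ne_top hmass hmass)

-- An infinite value would force `gain = ∞` on all of `(0, a)`, so that `ν` does not charge that
-- interval; but then `crossGain k ν a a = 0`.
theorem crossGain_ne_top (hk : KernelBounds α ε k) (hα : α ∈ Icc (0 : ℝ) 1) (hε : 0 ≤ ε)
    (hν : ∀ᵐ x ∂ν, 0 < x) (hmass : ∫⁻ x, ENNReal.ofReal x ∂ν ≠ ∞)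
    (hgain : ∀ᵐ x ∂ν, gain k ν x ≠ ∞) (ha : 0 < a) : crossGain k ν a d ≠ ∞ := by
  intro htop
  have hall (x : ℝ) (hx : 0 < x) : crossGain k ν a x = ∞ := by
    by_contra h
    exact crossGain_ne_top_of_ne_top hk hα hε hmass ha hx h htop
  have hnull : ν (Iio a) = 0 := by
    refine measure_eq_zero_iff_ae_notMem.2 ?_
    filter_upwards [hν, hgain] with x hx hfin hxa
    exact hfin (top_le_iff.1 ((hall x hx).ge.trans (crossGain_le_gain hν (le_of_lt hxa))))
  refine ENNReal.top_ne_zero ((hall a ha).symm.trans (setLIntegral_measure_zero _ _ ?_))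
  rw [Measure.prod_prod, hnull, zero_mul]

theorem ofReal_mul_kernel_mul_volume_le (hk : KernelBounds α ε k) {b y z : ℝ} (hy : 0 < y)
    (hz : 0 < z) :
    ENNReal.ofReal y * k (y, z) * volume (Ioo a b ∩ Ioo y (y + z)) ≤ ENNReal.ofReal b *
      ((Iio b ×ˢ Ioi (a / 2)).indicator (fun p => ENNReal.ofReal p.1 * k p) (y, z) +
        (Iio b ×ˢ Ioi (a / 2)).indicator (fun p => ENNReal.ofReal p.1 * k p) (z, y)) := by
  rcases (Ioo a b ∩ Ioo y (y + z)).eq_empty_or_nonempty with hempty | ⟨t, ⟨hat, htb⟩, hyt, htz⟩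
  · simp [hempty]
  rcases lt_or_ge (a / 2) z with hza | hza
  · have hvol : volume (Ioo a b ∩ Ioo y (y + z)) ≤ ENNReal.ofReal b := by
      refine (measure_mono (t := Ioo y b) fun u hu => ⟨hu.2.1, hu.1.2⟩).trans ?_
      exact Real.volume_Ioo.trans_le (ENNReal.ofReal_le_ofReal (sub_le_self b hy.le))
    have hmem : (y, z) ∈ Iio b ×ˢ Ioi (a / 2) := ⟨hyt.trans htb, hza⟩
    rw [indicator_of_mem hmem, mul_comm]
    gcongr
    exact le_self_add
  · have hvol : volume (Ioo a b ∩ Ioo y (y + z)) ≤ ENNReal.ofReal z :=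
      (measure_mono inter_subset_right).trans_eq (by rw [Real.volume_Ioo, add_sub_cancel_left])
    have hmem : (z, y) ∈ Iio b ×ˢ Ioi (a / 2) :=
      ⟨show z < b by linarith, show a / 2 < y by linarith⟩
    rw [indicator_of_mem hmem, hk.symm y z hy hz, mul_assoc, mul_comm (k (z, y))]
    gcongr
    · linarith
    · exact le_add_left (by gcongr)

theorem setLIntegral_gain_le_crossGain (hk : KernelBounds α ε k) (hν : ∀ᵐ x ∂ν, 0 < x) {b : ℝ} :
    ∫⁻ x in Ioo a b, gain k ν x ≤
      ENNReal.ofReal b * (crossGain k ν (a / 2) b + crossGain k ν (a / 2) b) := by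
  set S := Iio b ×ˢ Ioi (a / 2)
  set f : ℝ × ℝ → ℝ≥0∞ := S.indicator fun p => ENNReal.ofReal p.1 * k p
  have hS : MeasurableSet S := measurableSet_Iio.prod measurableSet_Ioi
  have hfm : Measurable f :=
    (measurable_fst.ennreal_ofReal.mul hk.measurable).indicator hS
  have hcross : crossGain k ν (a / 2) b = ∫⁻ p, f p ∂ν.prod ν := (lintegral_indicator hS _).symm
  have hpoint : ∀ᵐ p ∂ν.prod ν, ENNReal.ofReal p.1 * k p *
      volume (Ioo a b ∩ Ioo p.1 (p.1 + p.2)) ≤ ENNReal.ofReal b * (f p + f p.swap) := by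
    filter_upwards [ae_prod_pos hν] with ⟨y, z⟩ ⟨hy, hz⟩
    exact ofReal_mul_kernel_mul_volume_le hk hy hz
  calc ∫⁻ x in Ioo a b, gain k ν x = ∫⁻ x, gain k ν x * (Ioo a b).indicator 1 x := by
        rw [← lintegral_indicator measurableSet_Ioo]
        refine lintegral_congr fun x => ?_
        rw [← indicator_mul_right]
        simp only [Pi.one_apply, mul_one]
    _ = ∫⁻ p, ENNReal.ofReal p.1 * k p * volume (Ioo a b ∩ Ioo p.1 (p.1 + p.2)) ∂ν.prod ν := by
        rw [lintegral_gain_mul hk.measurable ν (measurable_one.indicator measurableSet_Ioo)]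
        simp only [lintegral_indicator_one measurableSet_Ioo,
          Measure.restrict_apply measurableSet_Ioo]
    _ ≤ ∫⁻ p, ENNReal.ofReal b * (f p + f p.swap) ∂ν.prod ν := lintegral_mono_ae hpoint
    _ = ENNReal.ofReal b * (crossGain k ν (a / 2) b + crossGain k ν (a / 2) b) := by
        rw [lintegral_const_mul _ (by fun_prop), lintegral_add_left hfm, lintegral_prod_swap,
          hcross]

theorem ae_gain_ne_top (hk : KernelBounds α ε k) (hα : α ∈ Icc (0 : ℝ) 1) (hε : 0 ≤ ε)
    (hν : ∀ᵐ x ∂ν, 0 < x) (hmass : ∫⁻ x, ENNReal.ofReal x ∂ν ≠ ∞)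
    (hgain : ∀ᵐ x ∂ν, gain k ν x ≠ ∞) : ∀ᵐ x ∂volume.restrict (Ioi 0), gain k ν x ≠ ∞ := by
  have hlocal (n : ℕ) : ∀ᵐ x ∂volume.restrict (Ioo (1 / (n + 1 : ℝ)) n), gain k ν x ≠ ∞ := by
    have hfin := crossGain_ne_top (d := n) hk hα hε hν hmass hgain
      (show 0 < 1 / (n + 1 : ℝ) / 2 by positivity)
    have hle := setLIntegral_gain_le_crossGain (a := 1 / (n + 1)) (b := n) hk hν
    filter_upwards [ae_lt_top (measurable_gain hk.measurable ν) (ne_top_of_le_ne_top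
      (ENNReal.mul_ne_top ENNReal.ofReal_ne_top (ENNReal.add_ne_top.2 ⟨hfin, hfin⟩)) hle)]
      with x hx using hx.ne
  refine ae_restrict_of_ae_restrict_of_subset (fun x (hx : 0 < x) => ?_)
    ((ae_restrict_iUnion_iff _ _).2 hlocal)
  obtain ⟨m, hm⟩ := exists_nat_one_div_lt hx
  obtain ⟨n, hn⟩ := exists_nat_gt x
  refine mem_iUnion.2 ⟨max m n, lt_of_le_of_lt ?_ hm, hn.trans_le (by simp)⟩
  exact one_div_le_one_div_of_le (by positivity) (by simp)

end GainFiniteness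

/-- A kernel on the open quadrant as an extended-valued function, extended by zero. -/
noncomputable def quadrantKernel (K : ℝ → ℝ → ℝ) (p : ℝ × ℝ) : ℝ≥0∞ :=
  ENNReal.ofReal ((Ioi 0 ×ˢ Ioi 0).indicator (Function.uncurry K) p)

/-- The measure on `(0, ∞)` with density `φ`. -/
noncomputable def profileMeasure (φ : ℝ → ℝ) : Measure ℝ :=
  (volume.restrict (Ioi 0)).withDensity fun x => ENNReal.ofReal (φ x)

instance (φ : ℝ → ℝ) : SFinite (profileMeasure φ) := by unfold profileMeasure; infer_instance

theorem quadrantKernel_apply (K : ℝ → ℝ → ℝ) {y z : ℝ} (hy : 0 < y) (hz : 0 < z) :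
    quadrantKernel K (y, z) = ENNReal.ofReal (K y z) :=
  congrArg ENNReal.ofReal (indicator_of_mem (mk_mem_prod hy hz) _)

theorem ae_profileMeasure_pos (φ : ℝ → ℝ) : ∀ᵐ x ∂profileMeasure φ, 0 < x :=
  (withDensity_absolutelyContinuous _ _).ae_le (ae_restrict_mem measurableSet_Ioi)

namespace IsProfile

variable {α ε : ℝ} {K : ℝ → ℝ → ℝ} {φ : ℝ → ℝ}

theorem aestronglyMeasurable (h : IsProfile K φ) :
    AEStronglyMeasurable φ (volume.restrict (Ioi 0)) :=
  h.1.aestronglyMeasurable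

theorem aemeasurable_ofReal (h : IsProfile K φ) :
    AEMeasurable (fun x => ENNReal.ofReal (φ x)) (volume.restrict (Ioi 0)) :=
  h.aestronglyMeasurable.aemeasurable.ennreal_ofReal

theorem setLIntegral_profileMeasure (h : IsProfile K φ) {g : ℝ → ℝ≥0∞} (hg : Measurable g)
    {A : Set ℝ} (hA : MeasurableSet A) :
    ∫⁻ x in A, g x ∂profileMeasure φ = ∫⁻ x in A ∩ Ioi 0, ENNReal.ofReal (φ x) * g x := by
  have hφ := h.aemeasurable_ofReal.mono_measure (Measure.restrict_le_self (s := A))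
  rw [profileMeasure, restrict_withDensity hA,
    lintegral_withDensity_eq_lintegral_mul₀ hφ hg.aemeasurable, Measure.restrict_restrict hA]
  rfl

theorem lintegral_profileMeasure (h : IsProfile K φ) {g : ℝ → ℝ≥0∞} (hg : Measurable g) :
    ∫⁻ x, g x ∂profileMeasure φ = ∫⁻ x in Ioi 0, ENNReal.ofReal (φ x) * g x := by
  simpa using h.setLIntegral_profileMeasure hg MeasurableSet.univ

theorem lintegral_id_profileMeasure (h : IsProfile K φ) :
    ∫⁻ x, ENNReal.ofReal x ∂profileMeasure φ = ENNReal.ofReal (∫ x in Ioi 0, x * φ x) := by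
  rw [h.lintegral_profileMeasure ENNReal.measurable_ofReal,
    ofReal_integral_eq_lintegral_ofReal h.2.2.1]
  · refine lintegral_congr_ae ?_
    filter_upwards [h.2.1] with x hφ
    rw [← ENNReal.ofReal_mul hφ, mul_comm]
  · filter_upwards [h.2.1, ae_restrict_mem measurableSet_Ioi] with x hφ hx
    exact mul_nonneg (le_of_lt hx) hφ

theorem ae_profileMeasure (h : IsProfile K φ) {P : ℝ → Prop}
    (hP : ∀ᵐ x ∂volume.restrict (Ioi 0), φ x ≠ 0 → P x) : ∀ᵐ x ∂profileMeasure φ, P x := by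
  refine (ae_withDensity_iff' h.aemeasurable_ofReal).2 (hP.mono fun x hx hne => hx ?_)
  rintro h0
  simp [h0] at hne

theorem lintegral_id_profileMeasure_ne_top (h : IsProfile K φ) :
    ∫⁻ x, ENNReal.ofReal x ∂profileMeasure φ ≠ ∞ :=
  h.lintegral_id_profileMeasure ▸ ENNReal.ofReal_ne_top

theorem integral_kernel_eq_toReal (h : IsProfile K φ) (hk : KernelBounds α ε (quadrantKernel K))
    (hα : α ∈ Icc (0 : ℝ) 1) (hε : 0 ≤ ε) {x y : ℝ} (hy : 0 < y) (hyx : y < x) (hφ : 0 ≤ φ y) :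
    ∫ z in Ioi (x - y), y * K y z * φ y * φ z =
      (ENNReal.ofReal (φ y) * (ENNReal.ofReal y *
        ∫⁻ z in Ioi (x - y), quadrantKernel K (y, z) ∂profileMeasure φ)).toReal := by
  have hxy : 0 < x - y := sub_pos.2 hyx
  have hsub : Ioi (x - y) ⊆ Ioi 0 := Ioi_subset_Ioi hxy.le
  have hky : Measurable fun z => quadrantKernel K (y, z) :=
    hk.measurable.comp measurable_prodMk_left
  have hfin := setLIntegral_Ioi_kernel_ne_top hk hα hε h.lintegral_id_profileMeasure_ne_top hy hxy
  have hmeas : AEMeasurable (fun z => ENNReal.ofReal (φ z) * quadrantKernel K (y, z))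
      (volume.restrict (Ioi (x - y))) :=
    (h.aemeasurable_ofReal.mono_measure (Measure.restrict_mono hsub le_rfl)).mul hky.aemeasurable
  rw [h.setLIntegral_profileMeasure hky measurableSet_Ioi, inter_eq_left.2 hsub] at hfin ⊢
  rw [ENNReal.toReal_mul, ENNReal.toReal_mul, ENNReal.toReal_ofReal hφ,
    ENNReal.toReal_ofReal hy.le, ← integral_toReal hmeas (ae_lt_top' hmeas hfin), ← mul_assoc,
    ← integral_const_mul]
  refine setIntegral_congr_ae measurableSet_Ioi ?_
  filter_upwards [ae_imp_of_ae_restrict h.2.1] with z hφz hz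
  have hz0 : 0 < z := hsub hz
  have hK : 0 ≤ K y z := by
    have h2 := hk.two_le y z hy hz0
    rw [quadrantKernel_apply K hy hz0] at h2
    exact (ENNReal.ofReal_pos.1 (two_pos.trans_le h2)).le
  rw [quadrantKernel_apply K hy hz0, ENNReal.toReal_mul, ENNReal.toReal_ofReal (hφz hz0),
    ENNReal.toReal_ofReal hK]
  ring

theorem sq_mul_eq_toReal_gain (h : IsProfile K φ) (hk : KernelBounds α ε (quadrantKernel K))
    (hα : α ∈ Icc (0 : ℝ) 1) (hε : 0 ≤ ε) :
    ∀ᵐ x ∂volume.restrict (Ioi 0),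
      x ^ 2 * φ x = (gain (quadrantKernel K) (profileMeasure φ) x).toReal := by
  filter_upwards [h.2.2.2] with x hx
  have hinner : Measurable fun y => ENNReal.ofReal y *
      ∫⁻ z in Ioi (x - y), quadrantKernel K (y, z) ∂profileMeasure φ :=
    ENNReal.measurable_ofReal.mul (measurable_setLIntegral_Ioi_sub hk.measurable _ x)
  rw [hx, gain_eq_lintegral_lintegral hk.measurable,
    h.setLIntegral_profileMeasure hinner measurableSet_Iio, Iio_inter_Ioi, ← integral_toReal]
  · refine setIntegral_congr_ae measurableSet_Ioo ?_
    filter_upwards [ae_imp_of_ae_restrict h.2.1] with y hφ hy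
    exact h.integral_kernel_eq_toReal hk hα hε hy.1 hy.2 (hφ hy.1)
  · exact (h.aemeasurable_ofReal.mono_measure
      (Measure.restrict_mono Ioo_subset_Ioi_self le_rfl)).mul hinner.aemeasurable
  · filter_upwards [ae_restrict_mem measurableSet_Ioo] with y hy
    exact ENNReal.mul_lt_top ENNReal.ofReal_lt_top (ENNReal.mul_lt_top ENNReal.ofReal_lt_top
      (setLIntegral_Ioi_kernel_ne_top hk hα hε h.lintegral_id_profileMeasure_ne_top hy.1
        (sub_pos.2 hy.2)).lt_top)

-- Where the gain is infinite its real value is the junk value `0`, so there the profile vanishes.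
theorem ae_gain_ne_top_profileMeasure (h : IsProfile K φ)
    (hk : KernelBounds α ε (quadrantKernel K)) (hα : α ∈ Icc (0 : ℝ) 1) (hε : 0 ≤ ε) :
    ∀ᵐ x ∂profileMeasure φ, gain (quadrantKernel K) (profileMeasure φ) x ≠ ∞ := by
  refine h.ae_profileMeasure ?_
  filter_upwards [h.sq_mul_eq_toReal_gain hk hα hε, ae_restrict_mem measurableSet_Ioi]
    with x hx hx0 hφ htop
  rw [htop, ENNReal.toReal_top] at hx
  exact mul_ne_zero (pow_ne_zero 2 (ne_of_gt hx0)) hφ hx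

theorem isWeakProfile (h : IsProfile K φ) (hn : IsNormalised φ)
    (hk : KernelBounds α ε (quadrantKernel K)) (hα : α ∈ Icc (0 : ℝ) 1) (hε : 0 ≤ ε) :
    IsWeakProfile (quadrantKernel K) (profileMeasure φ) where
  ae_pos := ae_profileMeasure_pos φ
  lintegral_id := by rw [h.lintegral_id_profileMeasure, hn, ENNReal.ofReal_one]
  lintegral_sq_mul g hg := by
    have hfin := ae_gain_ne_top hk hα hε (ae_profileMeasure_pos φ)
      h.lintegral_id_profileMeasure_ne_top (h.ae_gain_ne_top_profileMeasure hk hα hε)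
    calc ∫⁻ x, ENNReal.ofReal (x ^ 2) * g x ∂profileMeasure φ
        = ∫⁻ x in Ioi 0, gain (quadrantKernel K) (profileMeasure φ) x * g x := by
          rw [h.lintegral_profileMeasure (by fun_prop)]
          refine lintegral_congr_ae ?_
          filter_upwards [hfin, h.sq_mul_eq_toReal_gain hk hα hε, h.2.1] with x hx hgain hφ
          rw [← mul_assoc, ← ENNReal.ofReal_mul hφ, mul_comm (φ x), hgain, ENNReal.ofReal_toReal hx]
      _ = ∫⁻ x, gain (quadrantKernel K) (profileMeasure φ) x * (Ioi 0).indicator g x := by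
          rw [← lintegral_indicator measurableSet_Ioi]
          exact lintegral_congr fun x => indicator_mul_right _ _ _
      _ = _ := by
          rw [lintegral_gain_mul hk.measurable _ (hg.indicator measurableSet_Ioi)]
          refine lintegral_congr_ae ?_
          filter_upwards [ae_prod_pos (ae_profileMeasure_pos φ)] with p hp
          congr 1
          refine setLIntegral_congr_fun measurableSet_Ioo fun x hx => ?_
          exact indicator_of_mem (hp.1.trans hx.1) g

end IsProfile

/-! ### Stability of `Phi` -/

section Weight

variable {a b c x : ℝ} {f g : ℝ → ℝ}

theorem measurable_weight (a b : ℝ) : Measurable (weight a b) := by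
  unfold weight
  exact Measurable.ite measurableSet_Iic (by fun_prop) (by fun_prop)

theorem weight_pos (hx : 0 < x) : 0 < weight a b x := by
  unfold weight
  split_ifs <;> positivity

theorem weight_le_rpow_add_rpow (hbc : b ≤ c) (hx : 0 < x) :
    weight a b x ≤ x ^ a + x ^ c := by
  have ha : 0 < x ^ a := rpow_pos_of_pos hx a
  have hc : 0 < x ^ c := rpow_pos_of_pos hx c
  unfold weight
  split_ifs with h
  · exact le_add_of_nonneg_right hc.le
  · exact le_add_of_nonneg_of_le ha.le (rpow_le_rpow_of_exponent_le (not_le.1 h).le hbc)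

theorem rpow_le_weight (hac : a ≤ c) (hcb : c ≤ b) (hx : 0 < x) : x ^ c ≤ weight a b x := by
  unfold weight
  split_ifs with h
  · exact rpow_le_rpow_of_exponent_ge hx h hac
  · exact rpow_le_rpow_of_exponent_le (not_le.1 h).le hcb

theorem Xnorm_nonneg (a b : ℝ) (g : ℝ → ℝ) : 0 ≤ Xnorm a b g :=
  setIntegral_nonneg measurableSet_Ioi fun _ hx => mul_nonneg (abs_nonneg _) (weight_pos hx).le

theorem MemX.sub (hf : MemX a b f) (hg : MemX a b g) : MemX a b fun x => f x - g x := by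
  simp only [MemX, sub_mul]
  exact Integrable.sub hf hg

theorem MemX.integrableOn_abs_mul_weight (hf : MemX a b f) :
    IntegrableOn (fun x => |f x| * weight a b x) (Ioi 0) := by
  refine (Integrable.abs hf).congr ?_
  filter_upwards [ae_restrict_mem measurableSet_Ioi] with x hx
  rw [abs_mul, abs_of_pos (weight_pos hx)]

theorem MemX.aestronglyMeasurable (hf : MemX a b f) :
    AEStronglyMeasurable f (volume.restrict (Ioi 0)) := by
  refine (Integrable.aestronglyMeasurable hf |>.mul
    (measurable_weight a b).inv.aestronglyMeasurable).congr ?_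
  filter_upwards [ae_restrict_mem measurableSet_Ioi] with x hx
  exact mul_inv_cancel_right₀ (weight_pos hx).ne' (f x)

end Weight

namespace IsProfile

variable {α β ε p : ℝ} {K : ℝ → ℝ → ℝ} {φ : ℝ → ℝ}

theorem integrableOn_mul_rpow (h : IsProfile K φ)
    (hp : ∫⁻ x, ENNReal.ofReal (x ^ p) ∂profileMeasure φ ≠ ∞) :
    IntegrableOn (fun x => φ x * x ^ p) (Ioi 0) := by
  rw [h.lintegral_profileMeasure (by fun_prop)] at hp
  have hmeas : Measurable fun x : ℝ => x ^ p := by fun_prop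
  refine ⟨h.aestronglyMeasurable.mul hmeas.aestronglyMeasurable, ?_⟩
  rw [hasFiniteIntegral_iff_ofReal]
  · refine lt_of_eq_of_lt (lintegral_congr_ae ?_) hp.lt_top
    filter_upwards [h.2.1] with x hφ using ENNReal.ofReal_mul hφ
  · filter_upwards [h.2.1, ae_restrict_mem measurableSet_Ioi] with x hφ hx
    exact mul_nonneg hφ (rpow_nonneg (le_of_lt hx) p)

theorem memX (h : IsProfile K φ) (hn : IsNormalised φ)
    (hk : KernelBounds α ε (quadrantKernel K)) (hα : α ∈ Ico (0 : ℝ) 1) (hε : 0 ≤ ε)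
    (hε' : ε ≤ couplingThreshold α) : MemX (-α) β φ := by
  have hw := h.isWeakProfile hn hk ⟨hα.1, hα.2.le⟩ hε
  have hneg := h.integrableOn_mul_rpow
    (hw.lintegral_rpow_neg_ne_top hk hα.1 (hw.lt_measureReal_univ hk hα hε hε'))
  have hpos := h.integrableOn_mul_rpow
    (hw.lintegral_rpow_ne_top hk hα hε (le_max_left 1 β))
  refine (hneg.add hpos).mono'
    (h.aestronglyMeasurable.mul (measurable_weight _ _).aestronglyMeasurable) ?_
  filter_upwards [h.2.1, ae_restrict_mem measurableSet_Ioi] with x hφ hx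
  rw [norm_of_nonneg (mul_nonneg hφ (weight_pos hx).le), Pi.add_apply, ← mul_add]
  exact mul_le_mul_of_nonneg_left (weight_le_rpow_add_rpow (le_max_right 1 β) hx) hφ

end IsProfile

/-- The properties of the perturbation `W` of the constant kernel on which the stability estimate
depends: those of `GoodW` with continuity weakened to measurability and without homogeneity. -/
structure IsPerturbation (α : ℝ) (W : ℝ → ℝ → ℝ) : Prop where
  measurable : Measurable ((Ioi 0 ×ˢ Ioi 0).indicator (Function.uncurry W))
  symm : ∀ x y, 0 < x → 0 < y → W x y = W y x
  nonneg : ∀ x y, 0 < x → 0 < y → 0 ≤ W x y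
  le : ∀ x y, 0 < x → 0 < y → W x y ≤ (x / y) ^ α + (y / x) ^ α

theorem GoodW.isPerturbation {α : ℝ} {W : ℝ → ℝ → ℝ} (hW : GoodW α W) : IsPerturbation α W where
  measurable := by
    classical
    rw [← piecewise_eq_indicator]
    exact hW.1.measurable_piecewise continuousOn_const (measurableSet_Ioi.prod measurableSet_Ioi)
  symm := hW.2.1
  nonneg x y hx hy := (hW.2.2.2 x y hx hy).1
  le x y hx hy := (hW.2.2.2 x y hx hy).2

namespace IsPerturbation

variable {α β ε : ℝ} {W : ℝ → ℝ → ℝ} {f g : ℝ → ℝ} {x y z : ℝ}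

theorem kernelBounds (hW : IsPerturbation α W) (hε : 0 ≤ ε) :
    KernelBounds α ε (quadrantKernel (Kern ε W)) where
  measurable := by
    have heq : (Ioi 0 ×ˢ Ioi 0).indicator (Function.uncurry (Kern ε W)) = fun p =>
        (Ioi 0 ×ˢ Ioi 0).indicator (fun _ => 2) p +
          ε * (Ioi 0 ×ˢ Ioi 0).indicator (Function.uncurry W) p := by
      ext p
      by_cases hp : p ∈ Ioi (0 : ℝ) ×ˢ Ioi (0 : ℝ)
      · simp only [indicator_of_mem hp]
        rfl
      · simp only [indicator_of_notMem hp, mul_zero, add_zero]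
    unfold quadrantKernel
    rw [heq]
    exact ((measurable_const.indicator (measurableSet_Ioi.prod measurableSet_Ioi)).add
      (hW.measurable.const_mul ε)).ennreal_ofReal
  symm y z hy hz := by
    rw [quadrantKernel_apply _ hy hz, quadrantKernel_apply _ hz hy, Kern, Kern, hW.symm y z hy hz]
  two_le y z hy hz := by
    rw [quadrantKernel_apply _ hy hz, ← ENNReal.ofReal_ofNat 2]
    exact ENNReal.ofReal_le_ofReal
      (le_add_of_nonneg_right (mul_nonneg hε (hW.nonneg y z hy hz)))
  le y z hy hz := by
    rw [quadrantKernel_apply _ hy hz]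
    refine ENNReal.ofReal_le_ofReal ?_
    unfold Kern
    gcongr
    exact hW.le y z hy hz

theorem abs_le_mul_weight (hW : IsPerturbation α W) (hα : 0 ≤ α) (hαβ : α ≤ β) (hy : 0 < y)
    (hz : 0 < z) : |W y z| ≤ (y ^ α + y ^ (-α)) * weight (-α) β z :=
  calc |W y z| = W y z := abs_of_nonneg (hW.nonneg y z hy hz)
    _ ≤ (y / z) ^ α + (z / y) ^ α := hW.le y z hy hz
    _ = y ^ α * z ^ (-α) + y ^ (-α) * z ^ α := by
        rw [div_rpow hy.le hz.le, div_rpow hz.le hy.le, rpow_neg hz.le, rpow_neg hy.le]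
        ring
    _ ≤ y ^ α * weight (-α) β z + y ^ (-α) * weight (-α) β z := by
        gcongr
        · exact rpow_le_weight le_rfl (by linarith) hz
        · exact rpow_le_weight (by linarith) hαβ hz
    _ = (y ^ α + y ^ (-α)) * weight (-α) β z := by ring

theorem ae_norm_mul_le (hW : IsPerturbation α W) (hα : 0 ≤ α) (hαβ : α ≤ β) (hy : 0 < y)
    (f : ℝ → ℝ) : ∀ᵐ z ∂volume.restrict (Ioi 0),
      ‖W y z * f z‖ ≤ (y ^ α + y ^ (-α)) * (|f z| * weight (-α) β z) := by
  filter_upwards [ae_restrict_mem measurableSet_Ioi] with z hz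
  rw [norm_mul, norm_eq_abs, norm_eq_abs, mul_comm |f z|, ← mul_assoc]
  exact mul_le_mul_of_nonneg_right (hW.abs_le_mul_weight hα hαβ hy hz) (abs_nonneg _)

theorem integrableOn_mul (hW : IsPerturbation α W) (hα : 0 ≤ α) (hαβ : α ≤ β)
    (hf : MemX (-α) β f) (hy : 0 < y) : IntegrableOn (fun z => W y z * f z) (Ioi 0) := by
  have hWy : AEStronglyMeasurable (W y) (volume.restrict (Ioi 0)) := by
    refine (hW.measurable.comp (measurable_prodMk_left (x := y))).aestronglyMeasurable.congr ?_
    filter_upwards [ae_restrict_mem measurableSet_Ioi] with z hz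
    exact indicator_of_mem (mk_mem_prod hy hz) _
  exact (hf.integrableOn_abs_mul_weight.const_mul _).mono' (hWy.mul hf.aestronglyMeasurable)
    (hW.ae_norm_mul_le hα hαβ hy f)

theorem abs_betaW_le (hW : IsPerturbation α W) (hα : 0 ≤ α) (hαβ : α ≤ β)
    (hf : MemX (-α) β f) (hy : 0 < y) :
    |betaW W f y| ≤ (y ^ α + y ^ (-α)) * Xnorm (-α) β f := by
  rw [Xnorm, ← integral_const_mul]
  exact norm_integral_le_of_norm_le (hf.integrableOn_abs_mul_weight.const_mul _)
    (hW.ae_norm_mul_le hα hαβ hy f)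

theorem betaW_sub (hW : IsPerturbation α W) (hα : 0 ≤ α) (hαβ : α ≤ β) (hf : MemX (-α) β f)
    (hg : MemX (-α) β g) (hy : 0 < y) :
    betaW W (fun z => f z - g z) y = betaW W f y - betaW W g y := by
  simp only [betaW, mul_sub]
  exact integral_sub (hW.integrableOn_mul hα hαβ hf hy) (hW.integrableOn_mul hα hαβ hg hy)

theorem aestronglyMeasurable_betaW (hW : IsPerturbation α W)
    (hf : AEStronglyMeasurable f (volume.restrict (Ioi 0))) :
    AEStronglyMeasurable (betaW W f) (volume.restrict (Ioi 0)) := by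
  have hquad : MeasurableSet (Ioi (0 : ℝ) ×ˢ Ioi (0 : ℝ)) :=
    measurableSet_Ioi.prod measurableSet_Ioi
  have hWm : AEStronglyMeasurable (Function.uncurry W)
      ((volume.restrict (Ioi 0)).prod (volume.restrict (Ioi 0))) := by
    rw [Measure.prod_restrict]
    exact (aestronglyMeasurable_indicator_iff hquad).1 hW.measurable.aestronglyMeasurable
  exact (hWm.mul hf.comp_snd).integral_prod_right'

end IsPerturbation

section ExponentialIntegrals

variable {a b x : ℝ}

theorem integrableOn_rpow_mul_exp_neg_Ioi (ha : a ≤ 0) (hx : 0 < x) :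
    IntegrableOn (fun y => y ^ a * exp (-y)) (Ioi x) := by
  refine ((integrableOn_exp_neg_Ioi x).const_mul (x ^ a)).mono' (by fun_prop) ?_
  filter_upwards [ae_restrict_mem measurableSet_Ioi] with y (hy : x < y)
  rw [norm_of_nonneg (mul_nonneg (rpow_nonneg (hx.trans hy).le a) (exp_pos _).le)]
  exact mul_le_mul_of_nonneg_right (rpow_le_rpow_of_nonpos hx hy.le ha) (exp_pos _).le

theorem integrableOn_rpow_add_rpow_mul_exp_neg_Ioi (ha : a ≤ 0) (hb : b ≤ 0) (hx : 0 < x) :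
    IntegrableOn (fun y => (y ^ a + y ^ b) * exp (-y)) (Ioi x) := by
  simp only [add_mul]
  exact (integrableOn_rpow_mul_exp_neg_Ioi ha hx).add (integrableOn_rpow_mul_exp_neg_Ioi hb hx)

theorem integral_Ioi_rpow_mul_exp_neg_le (ha : a ≤ 0) (hx : 0 < x) :
    ∫ y in Ioi x, y ^ a * exp (-y) ≤ x ^ a * exp (-x) := by
  rw [← integral_exp_neg_Ioi, ← integral_const_mul]
  refine setIntegral_mono_on (integrableOn_rpow_mul_exp_neg_Ioi ha hx)
    ((integrableOn_exp_neg_Ioi x).const_mul _) measurableSet_Ioi fun y hy => ?_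
  exact mul_le_mul_of_nonneg_right (rpow_le_rpow_of_nonpos hx (le_of_lt hy) ha) (exp_pos _).le

theorem integral_Ioi_rpow_mul_exp_neg_le_of_lt (ha : a < -1) (hx : 0 < x) :
    ∫ y in Ioi x, y ^ a * exp (-y) ≤ -x ^ (a + 1) / (a + 1) * exp (-x) := by
  rw [← integral_Ioi_rpow_of_lt ha hx, ← integral_mul_const]
  refine setIntegral_mono_on (integrableOn_rpow_mul_exp_neg_Ioi (by linarith) hx)
    ((integrableOn_Ioi_rpow_of_lt ha hx).mul_const _) measurableSet_Ioi fun y (hy : x < y) => ?_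
  have : 0 < y := hx.trans hy
  gcongr

theorem integral_Ioi_rpow_sub_one_mul_exp_neg_le {α : ℝ} (hα : α ∈ Icc (0 : ℝ) 1) (hx : 0 < x) :
    ∫ y in Ioi x, y ^ (α - 1) * exp (-y) ≤
      exp (-x) + ∫ y in Ioi x, y ^ (-α - 1) * exp (-y) := by
  have hint := integrableOn_rpow_mul_exp_neg_Ioi (a := -α - 1) (by linarith [hα.1]) hx
  rw [← integral_exp_neg_Ioi, ← integral_add (integrableOn_exp_neg_Ioi x) hint]
  refine setIntegral_mono_on
    (integrableOn_rpow_mul_exp_neg_Ioi (by linarith [hα.2]) hx)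
    ((integrableOn_exp_neg_Ioi x).add hint) measurableSet_Ioi fun y (hy : x < y) => ?_
  have hpow : y ^ (α - 1) ≤ 1 + y ^ (-α - 1) := by
    have h := rpow_le_one_add_rpow (inv_pos.2 (hx.trans hy)) (sub_nonneg.2 hα.2)
      (show 1 - α ≤ 1 + α by linarith [hα.1])
    rw [← rpow_neg_eq_inv_rpow, ← rpow_neg_eq_inv_rpow] at h
    convert h using 3 <;> ring
  calc y ^ (α - 1) * exp (-y) ≤ (1 + y ^ (-α - 1)) * exp (-y) := by gcongr
    _ = exp (-y) + y ^ (-α - 1) * exp (-y) := by ring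

theorem integral_Ioi_rpow_add_rpow_mul_exp_neg_le {α : ℝ} (hα : α ∈ Ioc (0 : ℝ) 1) (hx : 0 < x) :
    ∫ y in Ioi x, (y ^ (α - 1) + y ^ (-α - 1)) * exp (-y) ≤
      (2 / α + 1) * weight (-α) (α - 1) x * exp (-x) := by
  obtain ⟨hα0, hα1⟩ := hα
  simp only [add_mul _ _ (exp _)]
  rw [integral_add (integrableOn_rpow_mul_exp_neg_Ioi (by linarith) hx)
    (integrableOn_rpow_mul_exp_neg_Ioi (by linarith) hx)]
  rcases le_or_gt x 1 with hx1 | hx1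
  · have hone : exp (-x) ≤ x ^ (-α) * exp (-x) :=
      le_mul_of_one_le_left (exp_pos _).le
        (one_le_rpow_of_pos_of_le_one_of_nonpos hx hx1 (by linarith))
    have hsing : ∫ y in Ioi x, y ^ (-α - 1) * exp (-y) ≤ x ^ (-α) / α * exp (-x) := by
      have h := integral_Ioi_rpow_mul_exp_neg_le_of_lt (a := -α - 1) (by linarith) hx
      rwa [sub_add_cancel, neg_div_neg_eq] at h
    have hreg := integral_Ioi_rpow_sub_one_mul_exp_neg_le ⟨hα0.le, hα1⟩ hx
    rw [weight, if_pos hx1]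
    calc _ ≤ x ^ (-α) * exp (-x) + 2 * (x ^ (-α) / α * exp (-x)) := by linarith
      _ = (2 / α + 1) * x ^ (-α) * exp (-x) := by ring
  · have hpow : x ^ (-α - 1) * exp (-x) ≤ x ^ (α - 1) * exp (-x) := by
      gcongr
      · exact hx1.le
      · linarith
    have hconst : 2 ≤ 2 / α + 1 := by linarith [(le_div_iff₀ hα0).2 (by linarith : 2 * α ≤ 2)]
    rw [weight, if_neg hx1.not_ge]
    calc _ ≤ 2 * x ^ (α - 1) * exp (-x) := by
          linarith [integral_Ioi_rpow_mul_exp_neg_le (a := α - 1) (by linarith) hx,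
            integral_Ioi_rpow_mul_exp_neg_le (a := -α - 1) (by linarith) hx]
      _ ≤ (2 / α + 1) * x ^ (α - 1) * exp (-x) := by gcongr

end ExponentialIntegrals

namespace IsPerturbation

variable {α β ε : ℝ} {W : ℝ → ℝ → ℝ} {f g : ℝ → ℝ} {x y : ℝ}

theorem abs_betaW_div_mul_exp_neg_le (hW : IsPerturbation α W) (hα : 0 ≤ α) (hαβ : α ≤ β)
    (hf : MemX (-α) β f) (hy : 0 < y) :
    |betaW W f y / y * exp (-y)| ≤
      (y ^ (α - 1) + y ^ (-α - 1)) * exp (-y) * Xnorm (-α) β f :=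
  calc |betaW W f y / y * exp (-y)| = |betaW W f y| / y * exp (-y) := by
        rw [abs_mul, abs_div, abs_of_pos hy, abs_of_pos (exp_pos _)]
    _ ≤ (y ^ α + y ^ (-α)) * Xnorm (-α) β f / y * exp (-y) := by
        gcongr
        exact hW.abs_betaW_le hα hαβ hf hy
    _ = (y ^ (α - 1) + y ^ (-α - 1)) * exp (-y) * Xnorm (-α) β f := by
        rw [rpow_sub_one hy.ne', rpow_sub_one hy.ne']
        ring

theorem integrableOn_betaW_div_mul_exp_neg (hW : IsPerturbation α W) (hα : α ∈ Icc (0 : ℝ) 1)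
    (hαβ : α ≤ β) (hf : MemX (-α) β f) (hx : 0 < x) :
    IntegrableOn (fun y => betaW W f y / y * exp (-y)) (Ioi x) := by
  have hβm := (hW.aestronglyMeasurable_betaW hf.aestronglyMeasurable).mono_measure
    (Measure.restrict_mono (Ioi_subset_Ioi hx.le) le_rfl)
  have hint := integrableOn_rpow_add_rpow_mul_exp_neg_Ioi (a := α - 1) (b := -α - 1)
    (by linarith [hα.2]) (by linarith [hα.1]) hx
  refine (hint.mul_const (Xnorm (-α) β f)).mono'
    ((hβm.div₀ aestronglyMeasurable_id).mul (by fun_prop)) ?_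
  filter_upwards [ae_restrict_mem measurableSet_Ioi] with y hy
  exact hW.abs_betaW_div_mul_exp_neg_le hα.1 hαβ hf (hx.trans hy)

theorem Phi_sub (hW : IsPerturbation α W) (hα : α ∈ Icc (0 : ℝ) 1) (hαβ : α ≤ β)
    (hf : MemX (-α) β f) (hg : MemX (-α) β g) (hx : 0 < x) :
    Phi ε W f x - Phi ε W g x = Phi ε W (fun y => f y - g y) x := by
  rw [Phi, Phi, ← mul_sub, ← integral_sub (hW.integrableOn_betaW_div_mul_exp_neg hα hαβ hf hx)
    (hW.integrableOn_betaW_div_mul_exp_neg hα hαβ hg hx), Phi]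
  congr 1
  refine setIntegral_congr_fun measurableSet_Ioi fun y hy => ?_
  rw [hW.betaW_sub hα.1 hαβ hf hg (hx.trans hy), sub_div, sub_mul]

theorem abs_Phi_le (hW : IsPerturbation α W) (hα : α ∈ Ioc (0 : ℝ) 1) (hαβ : α ≤ β)
    (hε : 0 ≤ ε) (hf : MemX (-α) β f) (hx : 0 < x) :
    |Phi ε W f x| ≤
      (2 / α + 1) * ε * weight (-α) (α - 1) x * exp (-x) * Xnorm (-α) β f := by
  have hint := integrableOn_rpow_add_rpow_mul_exp_neg_Ioi (a := α - 1) (b := -α - 1)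
    (by linarith [hα.2]) (by linarith [hα.1]) hx
  have hnorm : |∫ y in Ioi x, betaW W f y / y * exp (-y)| ≤
      (∫ y in Ioi x, (y ^ (α - 1) + y ^ (-α - 1)) * exp (-y)) * Xnorm (-α) β f := by
    rw [← norm_eq_abs, ← integral_mul_const]
    refine norm_integral_le_of_norm_le (hint.mul_const (Xnorm (-α) β f)) ?_
    filter_upwards [ae_restrict_mem measurableSet_Ioi] with y hy
    exact hW.abs_betaW_div_mul_exp_neg_le hα.1.le hαβ hf (hx.trans hy)
  calc |Phi ε W f x| = ε * |∫ y in Ioi x, betaW W f y / y * exp (-y)| := by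
        rw [Phi, abs_mul, abs_of_nonneg hε]
    _ ≤ ε * ((2 / α + 1) * weight (-α) (α - 1) x * exp (-x) * Xnorm (-α) β f) := by
        refine mul_le_mul_of_nonneg_left (hnorm.trans ?_) hε
        exact mul_le_mul_of_nonneg_right (integral_Ioi_rpow_add_rpow_mul_exp_neg_le hα hx)
          (Xnorm_nonneg _ _ _)
    _ = (2 / α + 1) * ε * weight (-α) (α - 1) x * exp (-x) * Xnorm (-α) β f := by ring

end IsPerturbation

theorem stmt16_general {α β ε : ℝ} (hα : α ∈ Ioo (0 : ℝ) 1) (hαβ : α ≤ β) {W : ℝ → ℝ → ℝ}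
    (hW : IsPerturbation α W) (hε : 0 ≤ ε) (hε' : ε ≤ couplingThreshold α) {φ₁ φ₂ : ℝ → ℝ}
    (h₁ : IsProfile (Kern ε W) φ₁) (hn₁ : IsNormalised φ₁)
    (h₂ : IsProfile (Kern ε W) φ₂) (hn₂ : IsNormalised φ₂) {x : ℝ} (hx : 0 < x) :
    |Phi ε W φ₁ x - Phi ε W φ₂ x| ≤
      (2 / α + 1) * ε * weight (-α) (α - 1) x * exp (-x) *
        Xnorm (-α) β (fun y => φ₁ y - φ₂ y) := by
  have hk := hW.kernelBounds hε
  have hX₁ : MemX (-α) β φ₁ := h₁.memX hn₁ hk ⟨hα.1.le, hα.2⟩ hε hε'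
  have hX₂ : MemX (-α) β φ₂ := h₂.memX hn₂ hk ⟨hα.1.le, hα.2⟩ hε hε'
  rw [hW.Phi_sub ⟨hα.1.le, hα.2.le⟩ hαβ hX₁ hX₂ hx]
  exact hW.abs_Phi_le ⟨hα.1, hα.2.le⟩ hαβ hε (hX₁.sub hX₂) hx

theorem stmt16 (α β : ℝ) (hα : α ∈ Ioo (0:ℝ) 1) (hβ : β ∈ Ioo (1 + α) 2)
    (W : ℝ → ℝ → ℝ) (hW : GoodW α W) :
    ∃ εstar > (0:ℝ), ∃ C > (0:ℝ), ∀ ε : ℝ, 0 < ε → ε ≤ εstar →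
      ∀ φ₁ φ₂ : ℝ → ℝ, IsProfile (Kern ε W) φ₁ → IsNormalised φ₁ →
        IsProfile (Kern ε W) φ₂ → IsNormalised φ₂ →
        ∀ x : ℝ, 0 < x →
          |Phi ε W φ₁ x - Phi ε W φ₂ x| ≤
            C * ε * weight (-α) (α - 1) x * exp (-x) *
              Xnorm (-α) β (fun y => φ₁ y - φ₂ y) :=
  ⟨couplingThreshold α, couplingThreshold_pos hα.2, 2 / α + 1, by linarith [div_pos two_pos hα.1],
    fun _ hε hε' _ _ h₁ hn₁ h₂ hn₂ _ hx =>
      stmt16_general hα (by linarith [hβ.1]) hW.isPerturbation hε.le hε' h₁ hn₁ h₂ hn₂ hx⟩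
end

section
/- Assume α ∈ [1/2, 1) and that W additionally satisfies W(x,y) ≥ c_*((x/y)^α + (y/x)^α) for some c_* > 0 and all x,y > 0. Let a ∈ (0, 1+α) and δ ∈ (0, min{1+α−a, α}). Then there exists ε_* > 0 and for each b ∈ ℝ a constant C > 0 such that for every ε ∈ (0, ε_*], every normalised self-similar profile φ_ε for K_ε and every z > 0: ∫₀^z ω_{−a,b}(x) e^{−x} e^{−(Φ[φ_ε](x) − Φ[φ_ε](z))} dx ≤ C ε^{(δ−α)/α} ω_{1+α−a−δ,0}(z). -/
open MeasureTheory Real Set Filter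

/-
Pairing the profile equation with `x ^ (p - 2)` gives moment identities. Because `K` is bounded
below by a multiple of `(z / y) ^ α`, finiteness of the `p`-th moment forces that of the moment of
order `p - α`, so all moments of order at most `1` are finite; the identities for `p = 0` and
`p = 1` then bound the `α`-th moment below, uniformly in small `ε`. Hence `β_W[φ](y) ≥ m y ^ (-α)`
and `Φ(x) - Φ(z) ≥ ε κ (x ^ (-α) - z ^ (-α)) / α` for `x ≤ z ≤ 1`, with `m` and `κ` independent of
`ε` and `φ`. Set `θ = 1 - δ / α`. By Bernoulli's inequality
`(x ^ (-α) - z ^ (-α)) / α ≥ x ^ (-α) (1 - x / z)`, and `exp (-u) ≤ u ^ (-θ)`, so for `z ≤ 1` the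
integral is at most `(ε κ) ^ (-θ) z ^ (1 + α θ - a)` times a constant, a value of the Beta function.
Since `Φ` is antitone, the integrand is at most `x ^ b exp (-x)` for `x > 1`.
-/

open scoped ENNReal

namespace Coagulation

section Moments

/-- The `p`-th moment of a size distribution `ν` on `(0, ∞)`, valued in `[0, ∞]` so that it makes
sense before it is known to be finite. -/
noncomputable def sizeMoment (ν : Measure ℝ) (p : ℝ) : ℝ≥0∞ :=
  ∫⁻ x, ENNReal.ofReal (x ^ p) ∂ν

theorem rpow_le_rpow_sub_mul_rpow {q t r x : ℝ} (hr : 0 < r) (hrx : r ≤ x) (hqt : q ≤ t) :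
    x ^ q ≤ r ^ (q - t) * x ^ t := by
  have hx : 0 < x := hr.trans_le hrx
  calc x ^ q = x ^ (q - t) * x ^ t := by rw [← rpow_add hx, sub_add_cancel]
    _ ≤ r ^ (q - t) * x ^ t := by
      gcongr ?_ * _
      exact rpow_le_rpow_of_nonpos hr hrx (sub_nonpos.2 hqt)

theorem ae_measure_Ioi_ne_zero {X : Type*} [TopologicalSpace X] [LinearOrder X]
    [OrderClosedTopology X] [SecondCountableTopology X] [MeasurableSpace X] (μ : Measure X)
    [NullSingletonClass μ] : ∀ᵐ r ∂μ, μ (Ioi r) ≠ 0 := by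
  refine measure_null_of_locally_null _ fun x hx => ?_
  have hx : μ (Ioi x) = 0 := not_not.1 hx
  by_cases h : ∃ y < x, μ (Ioi y) = 0
  · obtain ⟨y, hyx, hy⟩ := h
    exact ⟨Ioi y, mem_nhdsWithin_of_mem_nhds (Ioi_mem_nhds hyx), hy⟩
  · push Not at h
    exact ⟨Ici x, mem_of_superset self_mem_nhdsWithin
      fun y hy => not_lt.1 fun hyx => hy (h y hyx), (measure_congr Ioi_ae_eq_Ici).symm.trans hx⟩

variable {ν : Measure ℝ} {p q r s t : ℝ}

theorem sizeMoment_le_add (hν : ∀ᵐ x ∂ν, 0 < x) (hsq : s ≤ q) (hqt : q ≤ t) :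
    sizeMoment ν q ≤ sizeMoment ν s + sizeMoment ν t := by
  rw [sizeMoment, sizeMoment, sizeMoment, ← lintegral_add_left (by fun_prop)]
  refine lintegral_mono_ae ?_
  filter_upwards [hν] with x hx
  rw [← ENNReal.ofReal_add (by positivity) (by positivity)]
  gcongr
  rcases le_total x 1 with h | h
  · exact le_add_of_le_of_nonneg (rpow_le_rpow_of_exponent_ge hx h hsq) (by positivity)
  · exact le_add_of_nonneg_of_le (by positivity) (rpow_le_rpow_of_exponent_le h hqt)

theorem integrable_rpow (hν : ∀ᵐ x ∂ν, 0 < x) (hp : sizeMoment ν p ≠ ∞) :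
    Integrable (fun x => x ^ p) ν :=
  (lintegral_ofReal_ne_top_iff_integrable (by fun_prop)
    (hν.mono fun x hx => rpow_nonneg hx.le p)).1 hp

theorem ofReal_integral_rpow (hν : ∀ᵐ x ∂ν, 0 < x) (hp : sizeMoment ν p ≠ ∞) :
    ENNReal.ofReal (∫ x, x ^ p ∂ν) = sizeMoment ν p :=
  ofReal_integral_eq_lintegral_ofReal (integrable_rpow hν hp)
    (hν.mono fun _ hx => rpow_nonneg hx.le p)

theorem integrableOn_Ici_rpow (hν : ∀ᵐ x ∂ν, 0 < x) (hr : 0 < r) (hqt : q ≤ t)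
    (ht : sizeMoment ν t ≠ ∞) : IntegrableOn (fun x => x ^ q) (Ici r) ν := by
  refine ((integrable_rpow hν ht).const_mul (r ^ (q - t))).integrableOn.mono'
    (by fun_prop : Measurable fun x : ℝ => x ^ q).aestronglyMeasurable
    (ae_restrict_of_forall_mem measurableSet_Ici fun _ hx => ?_)
  rw [norm_of_nonneg (rpow_nonneg (hr.le.trans hx) q)]
  exact rpow_le_rpow_sub_mul_rpow hr hx hqt

theorem sizeMoment_ne_top_of_setLIntegral_Iio (hν : ∀ᵐ x ∂ν, 0 < x) (hr : 0 < r) (hqt : q ≤ t)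
    (ht : sizeMoment ν t ≠ ∞) (hq : ∫⁻ x in Iio r, ENNReal.ofReal (x ^ q) ∂ν ≠ ∞) :
    sizeMoment ν q ≠ ∞ := by
  rw [sizeMoment, ← lintegral_add_compl _ measurableSet_Iio, compl_Iio]
  exact ENNReal.add_ne_top.2
    ⟨hq, (integrableOn_Ici_rpow hν hr hqt ht).setLIntegral_lt_top.ne⟩

theorem ae_prod_pos (hν : ∀ᵐ x ∂ν, 0 < x) : ∀ᵐ w ∂ν.prod ν, 0 < w.1 ∧ 0 < w.2 :=
  (Measure.quasiMeasurePreserving_fst.ae hν).and (Measure.quasiMeasurePreserving_snd.ae hν)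

variable [SFinite ν]

theorem lintegral_prod_const_mul_rpow {c : ℝ} (hν : ∀ᵐ x ∂ν, 0 < x) (hc : 0 ≤ c) (p q : ℝ) :
    ∫⁻ w, ENNReal.ofReal (c * (w.1 ^ p * w.2 ^ q)) ∂ν.prod ν =
      ENNReal.ofReal c * (sizeMoment ν p * sizeMoment ν q) := by
  rw [sizeMoment, sizeMoment, ← lintegral_prod_mul (by fun_prop) (by fun_prop),
    ← lintegral_const_mul _ (by fun_prop)]
  refine lintegral_congr_ae ?_
  filter_upwards [ae_prod_pos hν] with w ⟨hy, _⟩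
  rw [ENNReal.ofReal_mul hc, ENNReal.ofReal_mul (rpow_nonneg hy.le p)]

theorem sizeMoment_ne_top_of_le {H : ℝ × ℝ → ℝ} {D : ℝ} (hν : ∀ᵐ x ∂ν, 0 < x) (hr : 0 < r)
    (hνr : ν (Ioi r) ≠ 0) (hqt : q ≤ t) (ht : sizeMoment ν t ≠ ∞) (hD : 0 < D)
    (hH : ∀ y z, 0 < y → y < r → r < z → D * y ^ q ≤ H (y, z))
    (hfin : ∫⁻ w in Iio r ×ˢ Ioi r, ENNReal.ofReal (H w) ∂ν.prod ν ≠ ∞) :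
    sizeMoment ν q ≠ ∞ := by
  refine sizeMoment_ne_top_of_setLIntegral_Iio hν hr hqt ht fun htop => hfin ?_
  have hmass : ENNReal.ofReal D * (∞ * ν (Ioi r)) = ∞ := by
    rw [ENNReal.top_mul hνr, ENNReal.mul_top (ENNReal.ofReal_pos.2 hD).ne']
  rw [eq_top_iff, ← hmass, ← htop, ← setLIntegral_one, ← Measure.prod_restrict,
    ← lintegral_prod_mul (by fun_prop) (by fun_prop), ← lintegral_const_mul _ (by fun_prop),
    Measure.prod_restrict]
  refine setLIntegral_mono_ae' (measurableSet_Iio.prod measurableSet_Ioi) ?_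
  filter_upwards [ae_prod_pos hν] with w hw hwr
  rw [mul_one, ← ENNReal.ofReal_mul hD.le]
  exact ENNReal.ofReal_le_ofReal (hH w.1 w.2 hw.1 hwr.1 hwr.2)

end Moments

section Flux

/-- The mass `y * K y z` that mergers of a pair `(y, z)` of sizes at rate `K y z` carry from below
size `x` to above it; this happens exactly if `y < x < y + z`. -/
noncomputable def pairFlux (K : ℝ → ℝ → ℝ) (w : ℝ × ℝ) : ℝ → ℝ≥0∞ :=
  (Ioo w.1 (w.1 + w.2)).indicator fun _ => ENNReal.ofReal (w.1 * K w.1 w.2)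

/-- The total mass flux through size `x` for the size distribution `ν` and the kernel `K`, valued
in `[0, ∞]`. Self-similar profiles `φ` balance it with `x ^ 2 * φ x`. -/
noncomputable def coagFlux (ν : Measure ℝ) (K : ℝ → ℝ → ℝ) (x : ℝ) : ℝ≥0∞ :=
  ∫⁻ w, pairFlux K w x ∂ν.prod ν

variable {ν : Measure ℝ} {K : ℝ → ℝ → ℝ} {x : ℝ}

theorem measurableSet_mem_Ioo_add :
    MeasurableSet {p : ℝ × ℝ × ℝ | p.1 ∈ Ioo p.2.1 (p.2.1 + p.2.2)} := by
  simp only [mem_Ioo, ofPred_and]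
  exact (measurableSet_lt (by fun_prop) (by fun_prop)).inter
    (measurableSet_lt (by fun_prop) (by fun_prop))

theorem aemeasurable_pairFlux (hK : AEMeasurable (Function.uncurry K) (ν.prod ν)) (x : ℝ) :
    AEMeasurable (fun w => pairFlux K w x) (ν.prod ν) :=
  (measurable_fst.aemeasurable.mul hK).ennreal_ofReal.indicator
    (measurableSet_mem_Ioo_add.preimage (measurable_prodMk_left (x := x)))

theorem aemeasurable_uncurry_pairFlux (μ : Measure ℝ) [SFinite μ]
    (hK : AEMeasurable (Function.uncurry K) (ν.prod ν)) :
    AEMeasurable (fun p : ℝ × ℝ × ℝ => pairFlux K p.2 p.1) (μ.prod (ν.prod ν)) :=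
  (measurable_fst.aemeasurable.mul hK).ennreal_ofReal.comp_snd.indicator measurableSet_mem_Ioo_add

theorem lintegral_pairFlux_eq_ofReal {y : ℝ} (hy : y ∈ Ioo 0 x)
    (hK₀ : ∀ z, 0 < z → 0 ≤ K y z) (hint : IntegrableOn (fun z => y * K y z) (Ioi (x - y)) ν) :
    ∫⁻ z, pairFlux K (y, z) x ∂ν = ENNReal.ofReal (∫ z in Ioi (x - y), y * K y z ∂ν) := by
  rw [ofReal_integral_eq_lintegral_ofReal hint (ae_restrict_of_forall_mem measurableSet_Ioi
      fun z hz => mul_nonneg hy.1.le (hK₀ z ((sub_pos.2 hy.2).trans hz))),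
    ← lintegral_indicator measurableSet_Ioi]
  refine lintegral_congr fun z => ?_
  simp only [pairFlux, indicator, mem_Ioo, mem_Ioi, hy.2, true_and, sub_lt_iff_lt_add']

theorem intervalIntegrable_rpow_add {y z : ℝ} (hy : 0 < y) (hz : 0 ≤ z) (q : ℝ) :
    IntervalIntegrable (fun x => x ^ q) volume y (y + z) :=
  intervalIntegral.intervalIntegrable_rpow (Or.inr (notMem_uIcc_of_lt hy (by linarith)))

variable [SFinite ν]

theorem aemeasurable_coagFlux (μ : Measure ℝ) [SFinite μ]
    (hK : AEMeasurable (Function.uncurry K) (ν.prod ν)) : AEMeasurable (coagFlux ν K) μ :=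
  (aemeasurable_uncurry_pairFlux μ hK).lintegral_prod_right'

theorem lintegral_mul_coagFlux (μ : Measure ℝ) [SFinite μ] {g : ℝ → ℝ≥0∞} (hg : Measurable g)
    (hK : AEMeasurable (Function.uncurry K) (ν.prod ν)) :
    ∫⁻ x, g x * coagFlux ν K x ∂μ =
      ∫⁻ w, ENNReal.ofReal (w.1 * K w.1 w.2) * ∫⁻ x in Ioo w.1 (w.1 + w.2), g x ∂μ ∂ν.prod ν := by
  have hF := aemeasurable_uncurry_pairFlux μ hK
  calc ∫⁻ x, g x * coagFlux ν K x ∂μ = ∫⁻ x, ∫⁻ w, g x * pairFlux K w x ∂ν.prod ν ∂μ :=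
        lintegral_congr fun x => (lintegral_const_mul'' _ (aemeasurable_pairFlux hK x)).symm
    _ = ∫⁻ w, ∫⁻ x, g x * pairFlux K w x ∂μ ∂ν.prod ν :=
        lintegral_lintegral_swap ((hg.comp measurable_fst).aemeasurable.mul hF)
    _ = _ := by
        refine lintegral_congr fun w => ?_
        rw [← lintegral_const_mul _ hg, ← lintegral_indicator measurableSet_Ioo]
        refine lintegral_congr fun x => ?_
        by_cases hx : x ∈ Ioo w.1 (w.1 + w.2)
        · simp only [pairFlux, indicator_of_mem hx, mul_comm]
        · simp only [pairFlux, indicator_of_notMem hx, mul_zero]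

theorem lintegral_rpow_mul_coagFlux (hν : ∀ᵐ x ∂ν, 0 < x)
    (hK : AEMeasurable (Function.uncurry K) (ν.prod ν)) (q : ℝ) :
    ∫⁻ x in Ioi 0, ENNReal.ofReal (x ^ q) * coagFlux ν K x =
      ∫⁻ w, ENNReal.ofReal (w.1 * K w.1 w.2 * ∫ x in w.1..(w.1 + w.2), x ^ q) ∂ν.prod ν := by
  rw [lintegral_mul_coagFlux _ (by fun_prop) hK]
  refine lintegral_congr_ae ?_
  filter_upwards [ae_prod_pos hν] with w ⟨hy, hz⟩
  have hyz : w.1 ≤ w.1 + w.2 := by linarith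
  have hpos : ∀ x ∈ Ioc w.1 (w.1 + w.2), 0 ≤ x ^ q := fun x hx => rpow_nonneg (hy.trans hx.1).le q
  have hint : IntegrableOn (fun x => x ^ q) (Ioc w.1 (w.1 + w.2)) :=
    (intervalIntegrable_iff_integrableOn_Ioc_of_le hyz).1
      (intervalIntegrable_rpow_add hy hz.le q)
  have hsub : Ioo w.1 (w.1 + w.2) ⊆ Ioi 0 := fun x hx => hy.trans hx.1
  rw [intervalIntegral.integral_of_le hyz,
    ENNReal.ofReal_mul' (setIntegral_nonneg measurableSet_Ioc hpos),
    ofReal_integral_eq_lintegral_ofReal hint (ae_restrict_of_forall_mem measurableSet_Ioc hpos),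
    Measure.restrict_restrict measurableSet_Ioo, inter_eq_left.2 hsub, restrict_Ioo_eq_restrict_Ioc]

theorem integral_eq_toReal_coagFlux (hν : ∀ᵐ x ∂ν, 0 < x)
    (hK : AEMeasurable (Function.uncurry K) (ν.prod ν))
    (hK₀ : ∀ y z, 0 < y → 0 < z → 0 ≤ K y z)
    (hint : ∀ᵐ y ∂ν, y ∈ Ioo 0 x → IntegrableOn (fun z => y * K y z) (Ioi (x - y)) ν) :
    ∫ y in Ioo 0 x, ∫ z in Ioi (x - y), y * K y z ∂ν ∂ν = (coagFlux ν K x).toReal := by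
  have hm := aemeasurable_pairFlux hK x
  have houter : coagFlux ν K x = ∫⁻ y in Ioo 0 x, ∫⁻ z, pairFlux K (y, z) x ∂ν ∂ν := by
    rw [coagFlux, lintegral_prod _ hm, ← lintegral_indicator measurableSet_Ioo]
    refine lintegral_congr_ae ?_
    filter_upwards [hν] with y hy
    by_cases hyx : y < x <;> simp [pairFlux, hy, hyx]
  rw [houter, ← integral_toReal hm.lintegral_prod_right'.restrict]
  · refine setIntegral_congr_ae measurableSet_Ioo ?_
    filter_upwards [hint] with y hy hyx
    rw [lintegral_pairFlux_eq_ofReal hyx (fun z => hK₀ y z hyx.1) (hy hyx), ENNReal.toReal_ofReal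
      (setIntegral_nonneg measurableSet_Ioi fun z hz =>
        mul_nonneg hyx.1.le (hK₀ y z hyx.1 ((sub_pos.2 hyx.2).trans hz)))]
  · refine (ae_restrict_iff' measurableSet_Ioo).2 ?_
    filter_upwards [hint] with y hy hyx
    rw [lintegral_pairFlux_eq_ofReal hyx (fun z => hK₀ y z hyx.1) (hy hyx)]
    exact ENNReal.ofReal_lt_top

end Flux

section KernelEstimates

variable {q s α ε k y z : ℝ}

theorem div_rpow_eq_mul_rpow_neg (hy : 0 ≤ y) (hz : 0 ≤ z) (α : ℝ) :
    (y / z) ^ α = y ^ α * z ^ (-α) := by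
  rw [div_rpow hy hz, rpow_neg hz, div_eq_mul_inv]

theorem integral_rpow_le (hs : 0 < s) (hs₁ : s ≤ 1) (hqs : q + 1 ≤ s) (hy : 0 < y) (hz : 0 ≤ z) :
    ∫ x in y..(y + z), x ^ q ≤ y ^ (q + 1 - s) * (z ^ s / s) := by
  have hyz : y ≤ y + z := by linarith
  calc ∫ x in y..(y + z), x ^ q ≤ ∫ x in y..(y + z), y ^ (q - (s - 1)) * x ^ (s - 1) :=
        intervalIntegral.integral_mono_on hyz (intervalIntegrable_rpow_add hy hz q)
          ((intervalIntegrable_rpow_add hy hz (s - 1)).const_mul _)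
          fun x hx => rpow_le_rpow_sub_mul_rpow hy hx.1 (by linarith)
    _ = y ^ (q + 1 - s) * (((y + z) ^ s - y ^ s) / s) := by
        rw [intervalIntegral.integral_const_mul, integral_rpow (Or.inl (by linarith)),
          sub_add_cancel, sub_sub_eq_add_sub]
    _ ≤ y ^ (q + 1 - s) * (z ^ s / s) := by
        gcongr
        exact sub_le_iff_le_add'.2 (rpow_add_le_add_rpow hy.le hz hs.le hs₁)

theorem le_integral_rpow (hq : q ≤ 0) (hy : 0 < y) (hyz : y ≤ z) :
    2 ^ q * y ^ (q + 1) ≤ ∫ x in y..(y + z), x ^ q := by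
  calc 2 ^ q * y ^ (q + 1) = ∫ _ in y..(y + y), (y + y) ^ q := by
        rw [intervalIntegral.integral_const, ← two_mul, mul_rpow zero_le_two hy.le,
          rpow_add_one hy.ne', smul_eq_mul]
        ring
    _ ≤ ∫ x in y..(y + y), x ^ q :=
        intervalIntegral.integral_mono_on (by linarith) intervalIntegrable_const
          (intervalIntegrable_rpow_add hy hy.le q)
          fun x hx => rpow_le_rpow_of_nonpos (hy.trans_le hx.1) hx.2 hq
    _ ≤ ∫ x in y..(y + z), x ^ q :=
        intervalIntegral.integral_mono_interval le_rfl (by linarith) (by linarith)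
          (ae_restrict_of_forall_mem measurableSet_Ioc
            fun x hx => rpow_nonneg (hy.trans hx.1).le q)
          (intervalIntegrable_rpow_add hy (hy.le.trans hyz) q)

theorem mul_kernel_mul_integral_rpow_le (hα₀ : 0 ≤ α) (hα₁ : α < 1) (hε : 0 ≤ ε) (hs : 0 < s)
    (hs₁ : s ≤ 1) (hqs : q + 1 ≤ s) (hq : q ≤ -α) (hy : 0 < y) (hz : 0 < z)
    (hk : k ≤ 2 + ε * ((y / z) ^ α + (z / y) ^ α)) :
    y * k * ∫ x in y..(y + z), x ^ q ≤
      (2 / (1 - α) + ε) * (y ^ (q + 1 + α) * z ^ (1 - α)) +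
        ε / s * (y ^ (q + 2 - s - α) * z ^ (s + α)) := by
  set I : ℝ := ∫ x in y..(y + z), x ^ q
  have hI (t : ℝ) (ht : 0 < t) (ht₁ : t ≤ 1) (hqt : q + 1 ≤ t) :
      I ≤ y ^ (q + 1 - t) * (z ^ t / t) := integral_rpow_le ht ht₁ hqt hy hz.le
  have hI₀ : 0 ≤ I := intervalIntegral.integral_nonneg (by linarith)
    fun x hx => rpow_nonneg (hy.le.trans hx.1) q
  have hα' : 0 < 1 - α := by linarith
  calc y * k * I ≤ y * (2 + ε * ((y / z) ^ α + (z / y) ^ α)) * I := by gcongr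
    _ = 2 * y * I + ε * (y * (y / z) ^ α) * I + ε * (y * (z / y) ^ α) * I := by ring
    _ ≤ 2 * y * (y ^ (q + 1 - (1 - α)) * (z ^ (1 - α) / (1 - α))) +
          ε * (y * (y / z) ^ α) * (y ^ (q + 1 - 1) * (z ^ (1 : ℝ) / 1)) +
          ε * (y * (z / y) ^ α) * (y ^ (q + 1 - s) * (z ^ s / s)) := by
        gcongr
        · exact hI _ hα' (by linarith) (by linarith)
        · exact hI 1 one_pos le_rfl (by linarith)
        · exact hI s hs hs₁ hqs
    _ = _ := by
        simp only [div_rpow_eq_mul_rpow_neg, hy.le, hz.le, rpow_add hy, rpow_sub hy, rpow_neg,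
          rpow_add hz, rpow_sub hz, rpow_one, rpow_two]
        field_simp

variable {ν : Measure ℝ} [SFinite ν] {K : ℝ → ℝ → ℝ}

theorem lintegral_kernel_mul_integral_rpow_le (hν : ∀ᵐ x ∂ν, 0 < x) (hα₀ : 0 ≤ α) (hα₁ : α < 1)
    (hε : 0 ≤ ε) (hs : 0 < s) (hs₁ : s ≤ 1) (hqs : q + 1 ≤ s) (hq : q ≤ -α)
    (hK : ∀ y z, 0 < y → 0 < z → K y z ≤ 2 + ε * ((y / z) ^ α + (z / y) ^ α)) :
    ∫⁻ w, ENNReal.ofReal (w.1 * K w.1 w.2 * ∫ x in w.1..(w.1 + w.2), x ^ q) ∂ν.prod ν ≤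
      ENNReal.ofReal (2 / (1 - α) + ε) * (sizeMoment ν (q + 1 + α) * sizeMoment ν (1 - α)) +
        ENNReal.ofReal (ε / s) * (sizeMoment ν (q + 2 - s - α) * sizeMoment ν (s + α)) := by
  have hA : 0 ≤ 2 / (1 - α) + ε := add_nonneg (div_nonneg zero_le_two (by linarith)) hε
  have hB : 0 ≤ ε / s := by positivity
  rw [← lintegral_prod_const_mul_rpow hν hA, ← lintegral_prod_const_mul_rpow hν hB,
    ← lintegral_add_left (by fun_prop)]
  refine lintegral_mono_ae ?_
  filter_upwards [ae_prod_pos hν] with w ⟨hy, hz⟩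
  rw [← ENNReal.ofReal_add (by positivity) (by positivity)]
  exact ENNReal.ofReal_le_ofReal
    (mul_kernel_mul_integral_rpow_le hα₀ hα₁ hε hs hs₁ hqs hq hy hz (hK _ _ hy hz))

end KernelEstimates

section MomentBounds

/-- The moment identities of the self-similar equation, namely its pairing with `x ^ (p - 2)`:
`∫ x ^ p dν = ∫∫ y K(y, z) (∫_y^(y+z) x ^ (p - 2) dx) dν dν` as an identity in `[0, ∞]`. -/
def HasMomentIdentity (K : ℝ → ℝ → ℝ) (ν : Measure ℝ) : Prop :=
  ∀ p : ℝ, sizeMoment ν p = ∫⁻ w, ENNReal.ofReal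
    (w.1 * K w.1 w.2 * ∫ x in w.1..(w.1 + w.2), x ^ (p - 2)) ∂ν.prod ν

variable {α κ ε r p y z : ℝ} {ν : Measure ℝ} {K : ℝ → ℝ → ℝ}

theorem const_mul_rpow_le_mul_kernel (hα : 0 ≤ α) (hκ : 0 ≤ κ)
    (hK : ∀ y z, 0 < y → 0 < z → κ * (z / y) ^ α ≤ K y z)
    (hy : 0 < y) (hr : 0 < r) (hrz : r ≤ z) : κ * r ^ α * y ^ (1 - α) ≤ y * K y z := by
  have hz : 0 < z := hr.trans_le hrz
  calc κ * r ^ α * y ^ (1 - α) ≤ κ * z ^ α * y ^ (1 - α) := by gcongr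
    _ = y * (κ * (z / y) ^ α) := by
      rw [div_rpow_eq_mul_rpow_neg hz.le hy.le, sub_eq_add_neg, rpow_add hy, rpow_one]
      ring
    _ ≤ y * K y z := by gcongr; exact hK y z hy hz

variable [SFinite ν]

theorem sizeMoment_one_sub_ne_top (hν : ∀ᵐ x ∂ν, 0 < x) (hα : 0 ≤ α) (hκ : 0 < κ)
    (hK : ∀ y z, 0 < y → 0 < z → κ * (z / y) ^ α ≤ K y z) (hr : 0 < r) (hνr : ν (Ioi r) ≠ 0)
    (hflux : coagFlux ν K r ≠ ∞) (h₁ : sizeMoment ν 1 ≠ ∞) : sizeMoment ν (1 - α) ≠ ∞ := by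
  refine sizeMoment_ne_top_of_le (H := fun w => w.1 * K w.1 w.2) (D := κ * r ^ α) hν hr hνr
    (by linarith) h₁ (by positivity)
    (fun y z hy _ hrz => const_mul_rpow_le_mul_kernel hα hκ.le hK hy hr hrz.le)
    (ne_top_of_le_ne_top hflux ?_)
  rw [coagFlux, ← lintegral_indicator (measurableSet_Iio.prod measurableSet_Ioi)]
  refine lintegral_mono_ae ?_
  filter_upwards [ae_prod_pos hν] with w hw
  by_cases hwr : w ∈ Iio r ×ˢ Ioi r
  · have hmem : r ∈ Ioo w.1 (w.1 + w.2) := ⟨hwr.1, hwr.2.trans (lt_add_of_pos_left _ hw.1)⟩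
    rw [indicator_of_mem hwr, pairFlux, indicator_of_mem hmem]
  · rw [indicator_of_notMem hwr]
    exact zero_le

/- Pairs with `y < r < z` alone contribute a multiple of `y ^ (p - α)` to the identity for `p`. -/
theorem HasMomentIdentity.sizeMoment_sub_ne_top (hid : HasMomentIdentity K ν)
    (hν : ∀ᵐ x ∂ν, 0 < x) (hα : 0 ≤ α) (hκ : 0 < κ)
    (hK : ∀ y z, 0 < y → 0 < z → κ * (z / y) ^ α ≤ K y z) (hr : 0 < r) (hνr : ν (Ioi r) ≠ 0)
    (hp : p ≤ 2) (hfin : sizeMoment ν p ≠ ∞) : sizeMoment ν (p - α) ≠ ∞ := by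
  refine sizeMoment_ne_top_of_le
    (H := fun w => w.1 * K w.1 w.2 * ∫ x in w.1..(w.1 + w.2), x ^ (p - 2))
    (D := κ * r ^ α * 2 ^ (p - 2)) hν hr hνr (by linarith) hfin (by positivity)
    (fun y z hy hyr hrz => ?_)
    (ne_top_of_le_ne_top hfin ((setLIntegral_le_lintegral _ _).trans_eq (hid p).symm))
  calc κ * r ^ α * 2 ^ (p - 2) * y ^ (p - α)
      = κ * r ^ α * y ^ (1 - α) * (2 ^ (p - 2) * y ^ (p - 2 + 1)) := by
        rw [show p - α = 1 - α + (p - 2 + 1) by ring, rpow_add hy]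
        ring
    _ ≤ y * K y z * ∫ x in y..(y + z), x ^ (p - 2) :=
        mul_le_mul (const_mul_rpow_le_mul_kernel hα hκ.le hK hy hr hrz.le)
          (le_integral_rpow (by linarith) hy (hyr.trans hrz).le) (by positivity)
          ((by positivity : 0 ≤ κ * r ^ α * y ^ (1 - α)).trans
            (const_mul_rpow_le_mul_kernel hα hκ.le hK hy hr hrz.le))

theorem HasMomentIdentity.sizeMoment_ne_top (hid : HasMomentIdentity K ν)
    (hν : ∀ᵐ x ∂ν, 0 < x) (hα : 0 < α) (hκ : 0 < κ)
    (hK : ∀ y z, 0 < y → 0 < z → κ * (z / y) ^ α ≤ K y z) (hr : 0 < r) (hνr : ν (Ioi r) ≠ 0)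
    (h₁ : sizeMoment ν 1 ≠ ∞) (hp : p ≤ 1) : sizeMoment ν p ≠ ∞ := by
  have hstep : ∀ n : ℕ, sizeMoment ν (1 - n * α) ≠ ∞ := by
    intro n
    induction n with
    | zero => simpa using h₁
    | succ n ih =>
      have hn : 0 ≤ n * α := by positivity
      rw [show 1 - (n + 1 : ℕ) * α = 1 - n * α - α by push_cast; ring]
      exact hid.sizeMoment_sub_ne_top hν hα.le hκ hK hr hνr (by linarith) ih
  obtain ⟨n, hn⟩ := exists_nat_ge ((1 - p) / α)
  have hnp : 1 - n * α ≤ p := by linarith [(div_le_iff₀ hα).1 hn]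
  exact ne_top_of_le_ne_top (ENNReal.add_ne_top.2 ⟨hstep n, h₁⟩) (sizeMoment_le_add hν hnp hp)

theorem mul_div_add_le_mul_integral (hy : 0 < y) (hz : 0 < z) {k : ℝ} (hk : 2 ≤ k) :
    2 * (z / (y + z)) ≤ y * k * ∫ x in y..(y + z), x ^ ((0 : ℝ) - 2) := by
  have hint : ∫ x in y..(y + z), x ^ ((0 : ℝ) - 2) = z / (y * (y + z)) := by
    rw [integral_rpow (Or.inr ⟨by norm_num, notMem_uIcc_of_lt hy (by linarith)⟩)]
    norm_num [rpow_neg_one]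
    field_simp
    ring
  calc 2 * (z / (y + z)) = y * 2 * (z / (y * (y + z))) := by field_simp
    _ ≤ y * k * ∫ x in y..(y + z), x ^ ((0 : ℝ) - 2) := by rw [hint]; gcongr

/- For `p = 0` and `K ≥ 2` the right-hand side dominates the square of the zeroth moment `M`, since
`z / (y + z)` symmetrises to `1 / 2`; so `M ^ 2 ≤ M`. -/
theorem HasMomentIdentity.sizeMoment_zero_le_one (hid : HasMomentIdentity K ν)
    (hν : ∀ᵐ x ∂ν, 0 < x) (hK : ∀ y z, 0 < y → 0 < z → 2 ≤ K y z) (h₀ : sizeMoment ν 0 ≠ ∞) :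
    sizeMoment ν 0 ≤ 1 := by
  set J : ℝ≥0∞ := ∫⁻ w : ℝ × ℝ, ENNReal.ofReal (w.2 / (w.1 + w.2)) ∂ν.prod ν with hJ
  have hJ_swap : J = ∫⁻ w : ℝ × ℝ, ENNReal.ofReal (w.1 / (w.1 + w.2)) ∂ν.prod ν := by
    rw [hJ, ← lintegral_prod_swap]
    simp only [Prod.fst_swap, Prod.snd_swap, add_comm]
  have hJ_add : J + J = sizeMoment ν 0 * sizeMoment ν 0 := by
    nth_rw 2 [hJ_swap]
    rw [← one_mul (_ * _), ← ENNReal.ofReal_one, ← lintegral_prod_const_mul_rpow hν zero_le_one,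
      hJ, ← lintegral_add_left (by fun_prop)]
    refine lintegral_congr_ae ?_
    filter_upwards [ae_prod_pos hν] with w ⟨hy, hz⟩
    rw [← ENNReal.ofReal_add (by positivity) (by positivity), ← add_div, add_comm w.2,
      div_self (by positivity), rpow_zero, rpow_zero, one_mul, one_mul]
  have hJ_le : 2 * J ≤ sizeMoment ν 0 := by
    rw [hid 0, hJ, ← ENNReal.ofReal_ofNat 2, ← lintegral_const_mul _ (by fun_prop)]
    refine lintegral_mono_ae ?_
    filter_upwards [ae_prod_pos hν] with w ⟨hy, hz⟩
    rw [← ENNReal.ofReal_mul zero_le_two]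
    exact ENNReal.ofReal_le_ofReal (mul_div_add_le_mul_integral hy hz (hK _ _ hy hz))
  have hsq : sizeMoment ν 0 * sizeMoment ν 0 ≤ sizeMoment ν 0 := by rwa [← hJ_add, ← two_mul]
  by_contra! hlt
  have hsq_lt := ENNReal.mul_lt_mul_right (zero_lt_one.trans hlt).ne' h₀ hlt
  exact (hsq.trans_lt (by simpa using hsq_lt)).false

/- In the identity for `p = 1` every product of moments that is not small with `ε` has the `α`-th
moment as a factor. -/
theorem HasMomentIdentity.one_le_integral_rpow_add (hid : HasMomentIdentity K ν)
    (hν : ∀ᵐ x ∂ν, 0 < x) (hα₀ : 0 ≤ α) (hα₁ : α < 1) (hε : 0 ≤ ε)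
    (hK : ∀ y z, 0 < y → 0 < z → K y z ≤ 2 + ε * ((y / z) ^ α + (z / y) ^ α))
    (h₀ : sizeMoment ν 0 ≤ 1) (h₁ : sizeMoment ν 1 = 1) :
    1 ≤ (2 / (1 - α) + ε) * ((∫ x, x ^ α ∂ν) * 2) + ε / ((1 - α) / 2) * 4 := by
  have hle_two (q : ℝ) (hq₀ : 0 ≤ q) (hq₁ : q ≤ 1) : sizeMoment ν q ≤ 2 := by
    simpa [one_add_one_eq_two] using (sizeMoment_le_add hν hq₀ hq₁).trans (add_le_add h₀ h₁.le)
  have hα' : 0 < 1 - α := by linarith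
  set A : ℝ := 2 / (1 - α) + ε
  set s : ℝ := (1 - α) / 2 with hs
  set m : ℝ := ∫ x, x ^ α ∂ν
  have hA : 0 ≤ A := by positivity
  have hm₀ : 0 ≤ m := integral_nonneg_of_ae (hν.mono fun x hx => rpow_nonneg hx.le α)
  have hm : sizeMoment ν α = ENNReal.ofReal m :=
    (ofReal_integral_rpow hν (ne_top_of_le_ne_top (by simp) (hle_two α hα₀ hα₁.le))).symm
  rw [← ENNReal.one_le_ofReal]
  calc (1 : ℝ≥0∞) = _ := h₁.symm.trans (hid 1)
    _ ≤ ENNReal.ofReal A * (sizeMoment ν (1 - 2 + 1 + α) * sizeMoment ν (1 - α)) +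
        ENNReal.ofReal (ε / s) * (sizeMoment ν (1 - 2 + 2 - s - α) * sizeMoment ν (s + α)) :=
      lintegral_kernel_mul_integral_rpow_le hν hα₀ hα₁ hε (half_pos hα') (by linarith)
        (by linarith) (by linarith) hK
    _ ≤ ENNReal.ofReal A * (ENNReal.ofReal m * 2) + ENNReal.ofReal (ε / s) * (2 * 2) := by
      rw [show (1 : ℝ) - 2 + 1 + α = α by ring, hm]
      gcongr <;> exact hle_two _ (by linarith) (by linarith)
    _ = ENNReal.ofReal (A * (m * 2) + ε / s * 4) := by
      rw [ENNReal.ofReal_add (mul_nonneg hA (mul_nonneg hm₀ zero_le_two)) (by positivity),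
        ENNReal.ofReal_mul hA, ENNReal.ofReal_mul hm₀, ENNReal.ofReal_mul (by positivity),
        ENNReal.ofReal_ofNat, ENNReal.ofReal_ofNat]
      norm_num

theorem HasMomentIdentity.le_integral_rpow (hid : HasMomentIdentity K ν)
    (hν : ∀ᵐ x ∂ν, 0 < x) (hα₀ : 0 ≤ α) (hα₁ : α < 1) (hε₀ : 0 ≤ ε) (hε₁ : ε ≤ (1 - α) / 16)
    (hK : ∀ y z, 0 < y → 0 < z → K y z ≤ 2 + ε * ((y / z) ^ α + (z / y) ^ α))
    (h₀ : sizeMoment ν 0 ≤ 1) (h₁ : sizeMoment ν 1 = 1) :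
    (1 - α) / 12 ≤ ∫ x, x ^ α ∂ν := by
  have hα' : 0 < 1 - α := by linarith
  set m : ℝ := ∫ x, x ^ α ∂ν
  have hm₀ : 0 ≤ m := integral_nonneg_of_ae (hν.mono fun x hx => rpow_nonneg hx.le α)
  have hsum : 1 ≤ (2 / (1 - α) + ε) * (m * 2) + ε / ((1 - α) / 2) * 4 :=
    hid.one_le_integral_rpow_add hν hα₀ hα₁ hε₀ hK h₀ h₁
  have herror : ε / ((1 - α) / 2) * 4 ≤ 1 / 2 := by
    rw [div_mul_eq_mul_div, div_le_iff₀ (by positivity)]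
    linarith
  have hcoef : 2 / (1 - α) + ε ≤ 3 / (1 - α) := by
    rw [le_div_iff₀ hα', add_mul, div_mul_cancel₀ _ hα'.ne']
    nlinarith
  have hm_le : 1 / 2 ≤ 3 / (1 - α) * (m * 2) := by nlinarith
  rw [div_mul_eq_mul_div, le_div_iff₀ hα'] at hm_le
  linarith

end MomentBounds

section Profiles

/-- The size distribution `φ dx` on `(0, ∞)`. -/
noncomputable def sizeMeasure (φ : ℝ → ℝ) : Measure ℝ :=
  (volume.restrict (Ioi 0)).withDensity fun x => ENNReal.ofReal (φ x)

instance (φ : ℝ → ℝ) : SFinite (sizeMeasure φ) := by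
  unfold sizeMeasure; infer_instance

theorem sizeMeasure_absolutelyContinuous (φ : ℝ → ℝ) :
    sizeMeasure φ ≪ volume.restrict (Ioi 0) :=
  withDensity_absolutelyContinuous _ _

instance (φ : ℝ → ℝ) : NullSingletonClass (sizeMeasure φ) :=
  ⟨fun x => sizeMeasure_absolutelyContinuous φ (measure_singleton x)⟩

theorem ae_sizeMeasure_pos (φ : ℝ → ℝ) : ∀ᵐ x ∂sizeMeasure φ, 0 < x :=
  (sizeMeasure_absolutelyContinuous φ).ae_le (ae_restrict_mem measurableSet_Ioi)

theorem aestronglyMeasurable_prod_sizeMeasure {F : ℝ × ℝ → ℝ} (φ : ℝ → ℝ)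
    (hF : AEStronglyMeasurable F (volume.restrict (Ioi 0 ×ˢ Ioi 0))) :
    AEStronglyMeasurable F ((sizeMeasure φ).prod (sizeMeasure φ)) := by
  rw [Measure.volume_eq_prod, ← Measure.prod_restrict] at hF
  exact hF.mono_ac
    ((sizeMeasure_absolutelyContinuous φ).prod (sizeMeasure_absolutelyContinuous φ))

variable {K : ℝ → ℝ → ℝ} {φ : ℝ → ℝ} {α κ ε : ℝ}

theorem setIntegral_sizeMeasure {s : Set ℝ} (hs : MeasurableSet s) (hs₀ : s ⊆ Ioi 0)
    (hφ : AEMeasurable φ (volume.restrict (Ioi 0)))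
    (hφ₀ : ∀ᵐ x ∂volume.restrict (Ioi 0), 0 ≤ φ x) (f : ℝ → ℝ) :
    ∫ x in s, f x ∂sizeMeasure φ = ∫ x in s, f x * φ x := by
  have hrestr : (volume.restrict (Ioi (0 : ℝ))).restrict s = volume.restrict s := by
    rw [Measure.restrict_restrict hs, inter_eq_left.2 hs₀]
  rw [sizeMeasure, setIntegral_withDensity_eq_setIntegral_toReal_smul₀ hφ.ennreal_ofReal.restrict
    (ae_of_all _ fun _ => ENNReal.ofReal_lt_top) f hs, hrestr]
  refine integral_congr_ae ?_
  filter_upwards [ae_restrict_of_ae_restrict_of_subset hs₀ hφ₀] with x hx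
  rw [ENNReal.toReal_ofReal hx, smul_eq_mul, mul_comm]

theorem sizeMoment_sizeMeasure (hφ : AEMeasurable φ (volume.restrict (Ioi 0))) (p : ℝ) :
    sizeMoment (sizeMeasure φ) p = ∫⁻ x in Ioi 0, ENNReal.ofReal (x ^ p * φ x) := by
  rw [sizeMoment, sizeMeasure, lintegral_withDensity_eq_lintegral_mul₀ hφ.ennreal_ofReal
    (by fun_prop)]
  refine setLIntegral_congr_fun measurableSet_Ioi fun x hx => ?_
  rw [Pi.mul_apply, mul_comm, ENNReal.ofReal_mul (rpow_nonneg (le_of_lt hx) p)]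

theorem _root_.IsProfile.aemeasurable (hφ : IsProfile K φ) :
    AEMeasurable φ (volume.restrict (Ioi 0)) :=
  hφ.1.aestronglyMeasurable.aemeasurable

theorem _root_.IsProfile.sizeMoment_one (hφ : IsProfile K φ) :
    sizeMoment (sizeMeasure φ) 1 = ENNReal.ofReal (∫ x in Ioi 0, x * φ x) := by
  simp only [sizeMoment_sizeMeasure hφ.aemeasurable, rpow_one]
  refine (ofReal_integral_eq_lintegral_ofReal hφ.2.2.1 ?_).symm
  filter_upwards [hφ.2.1, ae_restrict_mem measurableSet_Ioi] with x hφx hx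
  exact mul_nonneg (le_of_lt hx) hφx

theorem integrableOn_Ioi_kernel {ν : Measure ℝ} {k : ℝ → ℝ} {y c : ℝ} (hν : ∀ᵐ x ∂ν, 0 < x)
    (hα₀ : 0 ≤ α) (hα₁ : α ≤ 1) (hν₁ : sizeMoment ν 1 ≠ ∞) (hy : 0 < y) (hc : 0 < c)
    (hkm : AEStronglyMeasurable k ν) (hk₀ : ∀ z, 0 < z → 0 ≤ k z)
    (hk : ∀ z, 0 < z → k z ≤ 2 + ε * ((y / z) ^ α + (z / y) ^ α)) :
    IntegrableOn k (Ioi c) ν := by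
  have hint (q : ℝ) (hq : q ≤ 1) : IntegrableOn (fun z => z ^ q) (Ioi c) ν :=
    (integrableOn_Ici_rpow hν hc hq hν₁).mono_set Ioi_subset_Ici_self
  refine Integrable.mono' (g := fun z => 2 * z ^ (0 : ℝ) +
      ε * (y ^ α * z ^ (-α) + y ^ (-α) * z ^ α))
    (((hint 0 zero_le_one).const_mul 2).add ((((hint (-α) (by linarith)).const_mul _).add
      ((hint α hα₁).const_mul _)).const_mul ε))
    hkm.restrict (ae_restrict_of_forall_mem measurableSet_Ioi fun z hz => ?_)
  have hz : 0 < z := hc.trans hz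
  rw [norm_of_nonneg (hk₀ z hz), rpow_zero, mul_one, ← div_rpow_eq_mul_rpow_neg hy.le hz.le,
    mul_comm (y ^ (-α)), ← div_rpow_eq_mul_rpow_neg hz.le hy.le]
  exact hk z hz

theorem _root_.IsProfile.ae_sq_mul_eq_toReal_coagFlux (hφ : IsProfile K φ)
    (hα₀ : 0 ≤ α) (hα₁ : α ≤ 1)
    (hKm : AEStronglyMeasurable (Function.uncurry K) (volume.restrict (Ioi 0 ×ˢ Ioi 0)))
    (hK₀ : ∀ y z, 0 < y → 0 < z → 0 ≤ K y z)
    (hK : ∀ y z, 0 < y → 0 < z → K y z ≤ 2 + ε * ((y / z) ^ α + (z / y) ^ α)) :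
    ∀ᵐ x ∂volume.restrict (Ioi 0), x ^ 2 * φ x = (coagFlux (sizeMeasure φ) K x).toReal := by
  have hKν := aestronglyMeasurable_prod_sizeMeasure φ hKm
  have hν₁ : sizeMoment (sizeMeasure φ) 1 ≠ ∞ := hφ.sizeMoment_one ▸ ENNReal.ofReal_ne_top
  filter_upwards [hφ.2.2.2] with x hx
  rw [hx, ← integral_eq_toReal_coagFlux (ae_sizeMeasure_pos φ) hKν.aemeasurable hK₀,
    setIntegral_sizeMeasure measurableSet_Ioo Ioo_subset_Ioi_self hφ.aemeasurable hφ.2.1]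
  · refine setIntegral_congr_fun measurableSet_Ioo fun y hy => ?_
    have hsub : Ioi (x - y) ⊆ Ioi 0 := Ioi_subset_Ioi (sub_pos.2 hy.2).le
    rw [setIntegral_sizeMeasure measurableSet_Ioi hsub hφ.aemeasurable hφ.2.1,
      ← integral_mul_const]
    exact integral_congr_ae (ae_of_all _ fun z => by ring)
  · filter_upwards [hKν.prodMk_left] with y hym hy
    exact (integrableOn_Ioi_kernel (ae_sizeMeasure_pos φ) hα₀ hα₁ hν₁ hy.1 (sub_pos.2 hy.2) hym
      (fun z => hK₀ y z hy.1) fun z => hK y z hy.1).const_mul y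

theorem ae_pos_of_sizeMeasure (hφ : AEMeasurable φ (volume.restrict (Ioi 0))) :
    ∀ᵐ x ∂sizeMeasure φ, 0 < φ x :=
  (ae_withDensity_iff' hφ.ennreal_ofReal).2
    (ae_of_all _ fun _ h => ENNReal.ofReal_pos.1 (pos_iff_ne_zero.2 h))

/- Where `φ` is positive the profile equation bounds the flux: otherwise its right-hand side, a
Bochner integral, would take the junk value `0`. -/
theorem exists_coagFlux_ne_top (hφm : AEMeasurable φ (volume.restrict (Ioi 0)))
    (hν : sizeMeasure φ ≠ 0)
    (hflux : ∀ᵐ x ∂volume.restrict (Ioi 0), x ^ 2 * φ x = (coagFlux (sizeMeasure φ) K x).toReal) :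
    ∃ r, 0 < r ∧ sizeMeasure φ (Ioi r) ≠ 0 ∧ coagFlux (sizeMeasure φ) K r ≠ ∞ := by
  have hfin : ∀ᵐ r ∂sizeMeasure φ, coagFlux (sizeMeasure φ) K r ≠ ∞ := by
    filter_upwards [(sizeMeasure_absolutelyContinuous φ).ae_le hflux, ae_sizeMeasure_pos φ,
      ae_pos_of_sizeMeasure hφm] with r hr hr₀ hφr htop
    rw [htop, ENNReal.toReal_top] at hr
    exact (mul_pos (pow_pos hr₀ 2) hφr).ne' hr
  have : NeBot (ae (sizeMeasure φ)) := ae_neBot.2 hν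
  exact ((ae_sizeMeasure_pos φ).and ((ae_measure_Ioi_ne_zero _).and hfin)).exists

theorem ae_coagFlux_ne_top {ν : Measure ℝ} [SFinite ν] (hν : ∀ᵐ x ∂ν, 0 < x) (hα₀ : 0 ≤ α)
    (hα₁ : α < 1) (hε : 0 ≤ ε) (hKm : AEMeasurable (Function.uncurry K) (ν.prod ν))
    (hK : ∀ y z, 0 < y → 0 < z → K y z ≤ 2 + ε * ((y / z) ^ α + (z / y) ^ α))
    (h₁ : sizeMoment ν 1 ≠ ∞) (h₁α : sizeMoment ν (1 - α) ≠ ∞) :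
    ∀ᵐ x ∂volume.restrict (Ioi 0), coagFlux ν K x ≠ ∞ := by
  have hfin : ∫⁻ x in Ioi 0, ENNReal.ofReal (x ^ (-α)) * coagFlux ν K x ≠ ∞ := by
    rw [lintegral_rpow_mul_coagFlux hν hKm]
    refine ne_top_of_le_ne_top ?_ (lintegral_kernel_mul_integral_rpow_le (s := 1 - α) hν hα₀ hα₁ hε
      (by linarith) (by linarith) (by linarith) le_rfl hK)
    rw [neg_add_cancel_comm, show -α + 2 - (1 - α) - α = 1 - α by ring, sub_add_cancel]
    finiteness
  have hm : AEMeasurable (fun x => ENNReal.ofReal (x ^ (-α)) * coagFlux ν K x)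
      (volume.restrict (Ioi 0)) :=
    (by fun_prop : Measurable fun x : ℝ => ENNReal.ofReal (x ^ (-α))).aemeasurable.mul
      (aemeasurable_coagFlux _ hKm)
  filter_upwards [ae_lt_top' hm hfin, ae_restrict_mem measurableSet_Ioi] with x hx hx₀ htop
  rw [htop, ENNReal.mul_top (ENNReal.ofReal_pos.2 (rpow_pos_of_pos hx₀ _)).ne'] at hx
  exact hx.false

theorem hasMomentIdentity_of_ae_coagFlux_ne_top (hφm : AEMeasurable φ (volume.restrict (Ioi 0)))
    (hKm : AEMeasurable (Function.uncurry K) ((sizeMeasure φ).prod (sizeMeasure φ)))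
    (hflux : ∀ᵐ x ∂volume.restrict (Ioi 0), x ^ 2 * φ x = (coagFlux (sizeMeasure φ) K x).toReal)
    (hfin : ∀ᵐ x ∂volume.restrict (Ioi 0), coagFlux (sizeMeasure φ) K x ≠ ∞) :
    HasMomentIdentity K (sizeMeasure φ) := by
  intro p
  rw [← lintegral_rpow_mul_coagFlux (ae_sizeMeasure_pos φ) hKm, sizeMoment_sizeMeasure hφm]
  refine lintegral_congr_ae ?_
  filter_upwards [hflux, hfin, ae_restrict_mem measurableSet_Ioi] with x hx hxfin hx₀
  have hx₀ : 0 < x := hx₀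
  rw [← ENNReal.ofReal_toReal hxfin, ← hx, ← ENNReal.ofReal_mul (rpow_nonneg hx₀.le _), ← mul_assoc,
    ← rpow_two, ← rpow_add hx₀, sub_add_cancel]

theorem _root_.IsProfile.sizeMoment_one_eq_one (hφ : IsProfile K φ) (hφ₁ : IsNormalised φ) :
    sizeMoment (sizeMeasure φ) 1 = 1 := by
  rw [hφ.sizeMoment_one, hφ₁, ENNReal.ofReal_one]

theorem _root_.IsProfile.hasMomentIdentity_and_sizeMoment_ne_top (hφ : IsProfile K φ)
    (hφ₁ : IsNormalised φ) (hα : α ∈ Ioo 0 1) (hκ : 0 < κ) (hε : 0 ≤ ε)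
    (hKm : AEStronglyMeasurable (Function.uncurry K) (volume.restrict (Ioi 0 ×ˢ Ioi 0)))
    (hlow : ∀ y z, 0 < y → 0 < z → κ * (z / y) ^ α ≤ K y z)
    (hup : ∀ y z, 0 < y → 0 < z → K y z ≤ 2 + ε * ((y / z) ^ α + (z / y) ^ α)) :
    HasMomentIdentity K (sizeMeasure φ) ∧ ∀ p ≤ 1, sizeMoment (sizeMeasure φ) p ≠ ∞ := by
  have hν := ae_sizeMeasure_pos φ
  have hν₁ : sizeMoment (sizeMeasure φ) 1 = 1 := hφ.sizeMoment_one_eq_one hφ₁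
  have hν₁_fin : sizeMoment (sizeMeasure φ) 1 ≠ ∞ := hν₁ ▸ ENNReal.one_ne_top
  have hν_ne : sizeMeasure φ ≠ 0 := fun h => by simp [h, sizeMoment] at hν₁
  have hKν := (aestronglyMeasurable_prod_sizeMeasure φ hKm).aemeasurable
  have hflux := hφ.ae_sq_mul_eq_toReal_coagFlux hα.1.le hα.2.le hKm (fun y z hy hz =>
    (mul_nonneg hκ.le (rpow_nonneg (div_pos hz hy).le α)).trans (hlow y z hy hz)) hup
  obtain ⟨r, hr, hνr, hfluxr⟩ := exists_coagFlux_ne_top hφ.aemeasurable hν_ne hflux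
  have hν₁α := sizeMoment_one_sub_ne_top hν hα.1.le hκ hlow hr hνr hfluxr hν₁_fin
  have hid : HasMomentIdentity K (sizeMeasure φ) :=
    hasMomentIdentity_of_ae_coagFlux_ne_top hφ.aemeasurable hKν hflux
      (ae_coagFlux_ne_top hν hα.1.le hα.2 hε hKν hup hν₁_fin hν₁α)
  exact ⟨hid, fun p hp => hid.sizeMoment_ne_top hν hα.1 hκ hlow hr hνr hν₁_fin hp⟩

theorem _root_.IsProfile.sizeMoment_ne_top_and_le_integral_rpow {W : ℝ → ℝ → ℝ} {c : ℝ}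
    (hφ : IsProfile (Kern ε W) φ) (hφ₁ : IsNormalised φ) (hα : α ∈ Ioo 0 1) (hc : 0 < c)
    (hε₀ : 0 < ε) (hε₁ : ε ≤ (1 - α) / 16)
    (hWm : AEStronglyMeasurable (Function.uncurry W) (volume.restrict (Ioi 0 ×ˢ Ioi 0)))
    (hlow : ∀ x y, 0 < x → 0 < y → c * (y / x) ^ α ≤ W x y)
    (hup : ∀ x y, 0 < x → 0 < y → W x y ≤ (x / y) ^ α + (y / x) ^ α) :
    (∀ p ≤ 1, sizeMoment (sizeMeasure φ) p ≠ ∞) ∧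
      (1 - α) / 12 ≤ ∫ x, x ^ α ∂sizeMeasure φ := by
  have hν := ae_sizeMeasure_pos φ
  have hKm : AEStronglyMeasurable (Function.uncurry (Kern ε W))
      (volume.restrict (Ioi 0 ×ˢ Ioi 0)) := aestronglyMeasurable_const.add (hWm.const_mul ε)
  have hK_low : ∀ y z, 0 < y → 0 < z → ε * c * (z / y) ^ α ≤ Kern ε W y z := fun y z hy hz => by
    rw [Kern, mul_assoc]
    exact le_add_of_nonneg_of_le zero_le_two
      (mul_le_mul_of_nonneg_left (hlow y z hy hz) hε₀.le)
  have hK_up : ∀ y z, 0 < y → 0 < z → Kern ε W y z ≤ 2 + ε * ((y / z) ^ α + (z / y) ^ α) :=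
    fun y z hy hz => add_le_add_right (mul_le_mul_of_nonneg_left (hup y z hy hz) hε₀.le) 2
  have hK_two : ∀ y z, 0 < y → 0 < z → 2 ≤ Kern ε W y z := fun y z hy hz =>
    le_add_of_nonneg_right (mul_nonneg hε₀.le ((by positivity : 0 ≤ c * (z / y) ^ α).trans
      (hlow y z hy hz)))
  obtain ⟨hid, hfin⟩ := hφ.hasMomentIdentity_and_sizeMoment_ne_top hφ₁ hα (mul_pos hε₀ hc) hε₀.le
    hKm hK_low hK_up
  exact ⟨hfin, hid.le_integral_rpow hν hα.1.le hα.2 hε₀.le hε₁ hK_up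
    (hid.sizeMoment_zero_le_one hν hK_two (hfin 0 zero_le_one)) (hφ.sizeMoment_one_eq_one hφ₁)⟩

end Profiles

section Potential

variable {ν : Measure ℝ} {K W : ℝ → ℝ → ℝ} {φ f g : ℝ → ℝ} {α ε c k x y z : ℝ}

theorem integrable_div_rpow (hν : ∀ᵐ z ∂ν, 0 < z) (hy : 0 ≤ y) {p : ℝ}
    (hp : Integrable (fun z => z ^ p) ν) : Integrable (fun z => (z / y) ^ p) ν := by
  refine (hp.mul_const (y ^ (-p))).congr ?_
  filter_upwards [hν] with z hz
  exact (div_rpow_eq_mul_rpow_neg hz.le hy p).symm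

theorem integral_div_rpow (hν : ∀ᵐ z ∂ν, 0 < z) (hy : 0 ≤ y) (p : ℝ) :
    ∫ z, (z / y) ^ p ∂ν = (∫ z, z ^ p ∂ν) * y ^ (-p) := by
  rw [← integral_mul_const]
  refine integral_congr_ae ?_
  filter_upwards [hν] with z hz
  exact div_rpow_eq_mul_rpow_neg hz.le hy p

theorem _root_.IsProfile.betaW_eq_integral (hφ : IsProfile K φ) (W : ℝ → ℝ → ℝ) (y : ℝ) :
    betaW W φ y = ∫ z, W y z ∂sizeMeasure φ := by
  have hν : (sizeMeasure φ).restrict (Ioi 0) = sizeMeasure φ :=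
    Measure.restrict_eq_self_of_ae_mem (ae_sizeMeasure_pos φ)
  rw [betaW, ← setIntegral_sizeMeasure measurableSet_Ioi (subset_refl _) hφ.aemeasurable hφ.2.1, hν]

theorem aestronglyMeasurable_restrict_prod_sizeMeasure {F : ℝ × ℝ → ℝ} (φ : ℝ → ℝ)
    (hF : AEStronglyMeasurable F (volume.restrict (Ioi 0 ×ˢ Ioi 0))) :
    AEStronglyMeasurable F ((volume.restrict (Ioi 0)).prod (sizeMeasure φ)) := by
  rw [Measure.volume_eq_prod, ← Measure.prod_restrict] at hF
  exact hF.mono_ac (Measure.AbsolutelyContinuous.rfl.prod (sizeMeasure_absolutelyContinuous φ))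

theorem _root_.IsProfile.aestronglyMeasurable_betaW (hφ : IsProfile K φ)
    (hWm : AEStronglyMeasurable (Function.uncurry W) (volume.restrict (Ioi 0 ×ˢ Ioi 0))) :
    AEStronglyMeasurable (betaW W φ) (volume.restrict (Ioi 0)) := by
  rw [funext (hφ.betaW_eq_integral W)]
  exact (aestronglyMeasurable_restrict_prod_sizeMeasure φ hWm).integral_prod_right'

theorem _root_.IsProfile.ae_betaW_mem_Icc (hφ : IsProfile K φ)
    (hWm : AEStronglyMeasurable (Function.uncurry W) (volume.restrict (Ioi 0 ×ˢ Ioi 0)))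
    (h_neg : sizeMoment (sizeMeasure φ) (-α) ≠ ∞) (h_pos : sizeMoment (sizeMeasure φ) α ≠ ∞)
    (hc : 0 ≤ c) (hlow : ∀ x y, 0 < x → 0 < y → c * (y / x) ^ α ≤ W x y)
    (hup : ∀ x y, 0 < x → 0 < y → W x y ≤ (x / y) ^ α + (y / x) ^ α) :
    ∀ᵐ y ∂volume.restrict (Ioi 0), betaW W φ y ∈
      Icc (c * ((∫ z, z ^ α ∂sizeMeasure φ) * y ^ (-α)))
        ((∫ z, z ^ (-α) ∂sizeMeasure φ) * y ^ α + (∫ z, z ^ α ∂sizeMeasure φ) * y ^ (-α)) := by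
  have hν := ae_sizeMeasure_pos φ
  filter_upwards [(aestronglyMeasurable_restrict_prod_sizeMeasure φ hWm).prodMk_left,
    ae_restrict_mem measurableSet_Ioi] with y hWy (hy : 0 < y)
  have hi_neg := integrable_div_rpow hν hy.le (integrable_rpow hν h_neg)
  have hi_pos := integrable_div_rpow hν hy.le (integrable_rpow hν h_pos)
  have hlow₀ : ∀ᵐ z ∂sizeMeasure φ, 0 ≤ c * (z / y) ^ α :=
    hν.mono fun z hz => mul_nonneg hc (rpow_nonneg (div_pos hz hy).le α)
  have hlow' : ∀ᵐ z ∂sizeMeasure φ, c * (z / y) ^ α ≤ W y z := hν.mono fun z => hlow y z hy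
  have hup' : ∀ᵐ z ∂sizeMeasure φ, W y z ≤ (z / y) ^ (-α) + (z / y) ^ α := by
    filter_upwards [hν] with z hz
    rw [rpow_neg (div_pos hz hy).le, ← inv_rpow (div_pos hz hy).le, inv_div]
    exact hup y z hy hz
  have hW₀ : ∀ᵐ z ∂sizeMeasure φ, 0 ≤ W y z := by
    filter_upwards [hlow₀, hlow'] with z h h' using h.trans h'
  have hW : Integrable (W y) (sizeMeasure φ) := (hi_neg.add hi_pos).mono' hWy <| by
    filter_upwards [hW₀, hup'] with z h h'
    rwa [norm_of_nonneg h]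
  have hint_neg := integral_div_rpow hν hy.le (-α)
  rw [neg_neg] at hint_neg
  rw [hφ.betaW_eq_integral, ← integral_div_rpow hν hy.le, ← integral_const_mul, ← hint_neg,
    ← integral_add hi_neg hi_pos]
  exact ⟨integral_mono_of_nonneg hlow₀ hW hlow',
    integral_mono_of_nonneg hW₀ (hi_neg.add hi_pos) hup'⟩

theorem integrableOn_exp_neg_mul_rpow (hx : 0 < x) (q : ℝ) :
    IntegrableOn (fun y => exp (-y) * y ^ q) (Ioi x) := by
  refine integrable_of_isBigO_exp_neg (b := 1 / 2) one_half_pos ?_ ?_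
  · exact (continuous_exp.comp continuous_neg).continuousOn.mul
      (continuousOn_id.rpow_const fun y hy => Or.inl (hx.trans_le hy).ne')
  · exact (Real.Gamma_integrand_isLittleO q).isBigO

theorem antitoneOn_integral_Ioi (hf₀ : ∀ᵐ y ∂volume.restrict (Ioi 0), 0 ≤ f y)
    (hf : ∀ x, 0 < x → IntegrableOn f (Ioi x)) :
    AntitoneOn (fun x => ∫ y in Ioi x, f y) (Ioi 0) := fun x hx _ _ hxz =>
  setIntegral_mono_set (hf x hx)
    (ae_restrict_of_ae_restrict_of_subset (Ioi_subset_Ioi (le_of_lt hx)) hf₀)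
    (Ioi_subset_Ioi hxz).eventuallyLE

theorem le_integral_Ioi_sub_integral_Ioi (hα : 0 < α)
    (hf : ∀ᵐ y ∂volume.restrict (Ioi 0), y ≤ 1 → k * y ^ (-α - 1) ≤ f y) (hx : 0 < x)
    (hfx : IntegrableOn f (Ioi x)) (hxz : x ≤ z) (hz : z ≤ 1) :
    k * ((x ^ (-α) - z ^ (-α)) / α) ≤ (∫ y in Ioi x, f y) - ∫ y in Ioi z, f y := by
  have hxz₀ : (0 : ℝ) ∉ uIcc x z := notMem_uIcc_of_lt hx (hx.trans_le hxz)
  have hpow : ∫ y in x..z, y ^ (-α - 1) = (x ^ (-α) - z ^ (-α)) / α := by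
    rw [integral_rpow (Or.inr ⟨by linarith, hxz₀⟩), sub_add_cancel, div_neg, ← neg_div, neg_sub]
  rw [intervalIntegral.integral_Ioi_sub_Ioi hfx hxz, ← hpow, ← intervalIntegral.integral_const_mul]
  refine intervalIntegral.integral_mono_ae_restrict hxz
    ((intervalIntegral.intervalIntegrable_rpow (Or.inr hxz₀)).const_mul k)
    ((intervalIntegrable_iff_integrableOn_Ioc_of_le hxz).2 (hfx.mono_set Ioc_subset_Ioi_self)) ?_
  have hsub : Icc x z ⊆ Ioi 0 := fun y hy => hx.trans_le hy.1
  filter_upwards [ae_restrict_of_ae_restrict_of_subset hsub hf, ae_restrict_mem measurableSet_Icc]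
    with y hfy hy using hfy (hy.2.trans hz)

theorem integrableOn_div_mul_exp_neg (hgm : AEStronglyMeasurable g (volume.restrict (Ioi 0)))
    (hg : ∀ᵐ y ∂volume.restrict (Ioi 0), g y ∈ Icc 0 (k * y ^ α + c * y ^ (-α))) (hx : 0 < x) :
    IntegrableOn (fun y => g y / y * exp (-y)) (Ioi x) := by
  have hsub : Ioi x ⊆ Ioi 0 := Ioi_subset_Ioi hx.le
  refine Integrable.mono' (((integrableOn_exp_neg_mul_rpow hx (α - 1)).const_mul k).add
    ((integrableOn_exp_neg_mul_rpow hx (-α - 1)).const_mul c))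
    (((hgm.mono_measure (Measure.restrict_mono_set _ hsub)).div₀ (by fun_prop)).mul
      (by fun_prop)) ?_
  filter_upwards [ae_restrict_of_ae_restrict_of_subset hsub hg, ae_restrict_mem measurableSet_Ioi]
    with y ⟨hg₀, hgy⟩ hxy
  have hy : 0 < y := hx.trans hxy
  rw [norm_of_nonneg (mul_nonneg (div_nonneg hg₀ hy.le) (exp_pos _).le)]
  calc g y / y * exp (-y) ≤ (k * y ^ α + c * y ^ (-α)) / y * exp (-y) := by gcongr
    _ = k * (exp (-y) * y ^ (α - 1)) + c * (exp (-y) * y ^ (-α - 1)) := by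
      rw [rpow_sub_one hy.ne', rpow_sub_one hy.ne']
      ring

theorem mul_exp_neg_one_mul_rpow_le (hk : 0 ≤ k) (hy : 0 < y) (hy₁ : y ≤ 1)
    (hgy : k * y ^ (-α) ≤ g y) : k * exp (-1) * y ^ (-α - 1) ≤ g y / y * exp (-y) :=
  calc k * exp (-1) * y ^ (-α - 1) = k * y ^ (-α) / y * exp (-1) := by
        rw [rpow_sub_one hy.ne']
        ring
    _ ≤ g y / y * exp (-y) := by
        have hg₀ : 0 ≤ g y := (mul_nonneg hk (rpow_nonneg hy.le _)).trans hgy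
        gcongr

theorem _root_.IsProfile.antitoneOn_Phi_and_le_Phi_sub_Phi (hφ : IsProfile (Kern ε W) φ)
    (hφ₁ : IsNormalised φ) (hα : α ∈ Ioo 0 1) (hc : 0 < c) (hε₀ : 0 < ε) (hε₁ : ε ≤ (1 - α) / 16)
    (hWm : AEStronglyMeasurable (Function.uncurry W) (volume.restrict (Ioi 0 ×ˢ Ioi 0)))
    (hlow : ∀ x y, 0 < x → 0 < y → c * (y / x) ^ α ≤ W x y)
    (hup : ∀ x y, 0 < x → 0 < y → W x y ≤ (x / y) ^ α + (y / x) ^ α) :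
    AntitoneOn (Phi ε W φ) (Ioi 0) ∧ ∀ x z, 0 < x → x ≤ z → z ≤ 1 →
      ε * (c * ((1 - α) / 12) * exp (-1) * ((x ^ (-α) - z ^ (-α)) / α)) ≤
        Phi ε W φ x - Phi ε W φ z := by
  obtain ⟨hfin, hm⟩ := hφ.sizeMoment_ne_top_and_le_integral_rpow hφ₁ hα hc hε₀ hε₁ hWm hlow hup
  have hk : 0 ≤ c * ((1 - α) / 12) := mul_nonneg hc.le (div_nonneg (sub_nonneg.2 hα.2.le) (by simp))
  have hβ := hφ.ae_betaW_mem_Icc hWm (hfin (-α) (by linarith [hα.1])) (hfin α hα.2.le) hc.le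
    hlow hup
  have hβ_low : ∀ᵐ y ∂volume.restrict (Ioi 0),
      0 < y ∧ 0 ≤ betaW W φ y ∧ c * ((1 - α) / 12) * y ^ (-α) ≤ betaW W φ y := by
    filter_upwards [hβ, ae_restrict_mem measurableSet_Ioi] with y hβy (hy : 0 < y)
    have hle : c * ((1 - α) / 12) * y ^ (-α) ≤ betaW W φ y := by
      refine le_trans ?_ hβy.1
      rw [mul_assoc]
      gcongr
    exact ⟨hy, (mul_nonneg hk (rpow_nonneg hy.le _)).trans hle, hle⟩
  have hint x (hx : 0 < x) : IntegrableOn (fun y => betaW W φ y / y * exp (-y)) (Ioi x) :=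
    integrableOn_div_mul_exp_neg (hφ.aestronglyMeasurable_betaW hWm)
      (hβ.mp (hβ_low.mono fun y hy hβy => ⟨hy.2.1, hβy.2⟩)) hx
  have hint₀ : ∀ᵐ y ∂volume.restrict (Ioi 0), 0 ≤ betaW W φ y / y * exp (-y) :=
    hβ_low.mono fun y hy => mul_nonneg (div_nonneg hy.2.1 hy.1.le) (exp_pos _).le
  refine ⟨fun x hx z hz hxz => mul_le_mul_of_nonneg_left
    (antitoneOn_integral_Ioi hint₀ hint hx hz hxz) hε₀.le, fun x z hx hxz hz => ?_⟩
  rw [Phi, Phi, ← mul_sub]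
  exact mul_le_mul_of_nonneg_left (le_integral_Ioi_sub_integral_Ioi hα.1
    (hβ_low.mono fun y hy hy₁ => mul_exp_neg_one_mul_rpow_le hk hy.1 hy₁ hy.2.2)
    hx (hint x hx) hxz hz) hε₀.le

end Potential

section WeightedIntegral

variable {P d : ℝ → ℝ} {a b k u v x z α β ε θ : ℝ}

theorem betaPDFReal_nonneg (hα : 0 < α) (hβ : 0 < β) (x : ℝ) :
    0 ≤ ProbabilityTheory.betaPDFReal α β x := by
  by_cases hx : 0 < x ∧ x < 1
  · exact (ProbabilityTheory.betaPDFReal_pos hx.1 hx.2 hα hβ).le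
  · rw [ProbabilityTheory.betaPDFReal, if_neg hx]

theorem integrable_betaPDFReal (hα : 0 < α) (hβ : 0 < β) :
    Integrable (ProbabilityTheory.betaPDFReal α β) :=
  (lintegral_ofReal_ne_top_iff_integrable (by fun_prop)
    (ae_of_all _ (betaPDFReal_nonneg hα hβ))).1
    ((ProbabilityTheory.lintegral_betaPDF_eq_one hα hβ).trans_ne ENNReal.one_ne_top)

theorem integral_betaPDFReal (hα : 0 < α) (hβ : 0 < β) :
    ∫ x, ProbabilityTheory.betaPDFReal α β x = 1 := by
  rw [integral_eq_lintegral_of_nonneg_ae (ae_of_all _ (betaPDFReal_nonneg hα hβ)) (by fun_prop)]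
  exact (congrArg ENNReal.toReal (ProbabilityTheory.lintegral_betaPDF_eq_one hα hβ)).trans
    ENNReal.toReal_one

theorem eqOn_rpow_mul_one_sub_div_rpow (hu : 0 < u) (hv : 0 < v) (hz : 0 < z) :
    EqOn (fun x => z ^ (u - 1) * ProbabilityTheory.beta u v *
        ProbabilityTheory.betaPDFReal u v (x / z))
      (fun x => x ^ (u - 1) * (1 - x / z) ^ (v - 1)) (Ioo 0 z) := by
  intro x hx
  have hβ : ProbabilityTheory.beta u v ≠ 0 := (ProbabilityTheory.beta_pos hu hv).ne'
  have hzu : z ^ (u - 1) ≠ 0 := (rpow_pos_of_pos hz _).ne'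
  simp only [ProbabilityTheory.betaPDFReal,
    if_pos (show 0 < x / z ∧ x / z < 1 from ⟨div_pos hx.1 hz, (div_lt_one hz).2 hx.2⟩),
    div_rpow hx.1.le hz.le]
  field_simp

theorem integrableOn_rpow_mul_one_sub_div_rpow (hu : 0 < u) (hv : 0 < v) (hz : 0 < z) :
    IntegrableOn (fun x => x ^ (u - 1) * (1 - x / z) ^ (v - 1)) (Ioo 0 z) :=
  (((integrable_betaPDFReal hu hv).comp_div hz.ne').const_mul _).integrableOn.congr_fun
    (eqOn_rpow_mul_one_sub_div_rpow hu hv hz) measurableSet_Ioo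

theorem setIntegral_rpow_mul_one_sub_div_rpow (hu : 0 < u) (hv : 0 < v) (hz : 0 < z) :
    ∫ x in Ioo 0 z, x ^ (u - 1) * (1 - x / z) ^ (v - 1) = z ^ u * ProbabilityTheory.beta u v := by
  have hsupp : ∀ x ∉ Ioo 0 z, z ^ (u - 1) * ProbabilityTheory.beta u v *
      ProbabilityTheory.betaPDFReal u v (x / z) = 0 := fun x hx => by
    rw [ProbabilityTheory.betaPDFReal, if_neg, mul_zero]
    rwa [div_pos_iff_of_pos_right hz, div_lt_one hz]
  rw [← setIntegral_congr_fun measurableSet_Ioo (eqOn_rpow_mul_one_sub_div_rpow hu hv hz),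
    setIntegral_eq_integral_of_forall_compl_eq_zero hsupp, integral_const_mul,
    Measure.integral_comp_div, integral_betaPDFReal hu hv, abs_of_pos hz, smul_eq_mul,
    rpow_sub_one hz.ne']
  field_simp

theorem exp_neg_le_rpow_neg (hu : 0 < u) (hθ₀ : 0 ≤ θ) (hθ₁ : θ ≤ 1) : exp (-u) ≤ u ^ (-θ) := by
  rw [exp_neg, rpow_neg hu.le]
  refine inv_anti₀ (rpow_pos_of_pos hu θ) ?_
  calc u ^ θ ≤ exp u ^ θ := rpow_le_rpow hu.le (by linarith [add_one_le_exp u]) hθ₀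
    _ ≤ exp u ^ (1 : ℝ) := rpow_le_rpow_of_exponent_le (one_le_exp hu.le) hθ₁
    _ = exp u := rpow_one _

theorem rpow_neg_mul_one_sub_div_le (hα₀ : 0 < α) (hα₁ : α ≤ 1) (hx : 0 < x) (hz : 0 < z) :
    x ^ (-α) * (1 - x / z) ≤ (x ^ (-α) - z ^ (-α)) / α := by
  have hbern : (x / z) ^ α ≤ 1 + α * (x / z - 1) := by
    have := rpow_one_add_le_one_add_mul_self (s := x / z - 1) (p := α)
      (by linarith [div_pos hx hz]) hα₀.le hα₁
    rwa [add_sub_cancel] at this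
  have hzα : z ^ (-α) = x ^ (-α) * (x / z) ^ α := by
    rw [div_rpow_eq_mul_rpow_neg hx.le hz.le, ← mul_assoc, ← rpow_add hx, neg_add_cancel,
      rpow_zero, one_mul]
  rw [le_div_iff₀ hα₀, hzα]
  nlinarith [rpow_pos_of_pos hx (-α)]

theorem rpow_neg_mul_exp_neg_le (hα₀ : 0 < α) (hα₁ : α ≤ 1) (hθ₀ : 0 ≤ θ) (hθ₁ : θ ≤ 1)
    (hk : 0 < k) (hx : x ∈ Ioo 0 z) (hv : k * ((x ^ (-α) - z ^ (-α)) / α) ≤ v) :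
    x ^ (-a) * exp (-v) ≤ k ^ (-θ) * (x ^ (α * θ - a) * (1 - x / z) ^ (-θ)) := by
  have hz : 0 < z := hx.1.trans hx.2
  have hxz : 0 < 1 - x / z := sub_pos.2 ((div_lt_one hz).2 hx.2)
  have hxα : 0 < x ^ (-α) := rpow_pos_of_pos hx.1 _
  calc x ^ (-a) * exp (-v) ≤ x ^ (-a) * exp (-(k * (x ^ (-α) * (1 - x / z)))) := by
        gcongr ?_ * exp (-?_)
        · exact (rpow_pos_of_pos hx.1 _).le
        · exact (mul_le_mul_of_nonneg_left
            (rpow_neg_mul_one_sub_div_le hα₀ hα₁ hx.1 hz) hk.le).trans hv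
    _ ≤ x ^ (-a) * (k * (x ^ (-α) * (1 - x / z))) ^ (-θ) := by
        gcongr
        · exact (rpow_pos_of_pos hx.1 _).le
        · exact exp_neg_le_rpow_neg (by positivity) hθ₀ hθ₁
    _ = k ^ (-θ) * (x ^ (α * θ - a) * (1 - x / z) ^ (-θ)) := by
        rw [mul_rpow hk.le (by positivity), mul_rpow hxα.le hxz.le, ← rpow_mul hx.1.le,
          neg_mul_neg, sub_eq_add_neg (α * θ), rpow_add hx.1]
        ring

theorem weight_nonneg (hx : 0 ≤ x) (a b : ℝ) : 0 ≤ weight a b x := by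
  unfold weight
  split_ifs <;> positivity

theorem measurable_weight (a b : ℝ) : Measurable (weight a b) :=
  Measurable.ite measurableSet_Iic (by fun_prop) (by fun_prop)

theorem weight_mul_exp_neg_mul_exp_neg_nonneg (hx : 0 ≤ x) (a b v : ℝ) :
    0 ≤ weight a b x * exp (-x) * exp (-v) :=
  mul_nonneg (mul_nonneg (weight_nonneg hx a b) (exp_pos _).le) (exp_pos _).le

theorem aestronglyMeasurable_weight_mul_exp_neg {s : Set ℝ} (a b : ℝ)
    (hd : AEStronglyMeasurable d (volume.restrict s)) :
    AEStronglyMeasurable (fun x => weight a b x * exp (-x) * exp (-d x)) (volume.restrict s) :=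
  ((measurable_weight a b).mul (by fun_prop)).aestronglyMeasurable.mul
    (continuous_exp.comp_aestronglyMeasurable hd.neg)

theorem weight_neg_mul_exp_neg_le (hα₀ : 0 < α) (hα₁ : α ≤ 1) (hθ₀ : 0 ≤ θ) (hθ₁ : θ ≤ 1)
    (hk : 0 < k) (hz : z ≤ 1) (hx : x ∈ Ioo 0 z)
    (hv : k * ((x ^ (-α) - z ^ (-α)) / α) ≤ v) :
    weight (-a) b x * exp (-x) * exp (-v) ≤
      k ^ (-θ) * (x ^ (α * θ - a) * (1 - x / z) ^ (-θ)) := by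
  refine le_trans ?_ (rpow_neg_mul_exp_neg_le hα₀ hα₁ hθ₀ hθ₁ hk hx hv)
  rw [weight, if_pos (hx.2.le.trans hz)]
  gcongr
  exact mul_le_of_le_one_right (rpow_pos_of_pos hx.1 _).le (exp_le_one_iff.2 (neg_nonpos.2 hx.1.le))

theorem integrableOn_rpow_mul_one_sub_div_rpow_neg (ha : a < 1 + α * θ) (hθ : θ < 1) (hz : 0 < z) :
    IntegrableOn (fun x => x ^ (α * θ - a) * (1 - x / z) ^ (-θ)) (Ioo 0 z) := by
  have h := integrableOn_rpow_mul_one_sub_div_rpow (u := 1 + α * θ - a) (sub_pos.2 ha)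
    (sub_pos.2 hθ) hz
  rwa [add_sub_assoc, add_sub_cancel_left, sub_sub_cancel_left] at h

theorem setIntegral_weight_neg_le (hα₀ : 0 < α) (hα₁ : α ≤ 1) (hθ₀ : 0 ≤ θ) (hθ₁ : θ < 1)
    (ha : a < 1 + α * θ) (hk : 0 < k) (hz₀ : 0 < z) (hz₁ : z ≤ 1)
    (hd : ∀ x ∈ Ioo 0 z, k * ((x ^ (-α) - z ^ (-α)) / α) ≤ d x) :
    ∫ x in Ioo 0 z, weight (-a) b x * exp (-x) * exp (-d x) ≤
      k ^ (-θ) * ProbabilityTheory.beta (1 + α * θ - a) (1 - θ) * z ^ (1 + α * θ - a) := by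
  have hint := setIntegral_rpow_mul_one_sub_div_rpow (sub_pos.2 ha) (sub_pos.2 hθ₁) hz₀
  rw [sub_sub_cancel_left, sub_right_comm, add_sub_cancel_left] at hint
  calc ∫ x in Ioo 0 z, weight (-a) b x * exp (-x) * exp (-d x)
      ≤ ∫ x in Ioo 0 z, k ^ (-θ) * (x ^ (α * θ - a) * (1 - x / z) ^ (-θ)) :=
        integral_mono_of_nonneg
          (ae_restrict_of_forall_mem measurableSet_Ioo fun x hx =>
            weight_mul_exp_neg_mul_exp_neg_nonneg hx.1.le _ _ _)
          ((integrableOn_rpow_mul_one_sub_div_rpow_neg ha hθ₁ hz₀).const_mul _)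
          (ae_restrict_of_forall_mem measurableSet_Ioo fun x hx =>
            weight_neg_mul_exp_neg_le hα₀ hα₁ hθ₀ hθ₁.le hk hz₁ hx (hd x hx))
    _ = k ^ (-θ) * ProbabilityTheory.beta (1 + α * θ - a) (1 - θ) * z ^ (1 + α * θ - a) := by
        rw [integral_const_mul, hint]
        ring

theorem integrableOn_weight_neg (hα₀ : 0 < α) (hα₁ : α ≤ 1) (hθ₀ : 0 ≤ θ) (hθ₁ : θ < 1)
    (ha : a < 1 + α * θ) (hk : 0 < k) (hz₀ : 0 < z) (hz₁ : z ≤ 1)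
    (hd : ∀ x ∈ Ioo 0 z, k * ((x ^ (-α) - z ^ (-α)) / α) ≤ d x)
    (hdm : AEStronglyMeasurable d (volume.restrict (Ioo 0 z))) :
    IntegrableOn (fun x => weight (-a) b x * exp (-x) * exp (-d x)) (Ioo 0 z) := by
  refine Integrable.mono'
    ((integrableOn_rpow_mul_one_sub_div_rpow_neg ha hθ₁ hz₀).const_mul (k ^ (-θ)))
    (aestronglyMeasurable_weight_mul_exp_neg _ _ hdm)
    (ae_restrict_of_forall_mem measurableSet_Ioo fun x hx => ?_)
  rw [norm_of_nonneg (weight_mul_exp_neg_mul_exp_neg_nonneg hx.1.le _ _ _)]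
  exact weight_neg_mul_exp_neg_le hα₀ hα₁ hθ₀ hθ₁.le hk hz₁ hx (hd x hx)

theorem weight_mul_exp_neg_le_of_one_lt (hx : 1 < x) (hv : 0 ≤ v) :
    weight a b x * exp (-x) * exp (-v) ≤ exp (-x) * x ^ b := by
  rw [weight, if_neg hx.not_ge, mul_comm (x ^ b)]
  exact mul_le_of_le_one_right (mul_nonneg (exp_pos _).le (rpow_nonneg (by linarith) b))
    (exp_le_one_iff.2 (neg_nonpos.2 hv))

theorem integrableOn_Ioo_one_weight (hd : ∀ x ∈ Ioo 1 z, 0 ≤ d x)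
    (hdm : AEStronglyMeasurable d (volume.restrict (Ioo 1 z))) :
    IntegrableOn (fun x => weight a b x * exp (-x) * exp (-d x)) (Ioo 1 z) := by
  refine Integrable.mono' ((integrableOn_exp_neg_mul_rpow one_pos b).mono_set Ioo_subset_Ioi_self)
    (aestronglyMeasurable_weight_mul_exp_neg _ _ hdm)
    (ae_restrict_of_forall_mem measurableSet_Ioo fun x hx => ?_)
  rw [norm_of_nonneg (weight_mul_exp_neg_mul_exp_neg_nonneg (by linarith [hx.1]) _ _ _)]
  exact weight_mul_exp_neg_le_of_one_lt hx.1 (hd x hx)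

theorem setIntegral_Ioo_one_weight_le (hd : ∀ x ∈ Ioo 1 z, 0 ≤ d x) :
    ∫ x in Ioo 1 z, weight a b x * exp (-x) * exp (-d x) ≤ ∫ x in Ioi 1, exp (-x) * x ^ b := by
  have hint := integrableOn_exp_neg_mul_rpow one_pos b
  calc ∫ x in Ioo 1 z, weight a b x * exp (-x) * exp (-d x) ≤ ∫ x in Ioo 1 z, exp (-x) * x ^ b :=
        integral_mono_of_nonneg
          (ae_restrict_of_forall_mem measurableSet_Ioo fun x hx =>
            weight_mul_exp_neg_mul_exp_neg_nonneg (by linarith [hx.1]) _ _ _)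
          (hint.mono_set Ioo_subset_Ioi_self)
          (ae_restrict_of_forall_mem measurableSet_Ioo fun x hx =>
            weight_mul_exp_neg_le_of_one_lt hx.1 (hd x hx))
    _ ≤ ∫ x in Ioi 1, exp (-x) * x ^ b :=
        setIntegral_mono_set hint
          (ae_restrict_of_forall_mem measurableSet_Ioi fun x (hx : 1 < x) =>
            mul_nonneg (exp_pos _).le (rpow_nonneg (by linarith) b))
          Ioo_subset_Ioi_self.eventuallyLE

theorem setIntegral_weight_sub_le_of_one_lt (hα₀ : 0 < α) (hα₁ : α ≤ 1) (hθ₀ : 0 ≤ θ)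
    (hθ₁ : θ < 1) (ha : a < 1 + α * θ) (hk : 0 < k) (hP : AntitoneOn P (Ioi 0))
    (hPk : ∀ x ∈ Ioo 0 1, k * ((x ^ (-α) - 1 ^ (-α)) / α) ≤ P x - P 1) (hz : 1 < z) :
    ∫ x in Ioo 0 z, weight (-a) b x * exp (-x) * exp (-(P x - P z)) ≤
      k ^ (-θ) * ProbabilityTheory.beta (1 + α * θ - a) (1 - θ) +
        ∫ x in Ioi 1, exp (-x) * x ^ b := by
  have hz₀ : 0 < z := one_pos.trans hz
  have hdm {s : Set ℝ} (hs : s ⊆ Ioi 0) (hsm : MeasurableSet s) :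
      AEStronglyMeasurable (fun x => P x - P z) (volume.restrict s) :=
    ((aemeasurable_restrict_of_antitoneOn hsm (hP.mono hs)).sub_const _).aestronglyMeasurable
  have hd_near : ∀ x ∈ Ioo (0 : ℝ) 1, k * ((x ^ (-α) - 1 ^ (-α)) / α) ≤ P x - P z := fun x hx =>
    (hPk x hx).trans (sub_le_sub_left (hP (mem_Ioi.2 one_pos) hz₀ hz.le) _)
  have hd_tail : ∀ x ∈ Ioo 1 z, 0 ≤ P x - P z := fun x hx =>
    sub_nonneg.2 (hP (mem_Ioi.2 (one_pos.trans hx.1)) hz₀ hx.2.le)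
  have hi_near := integrableOn_weight_neg (b := b) hα₀ hα₁ hθ₀ hθ₁ ha hk one_pos le_rfl hd_near
    (hdm Ioo_subset_Ioi_self measurableSet_Ioo)
  have hi_tail := integrableOn_Ioo_one_weight (a := -a) (b := b) hd_tail
    (hdm (fun x hx => one_pos.trans hx.1) measurableSet_Ioo)
  rw [← Ioc_union_Ioo_eq_Ioo zero_le_one hz, setIntegral_union
      (disjoint_left.2 fun x hx hx' => hx'.1.not_ge hx.2) measurableSet_Ioo
      (hi_near.congr_set_ae Ioo_ae_eq_Ioc.symm) hi_tail, integral_Ioc_eq_integral_Ioo]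
  refine add_le_add ?_ (setIntegral_Ioo_one_weight_le hd_tail)
  simpa only [one_rpow, mul_one] using
    setIntegral_weight_neg_le (b := b) hα₀ hα₁ hθ₀ hθ₁ ha hk one_pos le_rfl hd_near

theorem setIntegral_Ioi_one_exp_neg_mul_rpow_nonneg (b : ℝ) :
    0 ≤ ∫ x in Ioi (1 : ℝ), exp (-x) * x ^ b :=
  setIntegral_nonneg measurableSet_Ioi fun x (hx : 1 < x) =>
    mul_nonneg (exp_pos _).le (rpow_nonneg (by linarith) b)

theorem setIntegral_weight_sub_le (hα₀ : 0 < α) (hα₁ : α ≤ 1) (hθ₀ : 0 ≤ θ)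
    (hθ₁ : θ < 1) (ha : a < 1 + α * θ) (hk : 0 < k) (hP : AntitoneOn P (Ioi 0))
    (hPk : ∀ x z, 0 < x → x ≤ z → z ≤ 1 → k * ((x ^ (-α) - z ^ (-α)) / α) ≤ P x - P z)
    (hz : 0 < z) :
    ∫ x in Ioo 0 z, weight (-a) b x * exp (-x) * exp (-(P x - P z)) ≤
      (k ^ (-θ) * ProbabilityTheory.beta (1 + α * θ - a) (1 - θ) +
        ∫ x in Ioi 1, exp (-x) * x ^ b) * weight (1 + α * θ - a) 0 z := by
  rcases le_or_gt z 1 with hz₁ | hz₁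
  · rw [weight, if_pos hz₁]
    exact (setIntegral_weight_neg_le hα₀ hα₁ hθ₀ hθ₁ ha hk hz hz₁
      fun x hx => hPk x z hx.1 hx.2.le hz₁).trans (mul_le_mul_of_nonneg_right
        (le_add_of_nonneg_right (setIntegral_Ioi_one_exp_neg_mul_rpow_nonneg b))
        (rpow_nonneg hz.le _))
  · rw [weight, if_neg hz₁.not_ge, rpow_zero, mul_one]
    exact setIntegral_weight_sub_le_of_one_lt hα₀ hα₁ hθ₀ hθ₁ ha hk hP
      (fun x hx => hPk x 1 hx.1 hx.2.le le_rfl) hz₁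

theorem setIntegral_weight_sub_le_mul_rpow_neg (hα₀ : 0 < α) (hα₁ : α ≤ 1) (hθ₀ : 0 ≤ θ)
    (hθ₁ : θ < 1) (ha : a < 1 + α * θ) (hk : 0 < k) (hε₀ : 0 < ε) (hε₁ : ε ≤ 1)
    (hP : AntitoneOn P (Ioi 0))
    (hPk : ∀ x z, 0 < x → x ≤ z → z ≤ 1 → ε * (k * ((x ^ (-α) - z ^ (-α)) / α)) ≤ P x - P z)
    (hz : 0 < z) :
    ∫ x in Ioo 0 z, weight (-a) b x * exp (-x) * exp (-(P x - P z)) ≤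
      (k ^ (-θ) * ProbabilityTheory.beta (1 + α * θ - a) (1 - θ) +
        ∫ x in Ioi 1, exp (-x) * x ^ b) * ε ^ (-θ) * weight (1 + α * θ - a) 0 z := by
  simp only [← mul_assoc] at hPk
  refine (setIntegral_weight_sub_le hα₀ hα₁ hθ₀ hθ₁ ha (mul_pos hε₀ hk) hP hPk hz).trans
    (mul_le_mul_of_nonneg_right ?_ (weight_nonneg hz.le _ _))
  rw [mul_rpow hε₀.le hk.le, mul_assoc, mul_comm (ε ^ (-θ)), add_mul]
  gcongr
  exact le_mul_of_one_le_right (setIntegral_Ioi_one_exp_neg_mul_rpow_nonneg b)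
    (one_le_rpow_of_pos_of_le_one_of_nonpos hε₀ hε₁ (neg_nonpos.2 hθ₀))

end WeightedIntegral

end Coagulation

theorem stmt18_general {α : ℝ} (hα : α ∈ Ioo (0 : ℝ) 1) {W : ℝ → ℝ → ℝ}
    (hWm : AEStronglyMeasurable (Function.uncurry W) (volume.restrict (Ioi 0 ×ˢ Ioi 0)))
    {c : ℝ} (hc : 0 < c) (hlow : ∀ x y : ℝ, 0 < x → 0 < y → c * (y / x) ^ α ≤ W x y)
    (hup : ∀ x y : ℝ, 0 < x → 0 < y → W x y ≤ (x / y) ^ α + (y / x) ^ α)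
    {a δ : ℝ} (hδ : 0 < δ) (hδα : δ ≤ α) (hδa : δ < 1 + α - a) :
    ∃ εstar > (0:ℝ), ∀ b : ℝ, ∃ C > (0:ℝ), ∀ ε : ℝ, 0 < ε → ε ≤ εstar →
      ∀ φ : ℝ → ℝ, IsProfile (Kern ε W) φ → IsNormalised φ →
        ∀ z : ℝ, 0 < z →
          (∫ x in Ioo 0 z,
              weight (-a) b x * exp (-x) * exp (-(Phi ε W φ x - Phi ε W φ z))) ≤
            C * ε ^ ((δ - α) / α) * weight (1 + α - a - δ) 0 z := by
  obtain ⟨θ, hθ⟩ : ∃ θ, θ = (α - δ) / α := ⟨_, rfl⟩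
  have hαθ : α * θ = α - δ := by rw [hθ, mul_div_cancel₀ _ hα.1.ne']
  have hexp : (δ - α) / α = -θ := by rw [hθ, ← neg_div, neg_sub]
  have hwt : 1 + α - a - δ = 1 + α * θ - a := by rw [hαθ]; ring
  have hθ₀ : 0 ≤ θ := hθ ▸ div_nonneg (sub_nonneg.2 hδα) hα.1.le
  have hθ₁ : θ < 1 := hθ ▸ (div_lt_one hα.1).2 (sub_lt_self α hδ)
  have ha : a < 1 + α * θ := by linarith
  have hκ : 0 < c * ((1 - α) / 12) * exp (-1) := by have := sub_pos.2 hα.2; positivity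
  have hB := mul_pos (rpow_pos_of_pos hκ (-θ))
    (ProbabilityTheory.beta_pos (sub_pos.2 ha) (sub_pos.2 hθ₁))
  refine ⟨(1 - α) / 16, by linarith [hα.2], fun b => ⟨_ + ∫ x in Ioi 1, exp (-x) * x ^ b,
    add_pos_of_pos_of_nonneg hB (Coagulation.setIntegral_Ioi_one_exp_neg_mul_rpow_nonneg b),
    fun ε hε₀ hε₁ φ hφ hφ₁ z hz => ?_⟩⟩
  obtain ⟨hanti, hPhi⟩ := hφ.antitoneOn_Phi_and_le_Phi_sub_Phi hφ₁ hα hc hε₀ hε₁ hWm hlow hup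
  rw [hexp, hwt]
  exact Coagulation.setIntegral_weight_sub_le_mul_rpow_neg hα.1 hα.2.le hθ₀ hθ₁ ha hκ hε₀
    (by linarith [hα.1]) hanti hPhi hz

theorem stmt18 (α : ℝ) (hα : α ∈ Ico (1/2 : ℝ) 1)
    (W : ℝ → ℝ → ℝ) (hW : GoodW α W)
    (cstar : ℝ) (hcstar : 0 < cstar)
    (hlow : ∀ x y : ℝ, 0 < x → 0 < y → cstar * ((x / y) ^ α + (y / x) ^ α) ≤ W x y)
    (a δ : ℝ) (ha : a ∈ Ioo (0:ℝ) (1 + α)) (hδ : δ ∈ Ioo 0 (min (1 + α - a) α)) :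
    ∃ εstar > (0:ℝ), ∀ b : ℝ, ∃ C > (0:ℝ), ∀ ε : ℝ, 0 < ε → ε ≤ εstar →
      ∀ φ : ℝ → ℝ, IsProfile (Kern ε W) φ → IsNormalised φ →
        ∀ z : ℝ, 0 < z →
          (∫ x in Ioo 0 z,
              weight (-a) b x * exp (-x) * exp (-(Phi ε W φ x - Phi ε W φ z))) ≤
            C * ε ^ ((δ - α) / α) * weight (1 + α - a - δ) 0 z :=
  stmt18_general ⟨by linarith [hα.1], hα.2⟩
    (hW.1.aestronglyMeasurable (measurableSet_Ioi.prod measurableSet_Ioi)) hcstar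
    (fun x y hx hy => (mul_le_mul_of_nonneg_left (le_add_of_nonneg_left (by positivity))
      hcstar.le).trans (hlow x y hx hy))
    (fun x y hx hy => (hW.2.2.2 x y hx hy).2) hδ.1
    (hδ.2.le.trans (min_le_right _ _)) (hδ.2.trans_le (min_le_left _ _))
end
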